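/- Let k be a field, let Q be a connected finite acyclic Dynkin quiver with r vertices, let C be the adjacency matrix of the double quiver, let h be the Coxeter number of the underlying Dynkin diagram, and let v ∈ k^{Q_0} be a regular element, meaning that Σ_{i∈Q_0} v_i · dim_k(e_i N) ≠ 0 in k for every nonzero finite dimensional indecomposable representation N of Q over k. Then the quiver Heisenberg algebra ᵛΛ(Q), graded with arrows in degree 1 and z in degree 2, satisfies h_{ᵛΛ}(t)·(1 − Ct + t²·1)·(1 − t²) = (1 − t^{2h})·1 in the ring of r×r matrices over k[[t]]; equivalently h_{ᵛΛ}(t) = (1 − t^{2h})/((1 − Ct + t²)(1 − t²)). This holds in arbitrary characteristic. -/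

import Mathlib

/-!
STATEMENT 6: Hilbert series of the quiver Heisenberg algebra
`ᵛΛ(Q) = k[z]Q̄ / (ρ_i - v_i z e_i)` of a connected finite acyclic non-Dynkin
quiver: the graded pieces are finite dimensional and
`h_{ᵛΛ}(t) · (1 - C t + t²) · (1 - t²) = 1` over `k[[t]]`.

The algebra is presented as the quotient of the free algebra on generators
`e_i` (trivial paths, degree 0), `α`, `α*` (arrows of the double quiver,
degree 1) and a central variable `z` (degree 2) by the path-algebra
relations, the relations making `z` central, and the relations
`ρ_i = v_i z e_i`.
-/

/-- A finite quiver. -/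
structure FinQuiver where
  r : ℕ
  Arrow : Type
  [instFintypeArrow : Fintype Arrow]
  src : Arrow → Fin r
  tgt : Arrow → Fin r

attribute [instance] FinQuiver.instFintypeArrow

namespace FinQuiver

variable (Q : FinQuiver)

/-- The underlying graph of `Q` is connected. -/
def Connected : Prop :=
  ∀ i j : Fin Q.r, Relation.ReflTransGen
    (fun a b => ∃ e : Q.Arrow, (Q.src e = a ∧ Q.tgt e = b) ∨ (Q.src e = b ∧ Q.tgt e = a)) i j

/-- `Q` has no oriented cycles. -/
def Acyclic : Prop :=
  ∀ i : Fin Q.r, ¬ Relation.TransGen (fun a b => ∃ e : Q.Arrow, Q.src e = a ∧ Q.tgt e = b) i i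

/-- The Tits quadratic form of `Q` on `ℝ^{Q₀}`. -/
def titsForm (x : Fin Q.r → ℝ) : ℝ :=
  (∑ i, x i ^ 2) - ∑ e : Q.Arrow, x (Q.src e) * x (Q.tgt e)

/-- `Q` is Dynkin iff its Tits form is positive definite. -/
def IsDynkin : Prop := ∀ x : Fin Q.r → ℝ, x ≠ 0 → 0 < Q.titsForm x

/-- Adjacency matrix of `Q`. -/
def adjMatrix : Matrix (Fin Q.r) (Fin Q.r) ℕ := Matrix.of fun i j =>
  Fintype.card {e : Q.Arrow // Q.src e = i ∧ Q.tgt e = j}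

/-- Adjacency matrix `C` of the double quiver `Q̄`. -/
def doubleAdj : Matrix (Fin Q.r) (Fin Q.r) ℕ := Matrix.of fun i j =>
  Q.adjMatrix i j + Q.adjMatrix j i

end FinQuiver

/-- Generators for `k[z]Q̄`: trivial paths, arrows of the double quiver, and
the central variable `z`. -/
inductive QHGen (Q : FinQuiver) : Type
  | vert : Fin Q.r → QHGen Q
  | fwd : Q.Arrow → QHGen Q
  | bwd : Q.Arrow → QHGen Q
  | z : QHGen Q

/-- The mesh element `ρ_i = ∑_{src α = i} α α* - ∑_{tgt α = i} α* α`. -/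
noncomputable def qhMesh (k : Type) [Field k] (Q : FinQuiver) (i : Fin Q.r) :
    FreeAlgebra k (QHGen Q) :=
  (∑ e : Q.Arrow, if Q.src e = i then
      FreeAlgebra.ι k (QHGen.fwd e) * FreeAlgebra.ι k (QHGen.bwd e) else 0)
  - ∑ e : Q.Arrow, if Q.tgt e = i then
      FreeAlgebra.ι k (QHGen.bwd e) * FreeAlgebra.ι k (QHGen.fwd e) else 0

/-- Defining relations of the quiver Heisenberg algebra `ᵛΛ(Q)`:
path-algebra relations for `Q̄`, centrality of `z`, and `ρ_i = v_i z e_i`. -/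
inductive QHRel (k : Type) [Field k] (Q : FinQuiver) (v : Fin Q.r → k) :
    FreeAlgebra k (QHGen Q) → FreeAlgebra k (QHGen Q) → Prop
  | vert_idem (i : Fin Q.r) :
      QHRel k Q v (FreeAlgebra.ι k (QHGen.vert i) * FreeAlgebra.ι k (QHGen.vert i))
        (FreeAlgebra.ι k (QHGen.vert i))
  | vert_orth (i j : Fin Q.r) (h : i ≠ j) :
      QHRel k Q v (FreeAlgebra.ι k (QHGen.vert i) * FreeAlgebra.ι k (QHGen.vert j)) 0
  | vert_sum : QHRel k Q v (∑ i : Fin Q.r, FreeAlgebra.ι k (QHGen.vert i)) 1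
  | fwd_left (e : Q.Arrow) :
      QHRel k Q v (FreeAlgebra.ι k (QHGen.vert (Q.src e)) * FreeAlgebra.ι k (QHGen.fwd e))
        (FreeAlgebra.ι k (QHGen.fwd e))
  | fwd_right (e : Q.Arrow) :
      QHRel k Q v (FreeAlgebra.ι k (QHGen.fwd e) * FreeAlgebra.ι k (QHGen.vert (Q.tgt e)))
        (FreeAlgebra.ι k (QHGen.fwd e))
  | bwd_left (e : Q.Arrow) :
      QHRel k Q v (FreeAlgebra.ι k (QHGen.vert (Q.tgt e)) * FreeAlgebra.ι k (QHGen.bwd e))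
        (FreeAlgebra.ι k (QHGen.bwd e))
  | bwd_right (e : Q.Arrow) :
      QHRel k Q v (FreeAlgebra.ι k (QHGen.bwd e) * FreeAlgebra.ι k (QHGen.vert (Q.src e)))
        (FreeAlgebra.ι k (QHGen.bwd e))
  | central (g : QHGen Q) :
      QHRel k Q v (FreeAlgebra.ι k QHGen.z * FreeAlgebra.ι k g)
        (FreeAlgebra.ι k g * FreeAlgebra.ι k QHGen.z)
  | heisenberg (i : Fin Q.r) :
      QHRel k Q v (qhMesh k Q i)
        (v i • (FreeAlgebra.ι k QHGen.z * FreeAlgebra.ι k (QHGen.vert i)))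

/-- The quiver Heisenberg algebra `ᵛΛ(Q)`. -/
abbrev QHAlg (k : Type) [Field k] (Q : FinQuiver) (v : Fin Q.r → k) : Type :=
  RingQuot (QHRel k Q v)

/-- Image in `ᵛΛ(Q)` of a generator. -/
noncomputable def qhGen (k : Type) [Field k] (Q : FinQuiver) (v : Fin Q.r → k)
    (g : QHGen Q) : QHAlg k Q v :=
  RingQuot.mkAlgHom k (QHRel k Q v) (FreeAlgebra.ι k g)

/-- Degree of a generator: trivial paths 0, arrows 1, `z` 2. -/
def qhWt (Q : FinQuiver) : QHGen Q → ℕ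
  | .vert _ => 0
  | .fwd _ => 1
  | .bwd _ => 1
  | .z => 2

/-- The degree-`n` component `ᵛΛ(Q)_n`: span of images of weight-`n` monomials. -/
noncomputable def qhPiece (k : Type) [Field k] (Q : FinQuiver) (v : Fin Q.r → k)
    (n : ℕ) : Submodule k (QHAlg k Q v) :=
  Submodule.span k
    {x | ∃ l : List (QHGen Q), (l.map (qhWt Q)).sum = n ∧ x = (l.map (qhGen k Q v)).prod}

/-- The subspace `e_i ᵛΛ(Q)_n e_j`. -/
noncomputable def qhCorner (k : Type) [Field k] (Q : FinQuiver) (v : Fin Q.r → k)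
    (n : ℕ) (i j : Fin Q.r) : Submodule k (QHAlg k Q v) :=
  (qhPiece k Q v n).map
    ((LinearMap.mulLeft k (qhGen k Q v (QHGen.vert i))).comp
      (LinearMap.mulRight k (qhGen k Q v (QHGen.vert j))))

/-- The matrix Hilbert series `h_{ᵛΛ}(t)` over `k[[t]]`. -/
noncomputable def qhHilb (k : Type) [Field k] (Q : FinQuiver) (v : Fin Q.r → k) :
    Matrix (Fin Q.r) (Fin Q.r) (PowerSeries k) :=
  Matrix.of fun i j => PowerSeries.mk fun n => (Module.finrank k (qhCorner k Q v n i j) : k)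


namespace FinQuiver

/-- The integral Tits form of `Q`. -/
def titsFormZ (Q : FinQuiver) (x : Fin Q.r → ℤ) : ℤ :=
  (∑ i, x i ^ 2) - ∑ e : Q.Arrow, x (Q.src e) * x (Q.tgt e)

/-- `h` is the Coxeter number of (the underlying Dynkin graph of) `Q`:
the number of roots of the Tits form equals `r·h`. -/
def IsCoxeterNumber (Q : FinQuiver) (h : ℕ) : Prop :=
  {x : Fin Q.r → ℤ | Q.titsFormZ x = 1}.ncard = Q.r * h

end FinQuiver

/-- A representation of the quiver `Q` over `k`: a vector space at each vertex
and a linear map along each arrow. -/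
structure QuivRep (k : Type) [Field k] (Q : FinQuiver) where
  V : Fin Q.r → Type
  [instAcg : ∀ i, AddCommGroup (V i)]
  [instMod : ∀ i, Module k (V i)]
  act : ∀ e : Q.Arrow, V (Q.src e) →ₗ[k] V (Q.tgt e)

attribute [instance] QuivRep.instAcg QuivRep.instMod

/-- A subrepresentation: a collection of subspaces stable under all arrow maps. -/
structure SubQuivRep {k : Type} [Field k] {Q : FinQuiver} (N : QuivRep k Q) where
  U : ∀ i, Submodule k (N.V i)
  stable : ∀ e : Q.Arrow, (U (Q.src e)).map (N.act e) ≤ U (Q.tgt e)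

/-- `N` is indecomposable: nonzero, and not the internal direct sum of two
nonzero subrepresentations. -/
def QuivRep.Indecomposable {k : Type} [Field k] {Q : FinQuiver} (N : QuivRep k Q) : Prop :=
  (∃ i, Nontrivial (N.V i)) ∧
  ∀ U W : SubQuivRep N, (∀ i, IsCompl (U.U i) (W.U i)) →
    (∀ i, U.U i = ⊥) ∨ (∀ i, W.U i = ⊥)

/-- `v ∈ k^{Q₀}` is regular: `∑_i v_i · dim_k(e_i N) ≠ 0` for every nonzero
finite dimensional indecomposable representation `N` of `Q`. -/
def IsRegularParam (k : Type) [Field k] (Q : FinQuiver) (v : Fin Q.r → k) : Prop :=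
  ∀ N : QuivRep k Q, (∀ i, FiniteDimensional k (N.V i)) → N.Indecomposable →
    (∑ i, v i * (Module.finrank k (N.V i) : k)) ≠ 0

/-!
*Finite dimensionality.* Let `ᵛΛ = ᵛΛ(Q)`. For a finite dimensional module over `ᵛΛ/(z)`, the space
of actions of the arrows is symplectic and the mesh relation makes the infinitesimal base changes
isotropic in it. For a cyclic module this bounds the Tits form of its dimension vector by its
dimension, and since the form is positive definite it bounds the dimension itself, in particular for
the truncations of `ᵛΛ/(z)`. If `z` were not nilpotent, there would be a nonzero finite dimensional
module on which `z` acts as `1`; the trace of the mesh relation against the projector onto an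
indecomposable summand `N` of its restriction to `Q` gives `∑ v_i dim (e_i N) = 0`, contradicting
regularity.

*The Hilbert polynomial.* The linearized defining relations form a complex
`Hom(X, Y) → F(X, Y) → F(X, Y) → Hom(X, Y)`, where `F(X, Y)` consists of one map for each arrow and
one for `z`. It is dual to the complex with `X` and `Y` exchanged under the trace pairing. Since its
first cohomology is `Ext¹(X, Y)`, it is exact in the middle for `X = ᵛΛ`, and hence by duality for
`Y = ᵛΛ`. If `X` is the sum of the vertex simples and `Y = ᵛΛ`, the remaining cohomology is the
socle of `ᵛΛ` on the left and the simples on the right, so the Euler characteristic reads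
`(1 - t²)(1 - Ct + t²) h(t) = 1 - t⁴ s(t)` with `s` the Hilbert polynomial of the socle. At `t = 1`
this shows `s(1) = 1`, so `s` is diagonal with monomial entries. The symmetry under reversal of
arrows and connectedness force these to be equal, and the right-hand side is `1 - t^{2m}`.

*The Coxeter number.* Regrading `ᵛΛ` so that only the reversed arrows and `z` have degree `1` turns
the identity into the recursion `H_{n+1} = H_0 + c H_n` for `n + 1 < m`, where `c` is the Coxeter
transformation. Positivity and the vanishing of `H_n` for large `n` show that the vectors `c^l P_i`,
with `l < m` and `P_i` the dimension vector of the projective at `i`, enumerate the roots without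
repetition. Hence there are `r m` roots, and `m = h`.
-/

namespace QuiverHeisenberg

/-! ## Realizations of the defining relations -/

/-- The arrows of the double quiver `Q̄`: `inl` is an arrow of `Q`, `inr` a reversed one. -/
abbrev DoubleArrow (Q : FinQuiver) : Type := Q.Arrow ⊕ Q.Arrow

namespace DoubleArrow

variable {Q : FinQuiver}

/-- The vertex at which an arrow of the double quiver starts. -/
def src : DoubleArrow Q → Fin Q.r := Sum.elim Q.src Q.tgt

/-- The vertex at which an arrow of the double quiver ends. -/
def tgt : DoubleArrow Q → Fin Q.r := Sum.elim Q.tgt Q.src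

/-- The involution `α ↔ α*` on the arrows of the double quiver. -/
def rev : DoubleArrow Q → DoubleArrow Q := Sum.swap

/-- The sign of an arrow of the double quiver: `1` on arrows of `Q` and `-1` on reversed arrows,
so that the sum of all mesh relations is `∑ b, sign b • b b*`. -/
def sign (k : Type*) [Ring k] : DoubleArrow Q → k := Sum.elim (fun _ => 1) (fun _ => -1)

@[simp] lemma rev_rev (b : DoubleArrow Q) : b.rev.rev = b := Sum.swap_swap b

@[simp] lemma src_rev (b : DoubleArrow Q) : b.rev.src = b.tgt := by cases b <;> rfl

@[simp] lemma tgt_rev (b : DoubleArrow Q) : b.rev.tgt = b.src := by cases b <;> rfl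

@[simp] lemma sign_rev (k : Type*) [Ring k] (b : DoubleArrow Q) : b.rev.sign k = -b.sign k := by
  cases b <;> simp [sign, rev]

@[simp] lemma sign_mul_self (k : Type*) [Ring k] (b : DoubleArrow Q) :
    b.sign k * b.sign k = 1 := by
  cases b <;> simp [sign]

lemma sign_ne_zero (k : Type*) [Ring k] [Nontrivial k] (b : DoubleArrow Q) : b.sign k ≠ 0 := by
  cases b <;> simp [sign]

lemma sum_rev {M : Type*} [AddCommMonoid M] (f : DoubleArrow Q → M) :
    ∑ b, f (rev b) = ∑ b, f b :=
  (Equiv.sumComm Q.Arrow Q.Arrow).sum_comp f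

lemma sum_sign_mul_rev {k : Type*} [Ring k] (f : DoubleArrow Q → k) :
    ∑ b : DoubleArrow Q, b.sign k * f b.rev = -∑ b, b.sign k * f b := by
  rw [← sum_rev, ← Finset.sum_neg_distrib]
  simp only [sign_rev, rev_rev, neg_mul]

/-- The generator of the path algebra given by an arrow of the double quiver. -/
def toGen : DoubleArrow Q → QHGen Q := Sum.elim .fwd .bwd

end DoubleArrow

variable {k : Type} [Field k] {Q : FinQuiver} {v : Fin Q.r → k}

/-- Elements of a `k`-algebra `B` satisfying the defining relations of `ᵛΛ(Q)`; the mesh relations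
at all vertices are added up into a single one. A realization in `Module.End k X` is the same thing
as a `ᵛΛ(Q)`-module structure on `X`. -/
structure Realization (v : Fin Q.r → k) (B : Type*) [Ring B] [Algebra k B] where
  E : Fin Q.r → B
  a : DoubleArrow Q → B
  z : B
  E_mul : ∀ i j, E i * E j = if i = j then E i else 0
  E_sum : ∑ i, E i = 1
  E_a : ∀ b, E b.src * a b = a b
  a_E : ∀ b, a b * E b.tgt = a b
  z_E : ∀ i, z * E i = E i * z
  z_a : ∀ b, z * a b = a b * z
  mesh : ∑ b, b.sign k • (a b * a b.rev) = (∑ i, v i • E i) * z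

namespace Realization

variable {B : Type*} [Ring B] [Algebra k B] (R : Realization v B)

lemma E_mul_self (i : Fin Q.r) : R.E i * R.E i = R.E i := by simp [R.E_mul]

lemma E_mul_of_ne {i j : Fin Q.r} (h : i ≠ j) : R.E i * R.E j = 0 := by simp [R.E_mul, h]

lemma E_mul_a (i : Fin Q.r) (b : DoubleArrow Q) :
    R.E i * R.a b = if b.src = i then R.a b else 0 := by
  rw [← R.E_a b, ← mul_assoc, R.E_mul]
  by_cases h : i = b.src
  · simp [h]
  · simp [h, Ne.symm h]

lemma a_mul_E (b : DoubleArrow Q) (i : Fin Q.r) :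
    R.a b * R.E i = if b.tgt = i then R.a b else 0 := by
  conv_lhs => rw [← R.a_E b, mul_assoc, R.E_mul]
  split_ifs
  · rw [R.a_E]
  · simp

/-- The element `∑ i, v i • e_i`, by which `z` is multiplied in the mesh relation. -/
def param : B := ∑ i, v i • R.E i

lemma mesh_eq_param_mul_z : ∑ b, b.sign k • (R.a b * R.a b.rev) = R.param * R.z := R.mesh

lemma param_mul_E (i : Fin Q.r) : R.param * R.E i = v i • R.E i := by
  simp [param, Finset.sum_mul, R.E_mul]

lemma E_mul_param (i : Fin Q.r) : R.E i * R.param = v i • R.E i := by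
  simp [param, Finset.mul_sum, R.E_mul]

lemma z_mul_param : R.z * R.param = R.param * R.z := by
  simp [param, Finset.sum_mul, Finset.mul_sum, R.z_E]

/-- The image of a realization under an algebra homomorphism. -/
def map {B' : Type*} [Ring B'] [Algebra k B'] (f : B →ₐ[k] B') : Realization v B' where
  E i := f (R.E i)
  a b := f (R.a b)
  z := f R.z
  E_mul i j := by rw [← map_mul, R.E_mul]; split_ifs <;> simp
  E_sum := by rw [← map_sum, R.E_sum, map_one]
  E_a b := by rw [← map_mul, R.E_a]
  a_E b := by rw [← map_mul, R.a_E]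
  z_E i := by rw [← map_mul, R.z_E, map_mul]
  z_a b := by rw [← map_mul, R.z_a, map_mul]
  mesh := by simpa using congrArg f R.mesh

/-- The value of a realization on a generator of the path algebra. -/
def val : QHGen Q → B
  | .vert i => R.E i
  | .fwd e => R.a (.inl e)
  | .bwd e => R.a (.inr e)
  | .z => R.z

@[simp] lemma val_toGen (b : DoubleArrow Q) : R.val b.toGen = R.a b := by cases b <;> rfl

lemma z_mul_val (g : QHGen Q) : R.z * R.val g = R.val g * R.z := by
  cases g with
  | vert i => exact R.z_E i
  | fwd e => exact R.z_a (.inl e)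
  | bwd e => exact R.z_a (.inr e)
  | z => rfl

lemma lift_qhMesh (i : Fin Q.r) :
    FreeAlgebra.lift k R.val (qhMesh k Q i) = v i • (R.z * R.E i) := by
  have h := congrArg (R.E i * ·) R.mesh_eq_param_mul_z
  have hfwd (e : Q.Arrow) : R.E i * R.a (.inl e) = if Q.src e = i then R.a (.inl e) else 0 :=
    R.E_mul_a i (.inl e)
  have hbwd (e : Q.Arrow) : R.E i * R.a (.inr e) = if Q.tgt e = i then R.a (.inr e) else 0 :=
    R.E_mul_a i (.inr e)
  simp only [← mul_assoc, E_mul_param, Fintype.sum_sum_type, DoubleArrow.sign,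
    Sum.elim_inl, Sum.elim_inr, DoubleArrow.rev, Sum.swap_inl, Sum.swap_inr, one_smul, neg_smul,
    Finset.sum_neg_distrib, ← sub_eq_add_neg, smul_mul_assoc, mul_sub, Finset.mul_sum, hfwd, hbwd,
    ite_mul, zero_mul] at h
  simpa only [qhMesh, map_sub, map_sum, apply_ite (FreeAlgebra.lift k R.val), map_mul, map_zero,
    FreeAlgebra.lift_ι_apply, val, R.z_E] using h

lemma lift_eq_of_rel ⦃x y : FreeAlgebra k (QHGen Q)⦄ (h : QHRel k Q v x y) :
    FreeAlgebra.lift k R.val x = FreeAlgebra.lift k R.val y := by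
  cases h with
  | vert_idem i => simp [val, R.E_mul]
  | vert_orth i j h => simp [val, R.E_mul, h]
  | vert_sum => simp [val, R.E_sum]
  | fwd_left e => simpa [val, DoubleArrow.src] using R.E_a (.inl e)
  | fwd_right e => simpa [val, DoubleArrow.tgt] using R.a_E (.inl e)
  | bwd_left e => simpa [val, DoubleArrow.src] using R.E_a (.inr e)
  | bwd_right e => simpa [val, DoubleArrow.tgt] using R.a_E (.inr e)
  | central g => simpa [val] using R.z_mul_val g
  | heisenberg i => simpa [val] using R.lift_qhMesh i

/-- The homomorphism out of `ᵛΛ(Q)` determined by a realization. -/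
noncomputable def lift : QHAlg k Q v →ₐ[k] B :=
  RingQuot.liftAlgHom k ⟨FreeAlgebra.lift k R.val, R.lift_eq_of_rel⟩

@[simp] lemma lift_qhGen (g : QHGen Q) : R.lift (qhGen k Q v g) = R.val g := by
  simp [lift, qhGen]

section Module

variable {X : Type*} [AddCommGroup X] [Module k X] (R : Realization v (Module.End k X))

lemma z_a_apply (b : DoubleArrow Q) (x : X) : R.z (R.a b x) = R.a b (R.z x) :=
  LinearMap.congr_fun (R.z_a b) x

lemma z_E_apply (i : Fin Q.r) (x : X) : R.z (R.E i x) = R.E i (R.z x) :=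
  LinearMap.congr_fun (R.z_E i) x

lemma E_a_apply (b : DoubleArrow Q) (x : X) : R.E b.src (R.a b x) = R.a b x :=
  LinearMap.congr_fun (R.E_a b) x

lemma a_E_apply (b : DoubleArrow Q) (x : X) : R.a b (R.E b.tgt x) = R.a b x :=
  LinearMap.congr_fun (R.a_E b) x

lemma mesh_apply (x : X) : ∑ b, b.sign k • R.a b (R.a b.rev x) = R.param (R.z x) := by
  simpa using LinearMap.congr_fun R.mesh_eq_param_mul_z x

lemma E_sum_apply (x : X) : ∑ i, R.E i x = x := by
  simpa using LinearMap.congr_fun R.E_sum x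

lemma param_apply (x : X) : R.param x = ∑ i, v i • R.E i x := by
  simp [param]

lemma E_E_apply (i j : Fin Q.r) (x : X) :
    R.E i (R.E j x) = if i = j then R.E i x else 0 := by
  rw [← Module.End.mul_apply, R.E_mul]
  split_ifs <;> rfl

end Module

end Realization

lemma sum_qhMesh : ∑ i, qhMesh k Q i =
    ∑ b : DoubleArrow Q, b.sign k • (FreeAlgebra.ι k b.toGen * FreeAlgebra.ι k b.rev.toGen) := by
  simp only [qhMesh, Finset.sum_sub_distrib]
  rw [Finset.sum_comm, Finset.sum_comm (s := Finset.univ (α := Fin Q.r))]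
  simp [DoubleArrow.sign, DoubleArrow.toGen, DoubleArrow.rev, sub_eq_add_neg]

/-! ## The quiver Heisenberg algebra -/

variable (v) in
/-- The tautological realization, in the quiver Heisenberg algebra itself. -/
noncomputable def taut : Realization v (QHAlg k Q v) where
  E i := qhGen k Q v (.vert i)
  a b := qhGen k Q v b.toGen
  z := qhGen k Q v .z
  E_mul i j := by
    split_ifs with h
    · subst h
      simpa [qhGen] using RingQuot.mkAlgHom_rel k (QHRel.vert_idem (v := v) i)
    · simpa [qhGen] using RingQuot.mkAlgHom_rel k (QHRel.vert_orth (v := v) i j h)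
  E_sum := by simpa [qhGen] using RingQuot.mkAlgHom_rel k (QHRel.vert_sum (k := k) (v := v))
  E_a b := by
    cases b with
    | inl e =>
      simpa [qhGen, DoubleArrow.src, DoubleArrow.toGen] using
        RingQuot.mkAlgHom_rel k (QHRel.fwd_left (v := v) e)
    | inr e =>
      simpa [qhGen, DoubleArrow.src, DoubleArrow.toGen] using
        RingQuot.mkAlgHom_rel k (QHRel.bwd_left (v := v) e)
  a_E b := by
    cases b with
    | inl e =>
      simpa [qhGen, DoubleArrow.tgt, DoubleArrow.toGen] using
        RingQuot.mkAlgHom_rel k (QHRel.fwd_right (v := v) e)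
    | inr e =>
      simpa [qhGen, DoubleArrow.tgt, DoubleArrow.toGen] using
        RingQuot.mkAlgHom_rel k (QHRel.bwd_right (v := v) e)
  z_E i := by simpa [qhGen] using RingQuot.mkAlgHom_rel k (QHRel.central (v := v) (.vert i))
  z_a b := by simpa [qhGen] using RingQuot.mkAlgHom_rel k (QHRel.central (v := v) b.toGen)
  mesh := by
    have hcentral (i : Fin Q.r) := RingQuot.mkAlgHom_rel k (QHRel.central (v := v) (.vert i))
    have hmesh (i : Fin Q.r) := RingQuot.mkAlgHom_rel k (QHRel.heisenberg (v := v) i)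
    have hsum := congrArg (RingQuot.mkAlgHom k (QHRel k Q v)) (sum_qhMesh (k := k) (Q := Q))
    simp only [map_mul] at hcentral
    simp only [map_sum, hmesh, map_smul, map_mul, hcentral] at hsum
    simpa only [qhGen, Finset.sum_mul, smul_mul_assoc] using hsum.symm

namespace Realization

variable {B : Type*} [Ring B] [Algebra k B] (R : Realization v B)

@[simp] lemma lift_E (i : Fin Q.r) : R.lift ((taut v).E i) = R.E i := R.lift_qhGen _

@[simp] lemma lift_a (b : DoubleArrow Q) : R.lift ((taut v).a b) = R.a b :=
  (R.lift_qhGen b.toGen).trans (R.val_toGen b)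

@[simp] lemma lift_z : R.lift (taut v).z = R.z := R.lift_qhGen _

end Realization

variable (k v) in
/-- The element of `ᵛΛ(Q)` represented by a word in the generators. -/
noncomputable def word (l : List (QHGen Q)) : QHAlg k Q v := (l.map (qhGen k Q v)).prod

@[simp] lemma word_nil : word k v ([] : List (QHGen Q)) = 1 := rfl

@[simp] lemma word_cons (g : QHGen Q) (l : List (QHGen Q)) :
    word k v (g :: l) = qhGen k Q v g * word k v l := by simp [word]

lemma word_append (l l' : List (QHGen Q)) :
    word k v (l ++ l') = word k v l * word k v l' := by simp [word]

variable (k v) in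
lemma span_range_word : Submodule.span k (Set.range (word k v)) = ⊤ := by
  rw [eq_top_iff]
  rintro x -
  obtain ⟨y, rfl⟩ := RingQuot.mkAlgHom_surjective k (QHRel k Q v) x
  induction y using FreeAlgebra.induction with
  | grade0 c =>
    rw [AlgHom.commutes, Algebra.algebraMap_eq_smul_one]
    exact Submodule.smul_mem _ _ (Submodule.subset_span ⟨[], rfl⟩)
  | grade1 g => exact Submodule.subset_span ⟨[g], by simp [word, qhGen]⟩
  | mul a b ha hb =>
    rw [map_mul]
    have := Submodule.mul_mem_mul ha hb
    rw [Submodule.span_mul_span] at this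
    refine Submodule.span_mono ?_ this
    rintro _ ⟨_, ⟨l, rfl⟩, _, ⟨l', rfl⟩, rfl⟩
    exact ⟨l ++ l', word_append l l'⟩
  | add a b ha hb => rw [map_add]; exact Submodule.add_mem _ ha hb

@[elab_as_elim]
lemma word_induction {motive : QHAlg k Q v → Prop} (x : QHAlg k Q v)
    (word : ∀ l, motive (word k v l)) (add : ∀ x y, motive x → motive y → motive (x + y))
    (smul : ∀ (c : k) x, motive x → motive (c • x)) : motive x := by
  have hx : x ∈ Submodule.span k (Set.range (QuiverHeisenberg.word k v)) := by
    rw [span_range_word]; trivial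
  induction hx using Submodule.span_induction with
  | mem x hx => obtain ⟨l, rfl⟩ := hx; exact word l
  | zero => simpa using smul 0 _ (word [])
  | add x y _ _ hx hy => exact add x y hx hy
  | smul c x _ hx => exact smul c x hx

@[elab_as_elim]
lemma mul_left_induction {motive : QHAlg k Q v → Prop} (x : QHAlg k Q v) (one : motive 1)
    (add : ∀ x y, motive x → motive y → motive (x + y))
    (smul : ∀ (c : k) x, motive x → motive (c • x))
    (E_mul : ∀ i x, motive x → motive ((taut v).E i * x))
    (a_mul : ∀ b x, motive x → motive ((taut v).a b * x))
    (z_mul : ∀ x, motive x → motive ((taut v).z * x)) : motive x := by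
  induction x using word_induction with
  | word l =>
    induction l with
    | nil => simpa using one
    | cons g l ih =>
      rw [word_cons]
      cases g with
      | vert i => exact E_mul i _ ih
      | fwd e => exact a_mul (.inl e) _ ih
      | bwd e => exact a_mul (.inr e) _ ih
      | z => exact z_mul _ ih
  | add x y hx hy => exact add x y hx hy
  | smul c x hx => exact smul c x hx

lemma z_mul_comm (x : QHAlg k Q v) : (taut v).z * x = x * (taut v).z := by
  induction x using mul_left_induction with
  | one => simp
  | add x y hx hy => rw [mul_add, hx, hy, add_mul]
  | smul c x hx => rw [mul_smul_comm, hx, smul_mul_assoc]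
  | E_mul i x hx => rw [← mul_assoc, (taut v).z_E, mul_assoc, hx, mul_assoc]
  | a_mul b x hx => rw [← mul_assoc, (taut v).z_a, mul_assoc, hx, mul_assoc]
  | z_mul x hx => rw [mul_assoc, ← hx]

variable (v) in
/-- The left regular module of `ᵛΛ(Q)`. -/
noncomputable def regular : Realization v (Module.End k (QHAlg k Q v)) :=
  (taut v).map (Algebra.lmul k _)

@[simp] lemma regular_E (i : Fin Q.r) (x : QHAlg k Q v) :
    (regular v).E i x = (taut v).E i * x := rfl

@[simp] lemma regular_a (b : DoubleArrow Q) (x : QHAlg k Q v) :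
    (regular v).a b x = (taut v).a b * x := rfl

@[simp] lemma regular_z (x : QHAlg k Q v) : (regular v).z x = (taut v).z * x := rfl

@[simp] lemma regular_param (x : QHAlg k Q v) :
    (regular v).param x = (taut v).param * x := by
  simp [Realization.param, Finset.sum_mul]

/-! ## A self-dual complex computing extensions -/

section Complex

variable {X Y : Type*} [AddCommGroup X] [Module k X] [AddCommGroup Y] [Module k Y]

variable (k Q) in
/-- Families of linear maps indexed by the generators of `ᵛΛ(Q)` other than the idempotents. The
first component is indexed by the arrows of the double quiver and the second one belongs to `z`.
These are the first-order deformations, and also the possible obstructions, in the complex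
`Hom(X, Y) → ArrowFamily k Q X Y → ArrowFamily k Q X Y` below. -/
abbrev ArrowFamily (X Y : Type*) [AddCommGroup X] [Module k X] [AddCommGroup Y] [Module k Y] :=
  (DoubleArrow Q → X →ₗ[k] Y) × (X →ₗ[k] Y)

lemma ArrowFamily.ext_apply {g g' : ArrowFamily k Q X Y} (ha : ∀ b x, g.1 b x = g'.1 b x)
    (hz : ∀ x, g.2 x = g'.2 x) : g = g' :=
  Prod.ext (funext fun b => LinearMap.ext (ha b)) (LinearMap.ext hz)

variable (R : Realization v (Module.End k X)) (R' : Realization v (Module.End k Y))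

/-- A linear map is vertex-linear if it commutes with the vertex idempotents. -/
def IsVertexLinear (F : X →ₗ[k] Y) : Prop := ∀ i x, R'.E i (F x) = F (R.E i x)

/-- A family of linear maps is compatible with the vertex idempotents if its component at an arrow
`b` maps the part of `X` at the end of `b` to the part of `Y` at the start of `b` and vanishes on
the other parts, and its component at `z` is vertex-linear. -/
def IsCompatible (g : ArrowFamily k Q X Y) : Prop :=
  (∀ b x, R'.E b.src (g.1 b x) = g.1 b x) ∧ (∀ b x, g.1 b (R.E b.tgt x) = g.1 b x) ∧
    IsVertexLinear R R' g.2

/-- The commutators of a linear map with the actions of the generators: the first differential of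
the complex. -/
noncomputable def d₀ : (X →ₗ[k] Y) →ₗ[k] ArrowFamily k Q X Y where
  toFun F := (fun b => R'.a b ∘ₗ F - F ∘ₗ R.a b, R'.z ∘ₗ F - F ∘ₗ R.z)
  map_add' F G := by
    ext <;> simp <;> abel
  map_smul' c F := by
    ext <;> simp [smul_sub]

/-- The second differential of the complex: the linearization at the given actions of the
commutation relations between `z` and the arrows, and of the mesh relation. -/
noncomputable def d₁ : ArrowFamily k Q X Y →ₗ[k] ArrowFamily k Q X Y where
  toFun g := (fun b => R'.z ∘ₗ g.1 b - g.1 b ∘ₗ R.z + g.2 ∘ₗ R.a b - R'.a b ∘ₗ g.2,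
    R'.param ∘ₗ g.2 - ∑ b, b.sign k • (g.1 b ∘ₗ R.a b.rev + R'.a b ∘ₗ g.1 b.rev))
  map_add' g g' := by
    refine Prod.ext (funext fun b => ?_) ?_
    · simp only [Prod.snd_add, Prod.fst_add, Pi.add_apply, LinearMap.comp_add, LinearMap.add_comp]
      abel
    · simp only [Prod.snd_add, Prod.fst_add, Pi.add_apply, LinearMap.comp_add, LinearMap.add_comp,
        smul_add, Finset.sum_add_distrib]
      abel
  map_smul' c g := by
    refine Prod.ext (funext fun b => ?_) ?_
    · simp [smul_sub, LinearMap.comp_smul, LinearMap.smul_comp]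
    · simp [smul_sub, smul_add, Finset.smul_sum, smul_comm c, LinearMap.comp_smul,
        LinearMap.smul_comp, -Fintype.sum_sum_type]

@[simp] lemma d₀_fst (F : X →ₗ[k] Y) (b : DoubleArrow Q) (x : X) :
    (d₀ R R' F).1 b x = R'.a b (F x) - F (R.a b x) := rfl

@[simp] lemma d₀_snd (F : X →ₗ[k] Y) (x : X) :
    (d₀ R R' F).2 x = R'.z (F x) - F (R.z x) := rfl

@[simp] lemma d₁_fst (g : ArrowFamily k Q X Y) (b : DoubleArrow Q) (x : X) :
    (d₁ R R' g).1 b x = R'.z (g.1 b x) - g.1 b (R.z x) + g.2 (R.a b x) - R'.a b (g.2 x) := rfl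

@[simp] lemma d₁_snd (g : ArrowFamily k Q X Y) (x : X) :
    (d₁ R R' g).2 x = R'.param (g.2 x) -
      ∑ b, b.sign k • (g.1 b (R.a b.rev x) + R'.a b (g.1 b.rev x)) := by
  simp [d₁]

variable {R R'}

lemma IsVertexLinear.param {F : X →ₗ[k] Y} (hF : IsVertexLinear R R' F) (x : X) :
    R'.param (F x) = F (R.param x) := by
  simp [Realization.param_apply, hF _ _]

lemma d₁_d₀ {F : X →ₗ[k] Y} (hF : IsVertexLinear R R' F) : d₁ R R' (d₀ R R' F) = 0 := by
  refine ArrowFamily.ext_apply (fun b x => ?_) fun x => ?_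
  · simp [R.z_a_apply, R'.z_a_apply]
    abel
  · have hR : F (R.param (R.z x)) = ∑ b, b.sign k • F (R.a b (R.a b.rev x)) := by
      rw [← R.mesh_apply, map_sum]
      simp
    simp only [d₁_snd, d₀_snd, d₀_fst, map_sub, hF.param, smul_add, smul_sub,
      Finset.sum_add_distrib, Finset.sum_sub_distrib, R'.mesh_apply]
    simp [hR]

lemma IsCompatible.d₁ {g : ArrowFamily k Q X Y} (hg : IsCompatible R R' g) :
    IsCompatible R R' (d₁ R R' g) := by
  obtain ⟨hsrc, htgt, hz⟩ := hg
  refine ⟨fun b x => ?_, fun b x => ?_, fun i x => ?_⟩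
  · simp [R'.E_a_apply, hsrc, ← R'.z_E_apply, hz _ _, R.E_a_apply]
  · simp [R.a_E_apply, htgt, R.z_E_apply, ← hz _ x, R'.a_E_apply]
  · have hga (b) : R'.E i (g.1 b (R.a b.rev x)) = g.1 b (R.a b.rev (R.E i x)) := by
      have ha := LinearMap.congr_fun (R.a_mul_E b.rev i) x
      simp only [Module.End.mul_apply, DoubleArrow.tgt_rev] at ha
      rw [← hsrc, R'.E_E_apply, ha]
      by_cases h : b.src = i
      · subst h; simpa using hsrc b _
      · simp [h, Ne.symm h]
    have hag (b) : R'.E i (R'.a b (g.1 b.rev x)) = R'.a b (g.1 b.rev (R.E i x)) := by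
      have ha := LinearMap.congr_fun (R'.E_mul_a i b) (g.1 b.rev x)
      simp only [Module.End.mul_apply] at ha
      rw [← htgt b.rev (R.E i x), R.E_E_apply, ha, DoubleArrow.tgt_rev]
      by_cases h : b.src = i
      · subst h; simpa using congrArg (R'.a b) (htgt b.rev x).symm
      · simp [h]
    have hparam (y) : R'.E i (R'.param y) = R'.param (R'.E i y) := by
      rw [← Module.End.mul_apply, ← Module.End.mul_apply, R'.param_mul_E, R'.E_mul_param]
    simp [hga, hag, hparam, hz _ _]

variable (R R')

/-- The projection onto the vertex-linear maps. -/
noncomputable def vertexProj : (X →ₗ[k] Y) →ₗ[k] (X →ₗ[k] Y) where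
  toFun F := ∑ i, R'.E i ∘ₗ F ∘ₗ R.E i
  map_add' F G := by simp [LinearMap.comp_add, LinearMap.add_comp, Finset.sum_add_distrib]
  map_smul' c F := by simp [LinearMap.comp_smul, LinearMap.smul_comp, Finset.smul_sum]

@[simp] lemma vertexProj_apply (F : X →ₗ[k] Y) (x : X) :
    vertexProj R R' F x = ∑ i, R'.E i (F (R.E i x)) := by
  simp [vertexProj]

/-- The projection onto the families compatible with the vertex idempotents. -/
noncomputable def compatProj : ArrowFamily k Q X Y →ₗ[k] ArrowFamily k Q X Y where
  toFun g := (fun b => R'.E b.src ∘ₗ g.1 b ∘ₗ R.E b.tgt, vertexProj R R' g.2)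
  map_add' F G := by
    refine Prod.ext (funext fun b => ?_) ?_
    · simp [LinearMap.comp_add, LinearMap.add_comp]
    · simp
  map_smul' c F := by
    refine Prod.ext (funext fun b => ?_) ?_
    · simp [LinearMap.comp_smul, LinearMap.smul_comp]
    · simp

@[simp] lemma compatProj_fst (g : ArrowFamily k Q X Y) (b : DoubleArrow Q) (x : X) :
    (compatProj R R' g).1 b x = R'.E b.src (g.1 b (R.E b.tgt x)) := rfl

@[simp] lemma compatProj_snd (g : ArrowFamily k Q X Y) :
    (compatProj R R' g).2 = vertexProj R R' g.2 := rfl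

lemma isVertexLinear_vertexProj (F : X →ₗ[k] Y) : IsVertexLinear R R' (vertexProj R R' F) := by
  intro i x
  simp [R'.E_E_apply, R.E_E_apply, apply_ite F, apply_ite (R'.E _)]

lemma isCompatible_compatProj (g : ArrowFamily k Q X Y) :
    IsCompatible R R' (compatProj R R' g) := by
  refine ⟨fun b x => ?_, fun b x => ?_, isVertexLinear_vertexProj R R' g.2⟩ <;>
  simp [R'.E_E_apply, R.E_E_apply]

variable {R R'}

lemma IsVertexLinear.vertexProj_eq {F : X →ₗ[k] Y} (hF : IsVertexLinear R R' F) :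
    vertexProj R R' F = F := by
  ext x
  simp [hF _ _, R.E_E_apply, ← map_sum, R.E_sum_apply]

lemma IsCompatible.compatProj_eq {g : ArrowFamily k Q X Y} (hg : IsCompatible R R' g) :
    compatProj R R' g = g := by
  refine Prod.ext (funext fun b => LinearMap.ext fun x => ?_) hg.2.2.vertexProj_eq
  simp [hg.1, hg.2.1]

end Complex

section Pairing

open LinearMap (trace)

variable {X Y : Type*} [AddCommGroup X] [Module k X] [AddCommGroup Y] [Module k Y]

/-- The trace pairing between families `X → Y` and families `Y → X`, which makes the complex
self-dual. The component at `b` is paired with the component at the reversed arrow. -/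
noncomputable def tracePairing (g : ArrowFamily k Q X Y) (u : ArrowFamily k Q Y X) : k :=
  ∑ b, b.sign k * trace k Y (g.1 b ∘ₗ u.1 b.rev) + trace k Y (g.2 ∘ₗ u.2)

lemma tracePairing_zero_right (g : ArrowFamily k Q X Y) :
    tracePairing g (0 : ArrowFamily k Q Y X) = 0 := by
  simp [tracePairing]

lemma tracePairing_d₁ {R : Realization v (Module.End k X)} {R' : Realization v (Module.End k Y)}
    (g : ArrowFamily k Q X Y) (u : ArrowFamily k Q Y X) :
    tracePairing g (d₁ R' R u) =
      ∑ b, b.sign k * trace k Y (g.1 b ∘ₗ R.z ∘ₗ u.1 b.rev) -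
      ∑ b, b.sign k * trace k Y (g.1 b ∘ₗ u.1 b.rev ∘ₗ R'.z) +
      ∑ b, b.sign k * trace k Y (g.1 b ∘ₗ u.2 ∘ₗ R'.a b.rev) -
      ∑ b, b.sign k * trace k Y (g.1 b ∘ₗ R.a b.rev ∘ₗ u.2) +
      (trace k Y (g.2 ∘ₗ R.param ∘ₗ u.2) -
        ∑ b, b.sign k * trace k Y (g.2 ∘ₗ u.1 b ∘ₗ R'.a b.rev) -
        ∑ b, b.sign k * trace k Y (g.2 ∘ₗ R.a b ∘ₗ u.1 b.rev)) := by
  have hsum (f : DoubleArrow Q → Y →ₗ[k] X) : g.2 ∘ₗ ∑ b, f b = ∑ b, g.2 ∘ₗ f b :=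
    map_sum (LinearMap.llcomp k Y X Y g.2) f Finset.univ
  simp only [tracePairing, d₁, LinearMap.coe_mk, AddHom.coe_mk, LinearMap.comp_add,
    LinearMap.comp_sub, map_add, map_sub, LinearMap.comp_smul, hsum, map_sum,
    map_smul, smul_eq_mul, mul_add, mul_sub, Finset.sum_add_distrib, Finset.sum_sub_distrib]
  ring

lemma eq_zero_of_trace_comp_eq_zero [FiniteDimensional k X] {g : Y →ₗ[k] X}
    (hg : ∀ f : X →ₗ[k] Y, trace k X (g ∘ₗ f) = 0) : g = 0 := by
  ext y
  by_contra hne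
  obtain ⟨ξ, hξ⟩ := Module.Projective.exists_dual_ne_zero k hne
  have hcomp : g ∘ₗ ξ.smulRight y = ξ.smulRight (g y) := by ext; simp
  have htrace := hg (ξ.smulRight y)
  rw [hcomp, LinearMap.trace_smulRight] at htrace
  exact hξ htrace

variable [FiniteDimensional k Y]

lemma exists_eq_trace_comp [FiniteDimensional k X] (l : (X →ₗ[k] Y) →ₗ[k] k) :
    ∃ g : Y →ₗ[k] X, ∀ f, l f = trace k X (g ∘ₗ f) := by
  let T : (Y →ₗ[k] X) →ₗ[k] Module.Dual k (X →ₗ[k] Y) :=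
    (LinearMap.llcomp k X Y X).compr₂ (trace k X)
  have hT : Function.Injective T := (injective_iff_map_eq_zero T).2 fun g hg =>
    eq_zero_of_trace_comp_eq_zero fun f => LinearMap.congr_fun hg f
  have hT' : Function.Surjective T := by
    refine (LinearMap.injective_iff_surjective_of_finrank_eq_finrank ?_).1 hT
    rw [Subspace.dual_finrank_eq, Module.finrank_linearMap, Module.finrank_linearMap, mul_comm]
  obtain ⟨g, hg⟩ := hT' l
  exact ⟨g, fun f => by rw [← hg]; rfl⟩

lemma exists_eq_tracePairing [FiniteDimensional k X] (l : ArrowFamily k Q X Y →ₗ[k] k) :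
    ∃ g : ArrowFamily k Q Y X, ∀ u, l u = tracePairing g u := by
  classical
  let ι (b : DoubleArrow Q) : (X →ₗ[k] Y) →ₗ[k] ArrowFamily k Q X Y :=
    LinearMap.inl k _ _ ∘ₗ LinearMap.single k (fun _ => X →ₗ[k] Y) b
  choose g hg using fun b => exists_eq_trace_comp (l ∘ₗ ι b)
  obtain ⟨gz, hgz⟩ := exists_eq_trace_comp (l ∘ₗ LinearMap.inr k (DoubleArrow Q → X →ₗ[k] Y) _)
  refine ⟨(fun b => b.sign k • g b.rev, gz), fun u => ?_⟩
  have hu : u = ∑ b, ι b (u.1 b) + LinearMap.inr k _ _ u.2 := by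
    refine Prod.ext (funext fun b => ?_) ?_
    · simp [ι, -Fintype.sum_sum_type, Prod.fst_sum, Finset.sum_apply, Pi.single_apply]
    · simp [ι, -Fintype.sum_sum_type, Prod.snd_sum]
  calc l u = ∑ b, l (ι b (u.1 b)) + l (LinearMap.inr k _ _ u.2) := by
        conv_lhs => rw [hu, map_add, map_sum]
    _ = ∑ b, trace k X (g b ∘ₗ u.1 b) + trace k X (gz ∘ₗ u.2) :=
        congrArg₂ _ (Finset.sum_congr rfl fun b _ => hg b _) (hgz _)
    _ = ∑ b : DoubleArrow Q, trace k X (g b.rev ∘ₗ u.1 b.rev) + trace k X (gz ∘ₗ u.2) := by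
        rw [DoubleArrow.sum_rev fun b => trace k X (g b ∘ₗ u.1 b)]
    _ = _ := by
        simp only [tracePairing, LinearMap.smul_comp, map_smul, smul_eq_mul, ← mul_assoc,
          DoubleArrow.sign_mul_self, one_mul]

lemma eq_zero_of_tracePairing_right [FiniteDimensional k X] (u : ArrowFamily k Q Y X)
    (h : ∀ g : ArrowFamily k Q X Y, tracePairing g u = 0) : u = 0 := by
  by_contra hne
  obtain ⟨l, hl⟩ := Module.Projective.exists_dual_ne_zero k hne
  obtain ⟨g, hg⟩ := exists_eq_tracePairing l
  exact hl ((hg u).trans (h g))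

variable {R : Realization v (Module.End k X)} {R' : Realization v (Module.End k Y)}

lemma tracePairing_compatProj (g : ArrowFamily k Q X Y) (u : ArrowFamily k Q Y X) :
    tracePairing (compatProj R R' g) u = tracePairing g (compatProj R' R u) := by
  unfold tracePairing
  congr 1
  · refine Finset.sum_congr rfl fun b _ => congrArg _ ?_
    have hL : (compatProj R R' g).1 b ∘ₗ u.1 b.rev =
      R'.E b.src ∘ₗ (g.1 b ∘ₗ R.E b.tgt ∘ₗ u.1 b.rev) := rfl
    have hR : g.1 b ∘ₗ (compatProj R' R u).1 b.rev =
      (g.1 b ∘ₗ R.E b.tgt ∘ₗ u.1 b.rev) ∘ₗ R'.E b.src := by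
      ext x; simp
    rw [hL, hR, LinearMap.trace_comp_comm']
  · have hL : (compatProj R R' g).2 ∘ₗ u.2 =
      ∑ i, R'.E i ∘ₗ (g.2 ∘ₗ R.E i ∘ₗ u.2) := by
      ext x; simp
    have hR : g.2 ∘ₗ (compatProj R' R u).2 =
      ∑ i, (g.2 ∘ₗ R.E i ∘ₗ u.2) ∘ₗ R'.E i := by
      ext x; simp
    rw [hL, hR, map_sum, map_sum]
    exact Finset.sum_congr rfl fun i _ => LinearMap.trace_comp_comm' _ _

lemma tracePairing_d₁_comm [FiniteDimensional k X] {g : ArrowFamily k Q X Y}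
    {g' : ArrowFamily k Q Y X} (hg : IsCompatible R R' g) :
    tracePairing g' (d₁ R R' g) = tracePairing g (d₁ R' R g') := by
  have hparam : trace k X (g'.2 ∘ₗ R'.param ∘ₗ g.2) = trace k Y (g.2 ∘ₗ R.param ∘ₗ g'.2) := by
    have : R'.param ∘ₗ g.2 = g.2 ∘ₗ R.param := LinearMap.ext hg.2.2.param
    rw [this, LinearMap.trace_comp_comm', LinearMap.comp_assoc]
  have hz : ∑ b, b.sign k * trace k X (g'.1 b ∘ₗ R'.z ∘ₗ g.1 b.rev) =
      -∑ b, b.sign k * trace k Y (g.1 b ∘ₗ g'.1 b.rev ∘ₗ R'.z) := by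
    rw [← DoubleArrow.sum_sign_mul_rev]
    exact Finset.sum_congr rfl fun b _ => by
      rw [DoubleArrow.rev_rev, LinearMap.trace_comp_cycle, LinearMap.trace_comp_cycle]
  have hz' : ∑ b, b.sign k * trace k X (g'.1 b ∘ₗ g.1 b.rev ∘ₗ R.z) =
      -∑ b, b.sign k * trace k Y (g.1 b ∘ₗ R.z ∘ₗ g'.1 b.rev) := by
    rw [← DoubleArrow.sum_sign_mul_rev]
    exact Finset.sum_congr rfl fun b _ => by rw [DoubleArrow.rev_rev, LinearMap.trace_comp_cycle]
  have ha : ∑ b, b.sign k * trace k X (g'.1 b ∘ₗ g.2 ∘ₗ R.a b.rev) =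
      -∑ b, b.sign k * trace k Y (g.2 ∘ₗ R.a b ∘ₗ g'.1 b.rev) := by
    rw [← DoubleArrow.sum_sign_mul_rev]
    exact Finset.sum_congr rfl fun b _ => by rw [DoubleArrow.rev_rev, LinearMap.trace_comp_cycle]
  have ha' : ∑ b, b.sign k * trace k X (g'.1 b ∘ₗ R'.a b.rev ∘ₗ g.2) =
      ∑ b, b.sign k * trace k Y (g.2 ∘ₗ g'.1 b ∘ₗ R'.a b.rev) :=
    Finset.sum_congr rfl fun b _ => by
      rw [LinearMap.trace_comp_cycle, LinearMap.trace_comp_cycle]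
  have hmesh : ∑ b, b.sign k * trace k X (g'.2 ∘ₗ g.1 b ∘ₗ R.a b.rev) =
      ∑ b, b.sign k * trace k Y (g.1 b ∘ₗ R.a b.rev ∘ₗ g'.2) :=
    Finset.sum_congr rfl fun b _ => by rw [LinearMap.trace_comp_cycle]
  have hmesh' : ∑ b, b.sign k * trace k X (g'.2 ∘ₗ R'.a b ∘ₗ g.1 b.rev) =
      -∑ b, b.sign k * trace k Y (g.1 b ∘ₗ g'.2 ∘ₗ R'.a b.rev) := by
    rw [← DoubleArrow.sum_sign_mul_rev]
    exact Finset.sum_congr rfl fun b _ => by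
      rw [DoubleArrow.rev_rev, LinearMap.trace_comp_cycle, LinearMap.trace_comp_cycle]
  rw [tracePairing_d₁, tracePairing_d₁]
  linear_combination hz - hz' + ha - ha' + hparam - hmesh - hmesh'

end Pairing

section Extension

variable {X Y : Type*} [AddCommGroup X] [Module k X] [AddCommGroup Y] [Module k Y]
  {R : Realization v (Module.End k X)} {R' : Realization v (Module.End k Y)}

private lemma extension_mesh {g : ArrowFamily k Q X Y} (hd : (d₁ R R' g).2 = 0) :
    let A (b : DoubleArrow Q) : Module.End k (Y × X) := LinearMap.prodMap (R'.a b) (R.a b) +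
      LinearMap.inl k Y X ∘ₗ g.1 b ∘ₗ LinearMap.snd k Y X
    ∑ b, b.sign k • (A b * A b.rev) = LinearMap.prodMap R'.param R.param *
      (LinearMap.prodMap R'.z R.z + LinearMap.inl k Y X ∘ₗ g.2 ∘ₗ LinearMap.snd k Y X) := by
  refine LinearMap.ext fun p => Prod.ext ?_ ?_
  · have h := LinearMap.congr_fun hd p.2
    simp only [d₁_snd, LinearMap.zero_apply, sub_eq_zero, smul_add,
      Finset.sum_add_distrib] at h
    simp only [LinearMap.sum_apply, Prod.fst_sum, LinearMap.smul_apply, Module.End.mul_apply,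
      LinearMap.add_apply, LinearMap.prodMap_apply, LinearMap.comp_apply, LinearMap.snd_apply,
      LinearMap.inl_apply, Prod.fst_add, Prod.smul_fst, map_add, smul_add,
      Finset.sum_add_distrib, R'.mesh_apply, add_zero, h, map_zero]
    abel
  · simpa [Prod.snd_sum, -Fintype.sum_sum_type] using R.mesh_apply p.2

/-- The extension of `X` by `Y` defined by a cocycle: the actions on `Y × X` are upper triangular
with the cocycle as off-diagonal part. -/
noncomputable def extension (g : ArrowFamily k Q X Y) (hg : IsCompatible R R' g)
    (hd : d₁ R R' g = 0) : Realization v (Module.End k (Y × X)) where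
  E i := LinearMap.prodMap (R'.E i) (R.E i)
  a b := LinearMap.prodMap (R'.a b) (R.a b) + LinearMap.inl k Y X ∘ₗ g.1 b ∘ₗ LinearMap.snd k Y X
  z := LinearMap.prodMap R'.z R.z + LinearMap.inl k Y X ∘ₗ g.2 ∘ₗ LinearMap.snd k Y X
  E_mul i j := by
    refine LinearMap.ext fun p => ?_
    split_ifs with h <;> simp [R.E_E_apply, R'.E_E_apply, h]
  E_sum := by
    refine LinearMap.ext fun p => ?_
    simp only [LinearMap.sum_apply, LinearMap.prodMap_apply, Module.End.one_apply]
    exact Prod.ext (by simp [Prod.fst_sum, R'.E_sum_apply]) (by simp [Prod.snd_sum, R.E_sum_apply])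
  E_a b := LinearMap.ext fun p => by simp [R.E_a_apply, R'.E_a_apply, hg.1]
  a_E b := LinearMap.ext fun p => by simp [R.a_E_apply, R'.a_E_apply, hg.2.1]
  z_E i := LinearMap.ext fun p => by simp [R.z_E_apply, R'.z_E_apply, hg.2.2 _ _]
  z_a b := by
    refine LinearMap.ext fun p => Prod.ext ?_ (by simp [R.z_a_apply])
    have h := LinearMap.congr_fun (congrFun (congrArg Prod.fst hd) b) p.2
    simp only [d₁_fst, Prod.fst_zero, Pi.zero_apply, LinearMap.zero_apply] at h
    simp only [Module.End.mul_apply, LinearMap.add_apply, LinearMap.prodMap_apply,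
      LinearMap.comp_apply, LinearMap.inl_apply, LinearMap.snd_apply, Prod.fst_add, map_add,
      map_zero, add_zero, R'.z_a_apply]
    rw [← sub_eq_zero, ← h]
    abel
  mesh := by
    have hparam : (∑ i, v i • LinearMap.prodMap (R'.E i) (R.E i)) =
        LinearMap.prodMap R'.param R.param := by
      refine LinearMap.ext fun p => Prod.ext ?_ ?_ <;>
      simp [Realization.param, Prod.fst_sum, Prod.snd_sum]
    rw [hparam]
    exact extension_mesh (congrArg Prod.snd hd)

variable {g : ArrowFamily k Q X Y} (hg : IsCompatible R R' g) (hd : d₁ R R' g = 0)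

@[simp] lemma extension_E (i : Fin Q.r) (p : Y × X) :
    (extension g hg hd).E i p = (R'.E i p.1, R.E i p.2) := rfl

@[simp] lemma extension_a (b : DoubleArrow Q) (p : Y × X) :
    (extension g hg hd).a b p = (R'.a b p.1 + g.1 b p.2, R.a b p.2) := by
  simp [extension]

@[simp] lemma extension_z (p : Y × X) :
    (extension g hg hd).z p = (R'.z p.1 + g.2 p.2, R.z p.2) := by
  simp [extension]

end Extension

section Exactness

variable {Y : Type*} [AddCommGroup Y] [Module k Y] {R' : Realization v (Module.End k Y)}

lemma lift_extension_apply_snd {g : ArrowFamily k Q (QHAlg k Q v) Y}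
    (hg : IsCompatible (regular v) R' g) (hd : d₁ (regular v) R' g = 0) (x y : QHAlg k Q v) :
    ((extension g hg hd).lift x (0, y)).2 = x * y := by
  induction x using mul_left_induction generalizing y with
  | one => simp
  | add x x' hx hx' => simp [hx, hx', add_mul]
  | smul c x hx => simp [hx]
  | E_mul i x hx => rw [map_mul, Realization.lift_E]; simp [hx, mul_assoc]
  | a_mul b x hx => rw [map_mul, Realization.lift_a]; simp [hx, mul_assoc]
  | z_mul x hx => rw [map_mul, Realization.lift_z]; simp [hx, mul_assoc]

/-- The extension of the free module by `Y` splits: the section sends `1` to `(0, 1)`. -/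
lemma exists_d₀_of_d₁_eq_zero {g : ArrowFamily k Q (QHAlg k Q v) Y}
    (hg : IsCompatible (regular v) R' g) (hd : d₁ (regular v) R' g = 0) :
    ∃ F, IsVertexLinear (regular v) R' F ∧ d₀ (regular v) R' F = g := by
  let section₁ : QHAlg k Q v →ₗ[k] Y :=
    { toFun := fun x => ((extension g hg hd).lift x (0, 1)).1
      map_add' := fun x y => by simp
      map_smul' := fun c x => by simp }
  have apply_section₁ (x) : section₁ x = ((extension g hg hd).lift x (0, 1)).1 := rfl
  refine ⟨-section₁, fun i x => ?_, ArrowFamily.ext_apply (fun b x => ?_) fun x => ?_⟩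
  · simp only [LinearMap.neg_apply, map_neg, apply_section₁, regular_E, map_mul,
      Realization.lift_E]
    simp
  · have hx := lift_extension_apply_snd hg hd x 1
    rw [d₀_fst]
    simp only [LinearMap.neg_apply, map_neg, apply_section₁, regular_a, map_mul,
      Realization.lift_a]
    simp [hx]
  · have hx := lift_extension_apply_snd hg hd x 1
    rw [d₀_snd]
    simp only [LinearMap.neg_apply, map_neg, apply_section₁, regular_z, map_mul,
      Realization.lift_z]
    simp [hx]

variable [FiniteDimensional k (QHAlg k Q v)] [FiniteDimensional k Y]

/-- The annihilator of the image of `d₁` consists of cocycles by self-adjointness, hence of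
coboundaries. -/
lemma exists_d₁_of_orthogonal {u : ArrowFamily k Q Y (QHAlg k Q v)}
    (hu : IsCompatible R' (regular v) u)
    (ho : ∀ F, IsVertexLinear (regular v) R' F → tracePairing (d₀ (regular v) R' F) u = 0) :
    ∃ g, IsCompatible R' (regular v) g ∧ d₁ R' (regular v) g = u := by
  by_contra hne
  have hu' : u ∉ LinearMap.range (d₁ R' (regular v) ∘ₗ compatProj R' (regular v)) := by
    rintro ⟨g, hg⟩
    exact hne ⟨_, isCompatible_compatProj _ _ g, hg⟩
  obtain ⟨l, hl, hl'⟩ := Submodule.exists_dual_map_eq_bot_of_notMem (R := k)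
    (M := ArrowFamily k Q Y (QHAlg k Q v)) hu' inferInstance
  obtain ⟨g', hg'⟩ := exists_eq_tracePairing l
  have hcocycle : d₁ (regular v) R' (compatProj (regular v) R' g') = 0 := by
    refine eq_zero_of_tracePairing_right _ fun g => ?_
    rw [← (isCompatible_compatProj (regular v) R' g').d₁.compatProj_eq, ← tracePairing_compatProj,
      tracePairing_d₁_comm (isCompatible_compatProj (regular v) R' g'), tracePairing_compatProj,
      (isCompatible_compatProj R' (regular v) g).d₁.compatProj_eq, ← hg']
    have : l (d₁ R' (regular v) (compatProj R' (regular v) g)) ∈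
        Submodule.map l (LinearMap.range (d₁ R' (regular v) ∘ₗ compatProj R' (regular v))) :=
      Submodule.mem_map_of_mem ⟨g, rfl⟩
    rwa [hl', Submodule.mem_bot] at this
  obtain ⟨F, hF, hF'⟩ := exists_d₀_of_d₁_eq_zero (isCompatible_compatProj _ _ _) hcocycle
  refine hl ?_
  rw [hg', ← hu.compatProj_eq, ← tracePairing_compatProj, ← hF', ho F hF]

end Exactness

/-! ## Gradings -/

/-- A grading of the quiver Heisenberg algebra, given by the nonnegative degrees of the arrows of
the double quiver and of `z`. The vertex idempotents have degree `0`. -/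
structure Grading (Q : FinQuiver) where
  weight : DoubleArrow Q → ℤ
  zWeight : ℤ
  weight_add_rev : ∀ b, weight b + weight b.rev = zWeight
  weight_nonneg : ∀ b, 0 ≤ weight b
  zWeight_nonneg : 0 ≤ zWeight

namespace Grading

variable (W : Grading Q)

/-- The degree of a generator. -/
def genWeight : QHGen Q → ℤ
  | .vert _ => 0
  | .fwd e => W.weight (.inl e)
  | .bwd e => W.weight (.inr e)
  | .z => W.zWeight

@[simp] lemma genWeight_toGen (b : DoubleArrow Q) : W.genWeight b.toGen = W.weight b := by
  cases b <;> rfl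

variable (v) in
/-- The realization in `ᵛΛ[t, t⁻¹]` in which every generator is multiplied by `t` to the power of
its degree. The induced homomorphism multiplies homogeneous elements of degree `n` by `t ^ n`. -/
noncomputable def coaction : Realization v (AddMonoidAlgebra (QHAlg k Q v) ℤ) where
  E i := .single 0 ((taut v).E i)
  a b := .single (W.weight b) ((taut v).a b)
  z := .single W.zWeight (taut v).z
  E_mul i j := by
    rw [AddMonoidAlgebra.single_mul_single, (taut v).E_mul]; split_ifs <;> simp
  E_sum := by
    rw [AddMonoidAlgebra.one_def, ← (taut v).E_sum]
    exact (map_sum (AddMonoidAlgebra.singleAddHom (R := QHAlg k Q v) (0 : ℤ)) _ _).symm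
  E_a b := by rw [AddMonoidAlgebra.single_mul_single, (taut v).E_a, zero_add]
  a_E b := by rw [AddMonoidAlgebra.single_mul_single, (taut v).a_E, add_zero]
  z_E i := by
    rw [AddMonoidAlgebra.single_mul_single, AddMonoidAlgebra.single_mul_single, (taut v).z_E,
      add_comm]
  z_a b := by
    rw [AddMonoidAlgebra.single_mul_single, AddMonoidAlgebra.single_mul_single, (taut v).z_a,
      add_comm]
  mesh := by
    have h := (taut v).mesh
    simp only [AddMonoidAlgebra.single_mul_single, W.weight_add_rev, Finset.sum_mul, smul_mul_assoc,
      zero_add] at h ⊢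
    have h' := congrArg (AddMonoidAlgebra.lsingle (R := k) W.zWeight) h
    simp only [map_sum, map_smul] at h'
    exact h'

variable (v) in
/-- The projection onto the homogeneous elements of degree `n`. -/
noncomputable def component (n : ℤ) : QHAlg k Q v →ₗ[k] QHAlg k Q v :=
  Finsupp.lapply n ∘ₗ (AddMonoidAlgebra.coeffLinearEquiv k).toLinearMap ∘ₗ
    (W.coaction v).lift.toLinearMap

lemma lift_coaction_word (l : List (QHGen Q)) :
    (W.coaction v).lift (word k v l) = .single (l.map W.genWeight).sum (word k v l) := by
  induction l with
  | nil => rw [word_nil, map_one]; rfl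
  | cons g l ih =>
    have : (W.coaction v).val g = .single (W.genWeight g) (qhGen k Q v g) := by cases g <;> rfl
    rw [word_cons, map_mul, Realization.lift_qhGen, ih, this, AddMonoidAlgebra.single_mul_single,
      List.map_cons, List.sum_cons]

lemma component_word (n : ℤ) (l : List (QHGen Q)) :
    W.component v n (word k v l) = if (l.map W.genWeight).sum = n then word k v l else 0 := by
  have h : W.component v n (word k v l) = ((W.coaction v).lift (word k v l)).coeff n := rfl
  rw [h, lift_coaction_word, AddMonoidAlgebra.coeff_single, Finsupp.single_apply]

lemma component_component (m n : ℤ) (x : QHAlg k Q v) :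
    W.component v m (W.component v n x) = if m = n then W.component v n x else 0 := by
  induction x using word_induction with
  | word l =>
    rw [component_word]
    by_cases h : (l.map W.genWeight).sum = n
    · simp [h, component_word, eq_comm]
    · simp [h]
  | add x y hx hy => rw [map_add, map_add, hx, hy]; split_ifs <;> simp
  | smul c x hx => rw [map_smul, map_smul, hx]; split_ifs <;> simp

lemma component_gen_mul (g : QHGen Q) (n : ℤ) (x : QHAlg k Q v) :
    W.component v (n + W.genWeight g) (qhGen k Q v g * x) =
      qhGen k Q v g * W.component v n x := by
  induction x using word_induction with
  | word l =>
    rw [← word_cons, component_word, component_word]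
    simp [add_comm, eq_comm]
  | add x y hx hy => rw [mul_add, map_add, map_add, hx, hy, mul_add]
  | smul c x hx => rw [mul_smul_comm, map_smul, map_smul, hx, mul_smul_comm]

lemma component_mul_gen (g : QHGen Q) (n : ℤ) (x : QHAlg k Q v) :
    W.component v (n + W.genWeight g) (x * qhGen k Q v g) =
      W.component v n x * qhGen k Q v g := by
  induction x using word_induction with
  | word l =>
    have h : word k v l * qhGen k Q v g = word k v (l ++ [g]) := by simp [word]
    rw [h, component_word, component_word]
    simp [h]
  | add x y hx hy => rw [add_mul, map_add, map_add, hx, hy, add_mul]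
  | smul c x hx => rw [smul_mul_assoc, map_smul, map_smul, hx, smul_mul_assoc]

lemma component_E_mul (i : Fin Q.r) (n : ℤ) (x : QHAlg k Q v) :
    W.component v n ((taut v).E i * x) = (taut v).E i * W.component v n x :=
  (congrArg (fun m => W.component v m _) (add_zero n).symm).trans
    (W.component_gen_mul (.vert i) n x)

lemma component_mul_E (i : Fin Q.r) (n : ℤ) (x : QHAlg k Q v) :
    W.component v n (x * (taut v).E i) = W.component v n x * (taut v).E i :=
  (congrArg (fun m => W.component v m _) (add_zero n).symm).trans
    (W.component_mul_gen (.vert i) n x)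

lemma component_a_mul (b : DoubleArrow Q) (n : ℤ) (x : QHAlg k Q v) :
    W.component v (n + W.weight b) ((taut v).a b * x) = (taut v).a b * W.component v n x := by
  have h := W.component_gen_mul b.toGen n x
  rw [genWeight_toGen] at h
  exact h

lemma component_z_mul (n : ℤ) (x : QHAlg k Q v) :
    W.component v (n + W.zWeight) ((taut v).z * x) = (taut v).z * W.component v n x :=
  W.component_gen_mul .z n x

lemma exists_sum_component (x : QHAlg k Q v) :
    ∃ s : Finset ℤ, ∀ t, s ⊆ t → ∑ n ∈ t, W.component v n x = x := by
  induction x using word_induction with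
  | word l =>
    refine ⟨{(l.map W.genWeight).sum}, fun t ht => ?_⟩
    simp [component_word, Finset.singleton_subset_iff.1 ht]
  | add x y hx hy =>
    obtain ⟨s, hs⟩ := hx
    obtain ⟨s', hs'⟩ := hy
    refine ⟨s ∪ s', fun t ht => ?_⟩
    simp only [map_add, Finset.sum_add_distrib]
    rw [hs t (Finset.union_subset_left ht), hs' t (Finset.union_subset_right ht)]
  | smul c x hx =>
    obtain ⟨s, hs⟩ := hx
    exact ⟨s, fun t ht => by simp only [map_smul, ← Finset.smul_sum, hs t ht]⟩

lemma ext_component {x y : QHAlg k Q v} (h : ∀ n, W.component v n x = W.component v n y) :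
    x = y := by
  classical
  obtain ⟨s, hs⟩ := W.exists_sum_component x
  obtain ⟨s', hs'⟩ := W.exists_sum_component y
  rw [← hs (s ∪ s') Finset.subset_union_left, ← hs' (s ∪ s') Finset.subset_union_right]
  exact Finset.sum_congr rfl fun n _ => h n

lemma component_one (n : ℤ) : W.component v n 1 = if n = 0 then 1 else 0 := by
  simpa [eq_comm] using W.component_word (v := v) n []

lemma component_E (i : Fin Q.r) (n : ℤ) :
    W.component v n ((taut v).E i) = if n = 0 then (taut v).E i else 0 := by
  have := W.component_mul_E (v := v) i n 1
  rw [one_mul, component_one] at this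
  rw [this]; split_ifs <;> simp

lemma genWeight_nonneg (g : QHGen Q) : 0 ≤ W.genWeight g := by
  cases g with
  | vert i => exact le_rfl
  | fwd e => exact W.weight_nonneg _
  | bwd e => exact W.weight_nonneg _
  | z => exact W.zWeight_nonneg

lemma component_of_neg {n : ℤ} (hn : n < 0) (x : QHAlg k Q v) : W.component v n x = 0 := by
  induction x using word_induction with
  | word l =>
    rw [component_word, if_neg]
    rintro rfl
    refine hn.not_ge (List.sum_nonneg fun m hm => ?_)
    obtain ⟨g, -, rfl⟩ := List.mem_map.1 hm
    exact W.genWeight_nonneg g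
  | add x y hx hy => simp [hx, hy]
  | smul c x hx => simp [hx]

end Grading

/-! ## Exactness on subrepresentations of the regular representation -/

section Functoriality

variable {X Y Z : Type*} [AddCommGroup X] [Module k X] [AddCommGroup Y] [Module k Y]
  [AddCommGroup Z] [Module k Z]

/-- A homomorphism of representations of the quiver Heisenberg algebra, as a property of a linear
map: it commutes with the vertex idempotents, the arrows and `z`. -/
structure IsIntertwining (R : Realization v (Module.End k X)) (R' : Realization v (Module.End k Y))
    (p : X →ₗ[k] Y) : Prop where
  E : IsVertexLinear R R' p
  a : ∀ b x, R'.a b (p x) = p (R.a b x)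
  z : ∀ x, R'.z (p x) = p (R.z x)

/-- Precomposition of an arrow family with a linear map. -/
def ArrowFamily.pre (g : ArrowFamily k Q Y Z) (p : X →ₗ[k] Y) : ArrowFamily k Q X Z :=
  (fun b => g.1 b ∘ₗ p, g.2 ∘ₗ p)

/-- Postcomposition of an arrow family with a linear map. -/
def ArrowFamily.post (p : Y →ₗ[k] Z) (g : ArrowFamily k Q X Y) : ArrowFamily k Q X Z :=
  (fun b => p ∘ₗ g.1 b, p ∘ₗ g.2)

variable {R : Realization v (Module.End k X)} {R' : Realization v (Module.End k Y)}
  {R'' : Realization v (Module.End k Z)}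

@[simp] lemma ArrowFamily.pre_fst (g : ArrowFamily k Q Y Z) (p : X →ₗ[k] Y) (b : DoubleArrow Q)
    (x : X) : (g.pre p).1 b x = g.1 b (p x) := rfl

@[simp] lemma ArrowFamily.pre_snd (g : ArrowFamily k Q Y Z) (p : X →ₗ[k] Y) (x : X) :
    (g.pre p).2 x = g.2 (p x) := rfl

lemma ArrowFamily.pre_sub (g g' : ArrowFamily k Q Y Z) (p : X →ₗ[k] Y) :
    (g - g').pre p = g.pre p - g'.pre p := rfl

lemma d₁_pre (g : ArrowFamily k Q Y Z) {p : X →ₗ[k] Y} (hp : IsIntertwining R R' p) :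
    d₁ R R'' (g.pre p) = (d₁ R' R'' g).pre p := by
  refine ArrowFamily.ext_apply (fun b x => ?_) fun x => ?_
  · simp [hp.a, hp.z]
  · simp [hp.a, -Fintype.sum_sum_type]

lemma d₀_pre (F : Y →ₗ[k] Z) {p : X →ₗ[k] Y} (hp : IsIntertwining R R' p) :
    d₀ R R'' (F ∘ₗ p) = (d₀ R' R'' F).pre p := by
  refine ArrowFamily.ext_apply (fun b x => ?_) fun x => ?_ <;> simp [hp.a, hp.z]

lemma d₀_post (F : X →ₗ[k] Y) {p : Y →ₗ[k] Z} (hp : IsIntertwining R' R'' p) :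
    d₀ R R'' (p ∘ₗ F) = (d₀ R R' F).post p := by
  refine ArrowFamily.ext_apply (fun b x => ?_) fun x => ?_ <;> simp [hp.a, hp.z, ArrowFamily.post]

lemma IsCompatible.pre {g : ArrowFamily k Q Y Z} (hg : IsCompatible R' R'' g) {p : X →ₗ[k] Y}
    (hp : IsVertexLinear R R' p) : IsCompatible R R'' (g.pre p) := by
  refine ⟨fun b x => ?_, fun b x => ?_, fun i x => ?_⟩
  · simp [hg.1]
  · simp [← hp _ _, hg.2.1]
  · simp [← hp _ _, hg.2.2 _ _]

lemma IsCompatible.sub {g g' : ArrowFamily k Q X Y} (hg : IsCompatible R R' g)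
    (hg' : IsCompatible R R' g') : IsCompatible R R' (g - g') := by
  refine ⟨fun b x => ?_, fun b x => ?_, fun i x => ?_⟩
  · exact (map_sub _ _ _).trans (congrArg₂ (· - ·) (hg.1 b x) (hg'.1 b x))
  · exact congrArg₂ (· - ·) (hg.2.1 b x) (hg'.2.1 b x)
  · exact (map_sub _ _ _).trans (congrArg₂ (· - ·) (hg.2.2 i x) (hg'.2.2 i x))

lemma IsVertexLinear.comp {F : Y →ₗ[k] Z} (hF : IsVertexLinear R' R'' F) {p : X →ₗ[k] Y}
    (hp : IsVertexLinear R R' p) : IsVertexLinear R R'' (F ∘ₗ p) := fun i x => by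
  rw [LinearMap.comp_apply, hF, hp, LinearMap.comp_apply]

lemma comp_vertexProj {p : Y →ₗ[k] Z} (hp : IsVertexLinear R' R'' p) (F : X →ₗ[k] Y) :
    p ∘ₗ vertexProj R R' F = vertexProj R R'' (p ∘ₗ F) := by
  ext x; simp [hp _ _]

lemma vertexProj_comp {p : X →ₗ[k] Y} (hp : IsVertexLinear R R' p) (F : Y →ₗ[k] Z) :
    vertexProj R' R'' F ∘ₗ p = vertexProj R R'' (F ∘ₗ p) := by
  ext x; simp [← hp _ _]

lemma tracePairing_post [FiniteDimensional k X] [FiniteDimensional k Y] [FiniteDimensional k Z]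
    (g : ArrowFamily k Q X Y) (p : Y →ₗ[k] Z) (u : ArrowFamily k Q Z X) :
    tracePairing (g.post p) u = tracePairing g (u.pre p) := by
  unfold tracePairing ArrowFamily.pre ArrowFamily.post
  congr 1
  · refine Finset.sum_congr rfl fun b _ => congrArg _ ?_
    exact LinearMap.trace_comp_comm' (g.1 b ∘ₗ u.1 b.rev) p
  · exact LinearMap.trace_comp_comm' (g.2 ∘ₗ u.2) p

/-- Invariance of a subspace under the vertex idempotents, the arrows and `z`. -/
structure Realization.IsInvariant (R : Realization v (Module.End k X)) (p : Submodule k X) :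
    Prop where
  E : ∀ i, p ≤ p.comap (R.E i)
  a : ∀ b, p ≤ p.comap (R.a b)
  z : p ≤ p.comap R.z

lemma IsIntertwining.isInvariant_range {p : X →ₗ[k] Y} (hp : IsIntertwining R R' p) :
    R'.IsInvariant (LinearMap.range p) where
  E i := by rintro _ ⟨x, rfl⟩; exact ⟨_, (hp.E i x).symm⟩
  a b := by rintro _ ⟨x, rfl⟩; exact ⟨_, (hp.a b x).symm⟩
  z := by rintro _ ⟨x, rfl⟩; exact ⟨_, (hp.z x).symm⟩

/-- The quotient of a representation by a subrepresentation. -/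
noncomputable def Realization.quotient (R : Realization v (Module.End k X)) {p : Submodule k X}
    (hp : R.IsInvariant p) : Realization v (Module.End k (X ⧸ p)) where
  E i := p.mapQ p (R.E i) (hp.E i)
  a b := p.mapQ p (R.a b) (hp.a b)
  z := p.mapQ p R.z hp.z
  E_mul i j := by
    refine Submodule.linearMap_qext _ (LinearMap.ext fun x => ?_)
    have := R.E_E_apply i j x
    split_ifs at this ⊢ <;> simp [this]
  E_sum := by
    refine Submodule.linearMap_qext _ (LinearMap.ext fun x => ?_)
    simp only [LinearMap.comp_apply, LinearMap.sum_apply, Submodule.mkQ_apply,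
      Submodule.mapQ_apply, Module.End.one_apply]
    conv_rhs => rw [← R.E_sum_apply x]
    exact (map_sum p.mkQ _ _).symm
  E_a b := Submodule.linearMap_qext _ (LinearMap.ext fun x => by simp [R.E_a_apply])
  a_E b := Submodule.linearMap_qext _ (LinearMap.ext fun x => by simp [R.a_E_apply])
  z_E b := Submodule.linearMap_qext _ (LinearMap.ext fun x => by simp [R.z_E_apply])
  z_a b := Submodule.linearMap_qext _ (LinearMap.ext fun x => by simp [R.z_a_apply])
  mesh := by
    refine Submodule.linearMap_qext _ (LinearMap.ext fun x => ?_)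
    have h := congrArg p.mkQ (R.mesh_apply x)
    rw [R.param_apply] at h
    simp only [map_sum, map_smul] at h
    simpa [-Fintype.sum_sum_type] using h

lemma Realization.isIntertwining_mkQ (R : Realization v (Module.End k X)) {p : Submodule k X}
    (hp : R.IsInvariant p) : IsIntertwining R (R.quotient hp) p.mkQ :=
  ⟨fun _ _ => rfl, fun _ _ => rfl, fun _ => rfl⟩

lemma ArrowFamily.exists_pre_mkQ_range {u : ArrowFamily k Q Y Z} {p : X →ₗ[k] Y}
    (hu : u.pre p = 0) :
    ∃ u' : ArrowFamily k Q (Y ⧸ LinearMap.range p) Z, u'.pre (LinearMap.range p).mkQ = u := by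
  have hfst (b) : LinearMap.range p ≤ LinearMap.ker (u.1 b) := by
    rintro _ ⟨x, rfl⟩
    exact LinearMap.congr_fun (congrFun (congrArg Prod.fst hu) b) x
  have hsnd : LinearMap.range p ≤ LinearMap.ker u.2 := by
    rintro _ ⟨x, rfl⟩
    exact LinearMap.congr_fun (congrArg Prod.snd hu) x
  exact ⟨(fun b => (LinearMap.range p).liftQ (u.1 b) (hfst b), (LinearMap.range p).liftQ u.2 hsnd),
    rfl⟩

variable [FiniteDimensional k (QHAlg k Q v)]

/-- By duality the obstruction to descending `d₁ g` along `p` pairs `g` with coboundaries `d₁ ∘ d₀`,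
hence vanishes. -/
lemma exists_d₁_pre_eq [FiniteDimensional k X] [FiniteDimensional k Y] {p : X →ₗ[k] Y}
    (hp : IsIntertwining R R' p) (hsurj : Function.Surjective p)
    {g : ArrowFamily k Q X (QHAlg k Q v)} (hg : IsCompatible R (regular v) g)
    {u : ArrowFamily k Q Y (QHAlg k Q v)} (hu : u.pre p = d₁ R (regular v) g) :
    ∃ g', IsCompatible R' (regular v) g' ∧ (d₁ R' (regular v) g').pre p = d₁ R (regular v) g := by
  have hcompat : IsCompatible R' (regular v) u := by
    have h := hu ▸ hg.d₁
    refine ⟨fun b y => ?_, fun b y => ?_, fun i y => ?_⟩ <;> obtain ⟨x, rfl⟩ := hsurj y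
    · exact h.1 b x
    · exact (congrArg (u.1 b) (hp.E _ x)).trans (h.2.1 b x)
    · exact (h.2.2 i x).trans (congrArg u.2 (hp.E i x)).symm
  obtain ⟨g', hg', hg'u⟩ := exists_d₁_of_orthogonal hcompat fun F hF => by
    obtain ⟨σ, hσ⟩ := p.exists_rightInverse_of_surjective (LinearMap.range_eq_top.2 hsurj)
    have hlift : p ∘ₗ vertexProj (regular v) R (σ ∘ₗ F) = F := by
      rw [comp_vertexProj hp.E, ← LinearMap.comp_assoc, hσ, LinearMap.id_comp, hF.vertexProj_eq]
    rw [← hlift, d₀_post (R' := R) _ hp, tracePairing_post, hu, tracePairing_d₁_comm hg,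
      d₁_d₀ (isVertexLinear_vertexProj _ _ _), tracePairing_zero_right]
  exact ⟨g', hg', by rw [hg'u, hu]⟩

lemma exists_d₀_of_d₁_eq_zero_of_injective {ι : X →ₗ[k] QHAlg k Q v}
    (hι : IsIntertwining R (regular v) ι) (hinj : Function.Injective ι)
    {g : ArrowFamily k Q X (QHAlg k Q v)} (hg : IsCompatible R (regular v) g)
    (hd : d₁ R (regular v) g = 0) :
    ∃ F, IsVertexLinear R (regular v) F ∧ d₀ R (regular v) F = g := by
  obtain ⟨ρ, hρ⟩ := ι.exists_leftInverse_of_injective (LinearMap.ker_eq_bot.2 hinj)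
  have hretract : vertexProj (regular v) R ρ ∘ₗ ι = LinearMap.id := by
    rw [vertexProj_comp hι.E, hρ, IsVertexLinear.vertexProj_eq fun _ _ => rfl]
  have hgΦ := hg.pre (isVertexLinear_vertexProj (regular v) R ρ)
  set Φ := vertexProj (regular v) R ρ
  have hpre : (g.pre Φ).pre ι = g := by
    refine ArrowFamily.ext_apply (fun b x => ?_) fun x => ?_
    · exact congrArg (g.1 b) (LinearMap.congr_fun hretract x)
    · exact congrArg g.2 (LinearMap.congr_fun hretract x)
  have hkill : (d₁ (regular v) (regular v) (g.pre Φ)).pre ι = 0 := by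
    rw [← d₁_pre (R'' := regular v) _ hι, hpre, hd]
  have hπ := (regular v).isIntertwining_mkQ hι.isInvariant_range
  have hπι : (LinearMap.range ι).mkQ ∘ₗ ι = 0 := LinearMap.range_mkQ_comp ι
  set π := (LinearMap.range ι).mkQ
  obtain ⟨u, hu⟩ := ArrowFamily.exists_pre_mkQ_range hkill
  obtain ⟨g', hg', hg'd⟩ := exists_d₁_pre_eq hπ (Submodule.mkQ_surjective _) hgΦ hu
  obtain ⟨F, hF, hFg⟩ := exists_d₀_of_d₁_eq_zero (hgΦ.sub (hg'.pre hπ.E)) <| by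
    refine (LinearMap.map_sub (d₁ (regular v) (regular v)) _ _).trans ?_
    rw [d₁_pre g' hπ, hg'd, sub_self]
  have hzero : (g'.pre π).pre ι = 0 := by
    refine ArrowFamily.ext_apply (fun b x => ?_) fun x => ?_
    · exact (congrArg (g'.1 b) (LinearMap.congr_fun hπι x)).trans (map_zero _)
    · exact (congrArg g'.2 (LinearMap.congr_fun hπι x)).trans (map_zero _)
  refine ⟨F ∘ₗ ι, hF.comp hι.E, ?_⟩
  rw [d₀_pre F hι, hFg, ArrowFamily.pre_sub, hpre, hzero]
  exact sub_zero g

end Functoriality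

/-! ## The total complex -/

section Simple

variable (v) in
/-- The direct sum of the vertex simple representations. -/
noncomputable def simples : Realization v (Module.End k (Fin Q.r → k)) where
  E i := LinearMap.single k (fun _ => k) i ∘ₗ LinearMap.proj i
  a _ := 0
  z := 0
  E_mul i j := by
    refine LinearMap.ext fun x => funext fun l => ?_
    by_cases h : i = j
    · subst h; simp
    · simp [h, Pi.single_apply]
  E_sum := by
    refine LinearMap.ext fun x => funext fun l => ?_
    simp
  E_a _ := by simp
  a_E _ := by simp
  z_E _ := by simp
  z_a _ := by simp
  mesh := by simp

lemma simples_E (i : Fin Q.r) (s : Fin Q.r → k) : (simples v).E i s = Pi.single i (s i) := rfl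
@[simp] lemma simples_a (b : DoubleArrow Q) (s : Fin Q.r → k) : (simples v).a b s = 0 := rfl
@[simp] lemma simples_z (s : Fin Q.r → k) : (simples v).z s = 0 := rfl

variable (k v) in
/-- The middle terms of the complex `Λ → Tot → Tot → Λ`, where `Λ = ᵛΛ(Q)`. A component indexed by
an arrow `b` is meant to lie in `E b.src * Λ`, see `IsVertexSupported`. -/
abbrev Tot : Type := (DoubleArrow Q → QHAlg k Q v) × QHAlg k Q v

/-- The first differential of the total complex. -/
noncomputable def δ₀ : QHAlg k Q v →ₗ[k] Tot k v where
  toFun f := (fun b => (taut v).a b * f, (taut v).z * f)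
  map_add' f g := by ext <;> simp [mul_add]
  map_smul' c f := by ext <;> simp

/-- The second differential of the total complex. -/
noncomputable def δ₁ : Tot k v →ₗ[k] Tot k v where
  toFun x := (fun b => (taut v).z * x.1 b - (taut v).a b * x.2,
    (taut v).param * x.2 - ∑ b, b.sign k • ((taut v).a b * x.1 b.rev))
  map_add' x y := by
    refine Prod.ext (funext fun b => ?_) ?_
    · simp only [Prod.fst_add, Pi.add_apply, Prod.snd_add, mul_add]; abel
    · simp only [Prod.fst_add, Pi.add_apply, Prod.snd_add, mul_add, smul_add,
        Finset.sum_add_distrib]; abel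
  map_smul' c x := by
    refine Prod.ext (funext fun b => ?_) ?_
    · simp [smul_sub]
    · simp [smul_sub, Finset.smul_sum, smul_comm c, -Fintype.sum_sum_type]

/-- The third differential of the total complex. -/
noncomputable def δ₂ : Tot k v →ₗ[k] QHAlg k Q v where
  toFun u := (taut v).z * u.2 + ∑ b, b.sign k • ((taut v).a b * u.1 b.rev)
  map_add' x y := by
    simp only [Prod.fst_add, Pi.add_apply, Prod.snd_add, mul_add, smul_add,
        Finset.sum_add_distrib]; abel
  map_smul' c x := by
    simp [smul_add, Finset.smul_sum, smul_comm c, -Fintype.sum_sum_type]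

@[simp] lemma δ₀_fst (f : QHAlg k Q v) (b : DoubleArrow Q) : (δ₀ f).1 b = (taut v).a b * f := rfl
@[simp] lemma δ₀_snd (f : QHAlg k Q v) : (δ₀ f).2 = (taut v).z * f := rfl
@[simp] lemma δ₁_fst (x : Tot k v) (b : DoubleArrow Q) :
    (δ₁ x).1 b = (taut v).z * x.1 b - (taut v).a b * x.2 := rfl
@[simp] lemma δ₁_snd (x : Tot k v) :
    (δ₁ x).2 = (taut v).param * x.2 - ∑ b, b.sign k • ((taut v).a b * x.1 b.rev) := rfl
lemma δ₂_apply (u : Tot k v) :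
    δ₂ u = (taut v).z * u.2 + ∑ b, b.sign k • ((taut v).a b * u.1 b.rev) := rfl

lemma mesh_mul (x : QHAlg k Q v) :
    ∑ b, b.sign k • ((taut v).a b * ((taut v).a b.rev * x)) =
      (taut v).param * ((taut v).z * x) := by
  rw [← mul_assoc, ← (taut v).mesh_eq_param_mul_z, Finset.sum_mul]
  exact Finset.sum_congr rfl fun b _ => by rw [smul_mul_assoc, mul_assoc]

lemma δ₁_δ₀ (f : QHAlg k Q v) : δ₁ (δ₀ f) = 0 := by
  refine Prod.ext (funext fun b => ?_) ?_
  · simp [← mul_assoc, (taut v).z_a]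
  · simp only [δ₁_snd, δ₀_snd, δ₀_fst, mesh_mul, sub_self, Prod.snd_zero]

lemma δ₂_δ₁ (x : Tot k v) : δ₂ (δ₁ x) = 0 := by
  have hz (b) : (taut v).z * ((taut v).a b * x.1 b.rev) =
      (taut v).a b * ((taut v).z * x.1 b.rev) := by
    rw [← mul_assoc, (taut v).z_a, mul_assoc]
  simp only [δ₂_apply, δ₁_snd, δ₁_fst, mul_sub, smul_sub, Finset.sum_sub_distrib, mesh_mul,
    Finset.mul_sum, mul_smul_comm, hz]
  rw [← mul_assoc, (taut v).z_mul_param, mul_assoc]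
  abel

/-- The condition cutting out the actual middle terms of the total complex inside `Tot`. -/
def IsVertexSupported (x : Tot k v) : Prop := ∀ b, (taut v).E b.src * x.1 b = x.1 b

/-- The arrow family from the vertex simples to `Λ` with the given values at the basis vectors. It
identifies the supported elements of `Tot` with the compatible families, see `toFamily_ofFamily`. -/
noncomputable def toFamily (x : Tot k v) : ArrowFamily k Q (Fin Q.r → k) (QHAlg k Q v) :=
  (fun b => (LinearMap.proj b.tgt).smulRight (x.1 b),
    ∑ i, (LinearMap.proj i).smulRight ((taut v).E i * x.2))

/-- The values at the basis vectors of an arrow family from the vertex simples to `Λ`; this is the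
inverse of `toFamily`. -/
noncomputable def ofFamily (g : ArrowFamily k Q (Fin Q.r → k) (QHAlg k Q v)) : Tot k v :=
  (fun b => g.1 b (Pi.single b.tgt 1), g.2 1)

@[simp] lemma toFamily_fst (x : Tot k v) (b : DoubleArrow Q) (s : Fin Q.r → k) :
    (toFamily x).1 b s = s b.tgt • x.1 b := rfl

@[simp] lemma toFamily_snd (x : Tot k v) (s : Fin Q.r → k) :
    (toFamily x).2 s = ∑ i, s i • ((taut v).E i * x.2) := by simp [toFamily]

lemma ofFamily_toFamily (x : Tot k v) : ofFamily (toFamily x) = x := by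
  refine Prod.ext (funext fun b => ?_) ?_
  · simp [ofFamily]
  · simp [ofFamily, ← Finset.sum_mul, (taut v).E_sum]

lemma IsVertexSupported.isCompatible_toFamily {x : Tot k v} (hx : IsVertexSupported x) :
    IsCompatible (simples v) (regular v) (toFamily x) := by
  refine ⟨fun b s => ?_, fun b s => ?_, fun i s => ?_⟩
  · simp [hx b]
  · simp [simples_E]
  · simp [simples_E, ← mul_assoc, (taut v).E_mul, Pi.single_apply, ite_smul]

section OfFamily

variable {g : ArrowFamily k Q (Fin Q.r → k) (QHAlg k Q v)}
  (hg : IsCompatible (simples v) (regular v) g)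
include hg

lemma IsCompatible.E_mul_snd_one (i : Fin Q.r) :
    (taut v).E i * g.2 1 = g.2 (Pi.single i 1) := by
  simpa [simples_E] using hg.2.2 i 1

lemma IsCompatible.fst_apply_eq_smul (b : DoubleArrow Q) (s : Fin Q.r → k) :
    g.1 b s = s b.tgt • g.1 b (Pi.single b.tgt 1) := by
  rw [← hg.2.1, simples_E, ← map_smul, ← Pi.single_smul]; simp

lemma IsCompatible.isVertexSupported_ofFamily : IsVertexSupported (ofFamily g) :=
  fun b => hg.1 b _

lemma toFamily_ofFamily : toFamily (ofFamily g) = g := by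
  refine ArrowFamily.ext_apply (fun b s => ?_) fun s => ?_
  · rw [toFamily_fst, hg.fst_apply_eq_smul]; rfl
  · have hsnd : (ofFamily g).2 = g.2 1 := rfl
    simp only [toFamily_snd, hsnd, hg.E_mul_snd_one, ← map_smul, ← map_sum]
    congr 1
    ext i
    simp [Pi.single_apply]

lemma ofFamily_d₁ : ofFamily (d₁ (simples v) (regular v) g) = δ₁ (ofFamily g) := by
  refine Prod.ext (funext fun b => ?_) ?_
  · simp only [ofFamily, d₁_fst, δ₁_fst, simples_a, simples_z, map_zero, regular_a, regular_z]
    rw [← hg.E_mul_snd_one, ← mul_assoc, (taut v).a_E]; simp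
  · simp only [ofFamily, d₁_snd, δ₁_snd, simples_a, map_zero, regular_a, regular_param, zero_add]
    congr 1
    refine Finset.sum_congr rfl fun b _ => ?_
    rw [hg.fst_apply_eq_smul]; simp

end OfFamily

lemma ofFamily_d₀ {F : (Fin Q.r → k) →ₗ[k] QHAlg k Q v}
    (hF : IsVertexLinear (simples v) (regular v) F) :
    ofFamily (d₀ (simples v) (regular v) F) = δ₀ (F 1) := by
  have hsingle (i) : F (Pi.single i 1) = (taut v).E i * F 1 := (hF i 1).symm
  refine Prod.ext (funext fun b => ?_) ?_
  · simp only [ofFamily, d₀_fst, simples_a, map_zero, sub_zero, δ₀_fst, regular_a, hsingle]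
    rw [← mul_assoc, (taut v).a_E]
  · simp [ofFamily]

/-- The pairing of a compatible family with a coboundary `d₀ F` is, up to sign, the value of a
linear form on `δ₂`. -/
lemma tracePairing_d₀_toFamily {F : QHAlg k Q v →ₗ[k] (Fin Q.r → k)}
    (hF : IsVertexLinear (regular v) (simples v) F) (u : Tot k v) :
    tracePairing (d₀ (regular v) (simples v) F) (toFamily u) = -∑ i, F (δ₂ u) i := by
  set φ : QHAlg k Q v →ₗ[k] k := (∑ i, LinearMap.proj i) ∘ₗ F with hφ
  have hφ_apply (y) : ∑ i, F y i = φ y := by simp [hφ]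
  have hF_apply (y) (i) : F y i = φ ((taut v).E i * y) := by
    have := hF i y
    rw [regular_E] at this
    simp [hφ, ← this, simples_E]
  have hfst (b) : (d₀ (regular v) (simples v) F).1 b ∘ₗ (toFamily u).1 b.rev =
      (LinearMap.proj b.src).smulRight (-F ((taut v).a b * u.1 b.rev)) := by
    ext; simp
  have hsnd : (d₀ (regular v) (simples v) F).2 ∘ₗ (toFamily u).2 =
      ∑ i, (LinearMap.proj i).smulRight (-F ((taut v).z * ((taut v).E i * u.2))) := by
    refine LinearMap.ext fun s => ?_
    simp
  have hEz (i) : (taut v).E i * ((taut v).z * ((taut v).E i * u.2)) =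
      (taut v).z * ((taut v).E i * u.2) := by
    rw [← mul_assoc, ← (taut v).z_E, mul_assoc, ← mul_assoc ((taut v).E i), (taut v).E_mul_self]
  have hEa (b) : (taut v).E b.src * ((taut v).a b * u.1 b.rev) =
      (taut v).a b * u.1 b.rev := by rw [← mul_assoc, (taut v).E_a]
  have hsum : ∑ i, φ ((taut v).z * ((taut v).E i * u.2)) = φ ((taut v).z * u.2) := by
    rw [← map_sum, ← Finset.mul_sum, ← Finset.sum_mul, (taut v).E_sum, one_mul]
  rw [hφ_apply]
  simp only [tracePairing, hfst, hsnd, map_sum, LinearMap.trace_smulRight, LinearMap.proj_apply,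
    Pi.neg_apply, hF_apply, hEz, hEa, mul_neg, Finset.sum_neg_distrib, hsum, δ₂_apply, map_add,
    map_smul, smul_eq_mul]
  ring

variable [FiniteDimensional k (QHAlg k Q v)]

lemma exists_δ₁_eq {u : Tot k v} (hu : IsVertexSupported u) (h : δ₂ u = 0) :
    ∃ x, IsVertexSupported x ∧ δ₁ x = u := by
  obtain ⟨g, hg, hgu⟩ := exists_d₁_of_orthogonal hu.isCompatible_toFamily fun F hF => by
    simp [tracePairing_d₀_toFamily hF, h]
  exact ⟨ofFamily g, hg.isVertexSupported_ofFamily,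
    by rw [← ofFamily_d₁ hg, hgu, ofFamily_toFamily]⟩

/-- Nonzero socle elements at all vertices embed the vertex simples into `Λ`. -/
lemma exists_δ₀_eq {w : Fin Q.r → QHAlg k Q v} (hE : ∀ i, (taut v).E i * w i = w i)
    (ha : ∀ b i, (taut v).a b * w i = 0) (hz : ∀ i, (taut v).z * w i = 0) (hw : ∀ i, w i ≠ 0)
    {x : Tot k v} (hx : IsVertexSupported x) (h : δ₁ x = 0) : ∃ f, δ₀ f = x := by
  let ι : (Fin Q.r → k) →ₗ[k] QHAlg k Q v := Fintype.linearCombination k w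
  have hι (s) : ι s = ∑ i, s i • w i := Fintype.linearCombination_apply k w s
  have hEw (i j) : (taut v).E i * w j = if i = j then w i else 0 := by
    rw [← hE j, ← mul_assoc, (taut v).E_mul]
    split_ifs with h
    · subst h; exact hE i
    · simp
  have hEι (i s) : (taut v).E i * ι s = s i • w i := by simp [hι, Finset.mul_sum, hEw]
  have hιH : IsIntertwining (simples v) (regular v) ι := by
    refine ⟨fun i s => ?_, fun b s => ?_, fun s => ?_⟩
    · simp [hι, hEw, simples_E, Pi.single_apply, ite_smul]
    · simp [hι, ha]
    · simp [hι, hz]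
  have hinj : Function.Injective ι := (injective_iff_map_eq_zero _).2 fun s hs => funext fun i =>
    (smul_eq_zero.1 (by rw [← hEι, hs, mul_zero])).resolve_right (hw i)
  have hcompat := hx.isCompatible_toFamily
  have hcocycle : d₁ (simples v) (regular v) (toFamily x) = 0 := by
    rw [← toFamily_ofFamily hcompat.d₁, ofFamily_d₁ hcompat, ofFamily_toFamily, h]
    refine ArrowFamily.ext_apply (fun b s => ?_) fun s => ?_ <;> simp
  obtain ⟨F, hF, hFx⟩ := exists_d₀_of_d₁_eq_zero_of_injective hιH hinj hcompat hcocycle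
  exact ⟨F 1, by rw [← ofFamily_d₀ hF, hFx, ofFamily_toFamily]⟩

end Simple

section Finrank

variable {K M M' : Type*} [Field K] [AddCommGroup M] [Module K M] [FiniteDimensional K M]
  [AddCommGroup M'] [Module K M']

lemma finrank_map_add_finrank_inf_ker (f : M →ₗ[K] M') (U : Submodule K M) :
    Module.finrank K (U.map f) + Module.finrank K (U ⊓ LinearMap.ker f : Submodule K M) =
      Module.finrank K U := by
  rw [← LinearMap.finrank_range_add_finrank_ker (f.domRestrict U), LinearMap.range_domRestrict]
  congr 1
  rw [LinearMap.ker_domRestrict, ← LinearMap.finrank_range_of_inj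
    (f := U.subtype ∘ₗ (Submodule.comap U.subtype (LinearMap.ker f)).subtype)
    (U.subtype_injective.comp (Submodule.subtype_injective _)), LinearMap.range_comp,
    Submodule.range_subtype, Submodule.map_comap_subtype]

lemma finrank_prod_submodule [FiniteDimensional K M'] (U : Submodule K M) (U' : Submodule K M') :
    Module.finrank K (U.prod U') = Module.finrank K U + Module.finrank K U' := by
  rw [← Module.finrank_prod]
  exact LinearEquiv.finrank_eq
    { toFun := fun x => (⟨x.1.1, x.2.1⟩, ⟨x.1.2, x.2.2⟩)
      invFun := fun x => ⟨(x.1.1, x.2.1), x.1.2, x.2.2⟩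
      map_add' := fun _ _ => rfl
      map_smul' := fun _ _ => rfl }

lemma finrank_pi_submodule {ι : Type*} [Fintype ι] (U : ι → Submodule K M) :
    Module.finrank K (Submodule.pi Set.univ U) = ∑ b, Module.finrank K (U b) := by
  rw [← Module.finrank_pi_fintype]
  exact LinearEquiv.finrank_eq
    { toFun := fun x b => ⟨x.1 b, x.2 b trivial⟩
      invFun := fun x => ⟨fun b => (x b).1, fun b _ => (x b).2⟩
      map_add' := fun _ _ => rfl
      map_smul' := fun _ _ => rfl }

end Finrank

section Augmentation

variable (k v) in
/-- The realization defining the augmentation `Λ → k^r`, under which the arrows and `z` act as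
zero. -/
noncomputable def augmentation : Realization v (Fin Q.r → k) where
  E i := Pi.single i 1
  a _ := 0
  z := 0
  E_mul i j := by
    ext l; simp only [Pi.mul_apply, Pi.single_apply]; split_ifs <;> simp_all
  E_sum := by ext l; simp [Finset.sum_apply, Pi.single_apply]
  E_a _ := by simp
  a_E _ := by simp
  z_E _ := by simp
  z_a _ := by simp
  mesh := by simp

lemma lift_augmentation_δ₂ (u : Tot k v) : (augmentation k v).lift (δ₂ u) = 0 := by
  simp only [δ₂_apply, map_add, map_mul, map_sum, map_smul, Realization.lift_z,
    Realization.lift_a]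
  simp [augmentation]

lemma lift_augmentation_E (i : Fin Q.r) :
    (augmentation k v).lift ((taut v).E i) = Pi.single i 1 := by
  rw [Realization.lift_E]; rfl

lemma taut_E_ne_zero (i : Fin Q.r) : (taut v).E i ≠ 0 := by
  intro h
  have := congrFun (lift_augmentation_E (k := k) (v := v) i) i
  rw [h, map_zero] at this
  simp at this

lemma exists_E_mul_eq_δ₂_add (i : Fin Q.r) {u : Tot k v} (hu : IsVertexSupported u)
    (c : Fin Q.r → k) : ∃ u', IsVertexSupported u' ∧
      (taut v).E i * (δ₂ u + ∑ j, c j • (taut v).E j) = δ₂ u' + c i • (taut v).E i := by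
  refine ⟨(fun b => if b.tgt = i then u.1 b else 0, (taut v).E i * u.2), fun b => ?_, ?_⟩
  · dsimp only; split_ifs <;> simp [hu b]
  · rw [mul_add]
    congr 1
    · simp only [δ₂_apply, mul_add, Finset.mul_sum, mul_smul_comm]
      congr 1
      · rw [← mul_assoc, ← mul_assoc, (taut v).z_E]
      · refine Finset.sum_congr rfl fun b _ => ?_
        rw [← mul_assoc, (taut v).E_mul_a, DoubleArrow.tgt_rev]
        split_ifs <;> simp
    · simp [Finset.mul_sum, (taut v).E_mul, smul_ite]

lemma exists_a_mul_eq_δ₂ (b : DoubleArrow Q) (x : QHAlg k Q v) :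
    ∃ u, IsVertexSupported u ∧ (taut v).a b * x = δ₂ u := by
  classical
  refine ⟨(Pi.single b.rev (b.sign k • ((taut v).E b.tgt * x)), 0), fun b' => ?_, ?_⟩
  · by_cases h : b' = b.rev
    · subst h; simp [← mul_assoc, (taut v).E_mul_self]
    · simp [h]
  · rw [δ₂_apply, Finset.sum_eq_single b]
    · simp [smul_smul, ← mul_assoc, (taut v).a_E]
    · intro b' _ hb'
      have : b'.rev ≠ b.rev := fun h => hb' (DoubleArrow.rev_rev b ▸ h ▸ (b'.rev_rev).symm)
      simp [this]
    · simp

/-- The kernel of the augmentation is generated by the arrows and `z` as a left ideal. -/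
lemma exists_eq_δ₂_add (x : QHAlg k Q v) :
    ∃ u, IsVertexSupported u ∧ x = δ₂ u + ∑ i, (augmentation k v).lift x i • (taut v).E i := by
  induction x using mul_left_induction with
  | one => exact ⟨0, fun b => by simp, by simp [(taut v).E_sum]⟩
  | add x y hx hy =>
    obtain ⟨u, hu, hx⟩ := hx
    obtain ⟨u', hu', hy⟩ := hy
    refine ⟨u + u', fun b => by simp [mul_add, hu b, hu' b], ?_⟩
    conv_lhs => rw [hx, hy]
    simp only [map_add, Pi.add_apply, add_smul, Finset.sum_add_distrib]
    abel
  | smul c x hx =>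
    obtain ⟨u, hu, hx⟩ := hx
    refine ⟨c • u, fun b => by simp [hu b], ?_⟩
    conv_lhs => rw [hx]
    simp [Finset.smul_sum, mul_smul]
  | E_mul i x hx =>
    obtain ⟨u, hu, hx⟩ := hx
    obtain ⟨u', hu', h⟩ := exists_E_mul_eq_δ₂_add i hu ((augmentation k v).lift x)
    refine ⟨u', hu', ?_⟩
    conv_lhs => rw [hx, h]
    simp only [map_mul, lift_augmentation_E]
    simp [Pi.single_apply]
  | a_mul b x _ =>
    obtain ⟨u, hu, h⟩ := exists_a_mul_eq_δ₂ b x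
    exact ⟨u, hu, by rw [map_mul, Realization.lift_a, h]; simp [augmentation]⟩
  | z_mul x _ =>
    refine ⟨(0, x), fun b => by simp, ?_⟩
    rw [map_mul, Realization.lift_z, δ₂_apply]
    simp [augmentation]

end Augmentation

namespace Grading

variable (W : Grading Q)

variable (v) in
/-- The degree `n` part of the Peirce corner `E i * Λ * E j`. -/
def corner (n : ℤ) (i j : Fin Q.r) : Submodule k (QHAlg k Q v) where
  carrier := {x | W.component v n x = x ∧ (taut v).E i * x = x ∧ x * (taut v).E j = x}
  add_mem' := by
    rintro x y ⟨h1, h2, h3⟩ ⟨h4, h5, h6⟩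
    exact ⟨by rw [map_add, h1, h4], by rw [mul_add, h2, h5], by rw [add_mul, h3, h6]⟩
  zero_mem' := by simp
  smul_mem' := by
    rintro c x ⟨h1, h2, h3⟩
    exact ⟨by rw [map_smul, h1], by rw [mul_smul_comm, h2], by rw [smul_mul_assoc, h3]⟩

variable (v) in
/-- The projection of `Λ` onto `W.corner v n i j`. -/
noncomputable def cornerProj (n : ℤ) (i j : Fin Q.r) : QHAlg k Q v →ₗ[k] QHAlg k Q v :=
  LinearMap.mulLeft k ((taut v).E i) ∘ₗ LinearMap.mulRight k ((taut v).E j) ∘ₗ W.component v n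

lemma cornerProj_apply (n : ℤ) (i j : Fin Q.r) (x : QHAlg k Q v) :
    W.cornerProj v n i j x = (taut v).E i * (W.component v n x * (taut v).E j) := rfl

lemma cornerProj_mem (n : ℤ) (i j : Fin Q.r) (x : QHAlg k Q v) :
    W.cornerProj v n i j x ∈ W.corner v n i j := by
  refine ⟨?_, ?_, ?_⟩
  · rw [cornerProj_apply, component_E_mul, component_mul_E, component_component, if_pos rfl]
  · rw [cornerProj_apply, ← mul_assoc, (taut v).E_mul_self]
  · rw [cornerProj_apply, mul_assoc, mul_assoc, (taut v).E_mul_self]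

lemma cornerProj_of_mem {n : ℤ} {i j : Fin Q.r} {x : QHAlg k Q v} (hx : x ∈ W.corner v n i j) :
    W.cornerProj v n i j x = x := by
  rw [cornerProj_apply, hx.1, hx.2.2, hx.2.1]

lemma cornerProj_a_mul (n : ℤ) (b : DoubleArrow Q) (j : Fin Q.r) (x : QHAlg k Q v) :
    W.cornerProj v (n + W.weight b) b.src j ((taut v).a b * x) =
      (taut v).a b * W.cornerProj v n b.tgt j x := by
  rw [cornerProj_apply, cornerProj_apply, component_a_mul, mul_assoc, ← mul_assoc, (taut v).E_a,
    ← mul_assoc _ ((taut v).E _),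
    (taut v).a_E]

lemma cornerProj_a_mul_of_ne (n : ℤ) {b : DoubleArrow Q} {i : Fin Q.r} (h : b.src ≠ i) (j : Fin Q.r)
    (x : QHAlg k Q v) : W.cornerProj v n i j ((taut v).a b * x) = 0 := by
  rw [cornerProj_apply, ← mul_assoc, ← component_E_mul, ← mul_assoc, (taut v).E_mul_a,
    if_neg h]
  simp

lemma a_mul_cornerProj_of_ne (n : ℤ) {b : DoubleArrow Q} {i : Fin Q.r} (h : b.tgt ≠ i) (j : Fin Q.r)
    (x : QHAlg k Q v) : (taut v).a b * W.cornerProj v n i j x = 0 := by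
  rw [cornerProj_apply, ← mul_assoc, (taut v).a_mul_E, if_neg h, zero_mul]

lemma cornerProj_z_mul (n : ℤ) (i j : Fin Q.r) (x : QHAlg k Q v) :
    W.cornerProj v (n + W.zWeight) i j ((taut v).z * x) = (taut v).z * W.cornerProj v n i j x := by
  rw [cornerProj_apply, cornerProj_apply, component_z_mul, mul_assoc, ← mul_assoc,
    ← (taut v).z_E, mul_assoc]

lemma component_param_mul (n : ℤ) (x : QHAlg k Q v) :
    W.component v n ((taut v).param * x) = (taut v).param * W.component v n x := by
  simp [Realization.param, Finset.sum_mul, component_E_mul]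

lemma cornerProj_param_mul (n : ℤ) (i j : Fin Q.r) (x : QHAlg k Q v) :
    W.cornerProj v n i j ((taut v).param * x) = (taut v).param * W.cornerProj v n i j x := by
  rw [cornerProj_apply, cornerProj_apply, component_param_mul, ← mul_assoc (taut v).param,
    (taut v).param_mul_E, mul_assoc,
    ← mul_assoc ((taut v).E i), (taut v).E_mul_param]

lemma cornerProj_E (n : ℤ) (i j l : Fin Q.r) :
    W.cornerProj v n i j ((taut v).E l) = if n = 0 ∧ i = j ∧ i = l then (taut v).E i else 0 := by
  rw [cornerProj_apply, component_E]
  by_cases h : n = 0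
  · by_cases h' : i = l
    · subst h'
      by_cases h'' : i = j <;> simp [h, h'', (taut v).E_mul]
    · rw [← mul_assoc, if_pos h, (taut v).E_mul_of_ne h']
      simp [h']
  · simp [h]

/-- The projection of `Tot` onto `W.totPiece v n m i j`. -/
noncomputable def totProj (n m : ℤ) (i j : Fin Q.r) (x : Tot k v) : Tot k v :=
  (fun b => if b.tgt = i then W.cornerProj v (n + W.weight b) b.src j (x.1 b) else 0,
    W.cornerProj v m i j x.2)

variable (v) in
/-- The elements of `Tot` on which the total complex restricts to the paths from `i` to `j`: the
component at an arrow `b` is nonzero only if `b.tgt = i` and then has degree `n + W.weight b`, the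
last component has degree `m`. The differentials raise `n` and `m` alternately by `W.zWeight`. -/
noncomputable def totPiece (n m : ℤ) (i j : Fin Q.r) : Submodule k (Tot k v) :=
  (Submodule.pi Set.univ fun b =>
    if b.tgt = i then W.corner v (n + W.weight b) b.src j else ⊥).prod (W.corner v m i j)

lemma totProj_mem (n m : ℤ) (i j : Fin Q.r) (x : Tot k v) :
    W.totProj n m i j x ∈ W.totPiece v n m i j := by
  refine ⟨fun b _ => ?_, W.cornerProj_mem _ _ _ _⟩
  dsimp only [totProj]
  split_ifs
  · exact W.cornerProj_mem _ _ _ _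
  · exact zero_mem _

lemma totProj_of_mem {n m : ℤ} {i j : Fin Q.r} {x : Tot k v} (hx : x ∈ W.totPiece v n m i j) :
    W.totProj n m i j x = x := by
  refine Prod.ext (funext fun b => ?_) (W.cornerProj_of_mem hx.2)
  have := hx.1 b trivial
  dsimp only [totProj]
  dsimp only at this
  split_ifs at this ⊢
  · exact W.cornerProj_of_mem this
  · simpa using this.symm

lemma isVertexSupported_of_mem {n m : ℤ} {i j : Fin Q.r} {x : Tot k v}
    (hx : x ∈ W.totPiece v n m i j) : IsVertexSupported x := by
  intro b
  have := hx.1 b trivial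
  dsimp only at this
  split_ifs at this
  · exact this.2.1
  · simp [(Submodule.mem_bot k).1 this]

lemma δ₀_cornerProj (n : ℤ) (i j : Fin Q.r) (x : QHAlg k Q v) :
    δ₀ (W.cornerProj v n i j x) = W.totProj n (n + W.zWeight) i j (δ₀ x) := by
  refine Prod.ext (funext fun b => ?_) (W.cornerProj_z_mul _ _ _ _).symm
  dsimp only [totProj, δ₀_fst]
  split_ifs with h
  · subst h; exact (W.cornerProj_a_mul _ _ _ _).symm
  · exact W.a_mul_cornerProj_of_ne _ h _ _

lemma δ₁_totProj (n : ℤ) (i j : Fin Q.r) (x : Tot k v) :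
    δ₁ (W.totProj n (n + W.zWeight) i j x) =
      W.totProj (n + W.zWeight) (n + W.zWeight) i j (δ₁ x) := by
  refine Prod.ext (funext fun b => ?_) ?_
  · dsimp only [totProj, δ₁_fst]
    split_ifs with h
    · subst h; rw [map_sub, cornerProj_a_mul, add_right_comm, cornerProj_z_mul]
    · rw [a_mul_cornerProj_of_ne _ _ h]; simp
  · simp only [totProj, δ₁_snd, map_sub, cornerProj_param_mul, map_sum, map_smul]
    congr 1
    refine Finset.sum_congr rfl fun b _ => ?_
    rw [DoubleArrow.tgt_rev, DoubleArrow.src_rev]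
    split_ifs with h
    · subst h
      rw [← cornerProj_a_mul, add_assoc, add_comm (W.weight _), W.weight_add_rev]
    · rw [W.cornerProj_a_mul_of_ne _ h]; simp

lemma cornerProj_δ₂ (n : ℤ) (i j : Fin Q.r) (x : Tot k v) :
    W.cornerProj v (n + W.zWeight) i j (δ₂ x) = δ₂ (W.totProj n n i j x) := by
  simp only [totProj, δ₂_apply, map_add, cornerProj_z_mul, map_sum, map_smul]
  congr 1
  refine Finset.sum_congr rfl fun b _ => ?_
  rw [DoubleArrow.tgt_rev, DoubleArrow.src_rev]
  split_ifs with h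
  · subst h
    rw [← cornerProj_a_mul, add_assoc, add_comm (W.weight _), W.weight_add_rev]
  · rw [W.cornerProj_a_mul_of_ne _ h]; simp

variable (v) in
/-- The degree `n` part of the socle of `Λ` as a left module, in the corner of `i` and `j`. -/
noncomputable def socle (n : ℤ) (i j : Fin Q.r) : Submodule k (QHAlg k Q v) :=
  W.corner v n i j ⊓ LinearMap.ker δ₀

variable (v) in
/-- The matrix-valued Hilbert function of `Λ`. -/
noncomputable def hilb (n : ℤ) (i j : Fin Q.r) : ℕ := Module.finrank k (W.corner v n i j)

variable (v) in
/-- The matrix-valued Hilbert function of the socle of `Λ`. -/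
noncomputable def socleHilb (n : ℤ) (i j : Fin Q.r) : ℕ := Module.finrank k (W.socle v n i j)


lemma map_δ₂_le (n : ℤ) (i j : Fin Q.r) :
    (W.totPiece v n n i j).map δ₂ ≤ W.corner v (n + W.zWeight) i j := by
  rintro _ ⟨u, hu, rfl⟩
  rw [← W.totProj_of_mem hu, ← cornerProj_δ₂]
  exact W.cornerProj_mem _ _ _ _

lemma exists_eq_δ₂_add_of_mem_corner {n : ℤ} {i j : Fin Q.r} {x : QHAlg k Q v}
    (hx : x ∈ W.corner v (n + W.zWeight) i j) : ∃ u ∈ W.totPiece v n n i j, x = δ₂ u +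
      ∑ l, (augmentation k v).lift x l •
        if n + W.zWeight = 0 ∧ i = j ∧ i = l then (taut v).E i else 0 := by
  obtain ⟨u, -, hxu⟩ := exists_eq_δ₂_add x
  refine ⟨W.totProj n n i j u, W.totProj_mem _ _ _ _ _, ?_⟩
  conv_lhs => rw [← W.cornerProj_of_mem hx, hxu, map_add, cornerProj_δ₂, map_sum]
  simp only [map_smul, cornerProj_E]

lemma map_δ₂_sup_span (n : ℤ) (i : Fin Q.r) (hn : n + W.zWeight = 0) :
    (W.totPiece v n n i i).map δ₂ ⊔ Submodule.span k {(taut v).E i} =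
      W.corner v (n + W.zWeight) i i := by
  have hE : (taut v).E i ∈ W.corner v (n + W.zWeight) i i :=
    ⟨by simp [hn, component_E], (taut v).E_mul_self i, (taut v).E_mul_self i⟩
  refine le_antisymm
    (sup_le (W.map_δ₂_le n i i) ((Submodule.span_singleton_le_iff_mem _ _).2 hE)) fun x hx => ?_
  obtain ⟨u, hu, hxu⟩ := W.exists_eq_δ₂_add_of_mem_corner hx
  rw [hxu]
  refine Submodule.add_mem_sup ⟨u, hu, rfl⟩
    (Submodule.sum_mem _ fun l _ => Submodule.smul_mem _ _ ?_)
  split_ifs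
  · exact Submodule.mem_span_singleton_self _
  · exact zero_mem _

lemma map_δ₂_inf_span (n : ℤ) (i : Fin Q.r) :
    (W.totPiece v n n i i).map δ₂ ⊓ Submodule.span k {(taut v).E i} = ⊥ := by
  rw [eq_bot_iff]
  rintro _ ⟨⟨u, -, rfl⟩, hu⟩
  obtain ⟨c, hc⟩ := Submodule.mem_span_singleton.1 hu
  have haug := congrFun (congrArg (augmentation k v).lift hc) i
  rw [lift_augmentation_δ₂, map_smul, lift_augmentation_E] at haug
  have hc0 : c = 0 := by simpa using haug
  rw [Submodule.mem_bot, ← hc, hc0, zero_smul]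

variable [FiniteDimensional k (QHAlg k Q v)]

lemma finrank_totPiece (n m : ℤ) (i j : Fin Q.r) : Module.finrank k (W.totPiece v n m i j) =
    (∑ b, if b.tgt = i then W.hilb v (n + W.weight b) b.src j else 0) + W.hilb v m i j := by
  rw [totPiece, finrank_prod_submodule, finrank_pi_submodule, hilb]
  congr 1
  refine Finset.sum_congr rfl fun b _ => ?_
  by_cases h : b.tgt = i
  · rw [if_pos h, if_pos h, hilb]
  · rw [if_neg h, if_neg h, finrank_bot]

lemma finrank_map_δ₂ (n : ℤ) (i j : Fin Q.r) :
    Module.finrank k ((W.totPiece v n n i j).map δ₂) +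
      (if n + W.zWeight = 0 ∧ i = j then 1 else 0) = W.hilb v (n + W.zWeight) i j := by
  split_ifs with h
  · obtain ⟨hn, rfl⟩ := h
    have hdim := Submodule.finrank_sup_add_finrank_inf_eq ((W.totPiece v n n i i).map δ₂)
      (Submodule.span k {(taut v).E i})
    rw [W.map_δ₂_sup_span n i hn, map_δ₂_inf_span, finrank_bot,
      finrank_span_singleton (taut_E_ne_zero i)] at hdim
    rw [hilb, ← hdim, add_zero]
  · rw [add_zero, hilb]
    refine congrArg (fun U : Submodule k (QHAlg k Q v) => Module.finrank k U)
      (le_antisymm (W.map_δ₂_le n i j) fun x hx => ?_)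
    obtain ⟨u, hu, hxu⟩ := W.exists_eq_δ₂_add_of_mem_corner hx
    refine ⟨u, hu, ?_⟩
    rw [hxu, Finset.sum_eq_zero, add_zero]
    intro l _
    rw [if_neg fun h' => h ⟨h'.1, h'.2.1⟩, smul_zero]

lemma map_δ₁ (n : ℤ) (i j : Fin Q.r) : (W.totPiece v n (n + W.zWeight) i j).map δ₁ =
    W.totPiece v (n + W.zWeight) (n + W.zWeight) i j ⊓ LinearMap.ker δ₂ := by
  refine le_antisymm ?_ ?_
  · rintro _ ⟨x, hx, rfl⟩
    refine ⟨?_, δ₂_δ₁ x⟩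
    rw [← W.totProj_of_mem hx, δ₁_totProj]
    exact W.totProj_mem _ _ _ _ _
  · rintro u ⟨hu, hu2⟩
    obtain ⟨x, -, rfl⟩ := exists_δ₁_eq (W.isVertexSupported_of_mem hu) hu2
    exact ⟨_, W.totProj_mem _ _ _ _ x, by rw [δ₁_totProj, W.totProj_of_mem hu]⟩

omit [FiniteDimensional k (QHAlg k Q v)] in
lemma map_δ₀_le (n : ℤ) (i j : Fin Q.r) : (W.corner v n i j).map δ₀ ≤
    W.totPiece v n (n + W.zWeight) i j ⊓ LinearMap.ker δ₁ := by
  rintro _ ⟨x, hx, rfl⟩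
  refine ⟨?_, δ₁_δ₀ x⟩
  rw [← W.cornerProj_of_mem hx, δ₀_cornerProj]
  exact W.totProj_mem _ _ _ _ _

lemma hilb_add_finrank_ker_δ₁ (n : ℤ) (i j : Fin Q.r) :
    W.hilb v n i j +
      (∑ b, if b.tgt = i then W.hilb v (n + W.zWeight + W.weight b) b.src j else 0) +
      (if n + W.zWeight + W.zWeight = 0 ∧ i = j then 1 else 0) +
      Module.finrank k
        (W.totPiece v n (n + W.zWeight) i j ⊓ LinearMap.ker δ₁ : Submodule k (Tot k v)) =
    W.socleHilb v n i j + (∑ b, if b.tgt = i then W.hilb v (n + W.weight b) b.src j else 0) +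
      W.hilb v (n + W.zWeight + W.zWeight) i j + Module.finrank k ((W.corner v n i j).map δ₀) := by
  have hδ₀ := finrank_map_add_finrank_inf_ker δ₀ (W.corner v n i j)
  have hδ₁ := finrank_map_add_finrank_inf_ker δ₁ (W.totPiece v n (n + W.zWeight) i j)
  have hδ₂ := finrank_map_add_finrank_inf_ker δ₂ (W.totPiece v (n + W.zWeight) (n + W.zWeight) i j)
  have hmap := W.finrank_map_δ₂ (v := v) (n + W.zWeight) i j
  rw [finrank_totPiece, W.map_δ₁] at hδ₁
  rw [finrank_totPiece] at hδ₂
  rw [socleHilb, socle]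
  change _ = W.hilb v n i j at hδ₀
  omega

/-- The grading concentrated in degree `0`. -/
def trivial (Q : FinQuiver) : Grading Q := ⟨0, 0, by simp, by simp, le_rfl⟩

/-- In the trivial grading the Euler characteristic gives `dim socle ≥ 1` at every vertex. -/
lemma exists_mem_socle_trivial_ne_zero (i : Fin Q.r) :
    ∃ w : QHAlg k Q v, w ∈ (trivial Q).socle v 0 i i ∧ w ≠ 0 := by
  have hchar := (trivial Q).hilb_add_finrank_ker_δ₁ (v := v) 0 i i
  have hle := Submodule.finrank_mono ((trivial Q).map_δ₀_le (v := v) 0 i i)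
  have hpos : 1 ≤ (trivial Q).socleHilb v 0 i i := by
    simp only [trivial, add_zero, Pi.zero_apply, and_self, if_true] at hchar hle ⊢
    omega
  refine (Submodule.ne_bot_iff _).1 fun h => ?_
  rw [Grading.socleHilb, h, finrank_bot] at hpos
  omega

end Grading

section FiniteDimensional

variable [FiniteDimensional k (QHAlg k Q v)]

lemma exists_δ₀_eq_of_δ₁_eq_zero {x : Tot k v} (hx : IsVertexSupported x) (h : δ₁ x = 0) :
    ∃ f, δ₀ f = x := by
  choose w hw hw0 using Grading.exists_mem_socle_trivial_ne_zero (k := k) (v := v)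
  refine exists_δ₀_eq (fun i => (hw i).1.2.1) (fun b i => ?_) (fun i => ?_) hw0 hx h
  · exact congrFun (congrArg Prod.fst (hw i).2) b
  · exact congrArg Prod.snd (hw i).2

namespace Grading

variable (W : Grading Q)

lemma map_δ₀ (n : ℤ) (i j : Fin Q.r) :
    (W.corner v n i j).map δ₀ = W.totPiece v n (n + W.zWeight) i j ⊓ LinearMap.ker δ₁ := by
  refine le_antisymm (W.map_δ₀_le n i j) ?_
  rintro u ⟨hu, hu2⟩
  obtain ⟨x, rfl⟩ := exists_δ₀_eq_of_δ₁_eq_zero (W.isVertexSupported_of_mem hu) hu2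
  exact ⟨_, W.cornerProj_mem _ _ _ x, by rw [δ₀_cornerProj, W.totProj_of_mem hu]⟩

lemma euler_characteristic (n : ℤ) (i j : Fin Q.r) :
    W.hilb v n i j +
      (∑ b, if b.tgt = i then W.hilb v (n + W.zWeight + W.weight b) b.src j else 0) +
      (if n + W.zWeight + W.zWeight = 0 ∧ i = j then 1 else 0) =
    W.socleHilb v n i j + (∑ b, if b.tgt = i then W.hilb v (n + W.weight b) b.src j else 0) +
      W.hilb v (n + W.zWeight + W.zWeight) i j := by
  have := W.hilb_add_finrank_ker_δ₁ (v := v) n i j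
  rw [W.map_δ₀] at this
  omega

end Grading

end FiniteDimensional

/-! ## Finite dimensionality modulo `z` -/

section PeirceCorner

variable {K M : Type*} [Field K] [AddCommGroup M] [Module K M]

/-- The Peirce corner `P (End M) P'`, consisting of the maps fixed by left multiplication by `P`
and by right multiplication by `P'`. It is only used for idempotents `P` and `P'`. -/
def peirceCorner (P P' : Module.End K M) : Submodule K (Module.End K M) where
  carrier := {g | P * g = g ∧ g * P' = g}
  add_mem' := by
    rintro x y ⟨hPx, hxP'⟩ ⟨hPy, hyP'⟩
    exact ⟨by rw [mul_add, hPx, hPy], by rw [add_mul, hxP', hyP']⟩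
  zero_mem' := by simp
  smul_mem' := by
    rintro c x ⟨hPx, hxP'⟩
    exact ⟨by rw [mul_smul_comm, hPx], by rw [smul_mul_assoc, hxP']⟩

lemma finrank_peirceCorner [FiniteDimensional K M] {P P' : Module.End K M} (hP : P * P = P)
    (hP' : P' * P' = P') : Module.finrank K (peirceCorner P P') =
      Module.finrank K (LinearMap.range P) * Module.finrank K (LinearMap.range P') := by
  rw [mul_comm, ← Module.finrank_linearMap]
  refine LinearEquiv.finrank_eq
    { toFun := fun g => (g.1.domRestrict (LinearMap.range P')).codRestrict (LinearMap.range P)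
        fun x => ⟨g.1 x, LinearMap.congr_fun g.2.1 x⟩
      invFun := fun h => ⟨(LinearMap.range P).subtype ∘ₗ h ∘ₗ P'.rangeRestrict, ?_, ?_⟩
      map_add' := fun _ _ => rfl
      map_smul' := fun _ _ => rfl
      left_inv := ?_
      right_inv := ?_ }
  · ext x
    obtain ⟨y, hy⟩ := (h (P'.rangeRestrict x)).2
    change P (h (P'.rangeRestrict x)).1 = (h (P'.rangeRestrict x)).1
    rw [← hy]
    exact LinearMap.congr_fun hP y
  · ext x
    change (h (P'.rangeRestrict (P' x))).1 = (h (P'.rangeRestrict x)).1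
    congr 2
    exact Subtype.ext (LinearMap.congr_fun hP' x)
  · intro g
    ext x
    exact LinearMap.congr_fun g.2.2 x
  · intro h
    ext ⟨x, y, rfl⟩
    change (h (P'.rangeRestrict (P' y))).1 = (h _).1
    congr 2
    exact Subtype.ext (LinearMap.congr_fun hP' y)

end PeirceCorner

section TitsForm

variable {X : Type*} [AddCommGroup X] [Module k X]

lemma sum_sign_mul_trace_commutator {a : DoubleArrow Q → Module.End k X}
    (ha : ∑ b, b.sign k • (a b * a b.rev) = 0) (F G : Module.End k X) :
    ∑ b, b.sign k * LinearMap.trace k X ((a b * F - F * a b) * (a b.rev * G - G * a b.rev)) =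
      0 := by
  have expand (b : DoubleArrow Q) :
      LinearMap.trace k X ((a b * F - F * a b) * (a b.rev * G - G * a b.rev)) =
        (LinearMap.trace k X (F * (a b.rev * G * a b)) +
          LinearMap.trace k X (F * (a b * G * a b.rev))) -
        (LinearMap.trace k X (F * G * (a b.rev * a b)) +
          LinearMap.trace k X (F * (a b * a b.rev) * G)) := by
    have cyclic₁ := LinearMap.trace_mul_comm k (a b) (F * (a b.rev * G))
    have cyclic₂ := LinearMap.trace_mul_comm k (a b) (F * (G * a b.rev))
    simp only [sub_mul, mul_sub, map_sub, mul_assoc] at cyclic₁ cyclic₂ ⊢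
    rw [cyclic₁, cyclic₂]
    ring
  have swap : ∑ b : DoubleArrow Q, b.sign k * LinearMap.trace k X (F * (a b.rev * G * a b)) =
      - ∑ b : DoubleArrow Q, b.sign k * LinearMap.trace k X (F * (a b * G * a b.rev)) := by
    rw [← DoubleArrow.sum_rev, ← Finset.sum_neg_distrib]
    simp
  have mesh : ∑ b : DoubleArrow Q,
      b.sign k * LinearMap.trace k X (F * (a b * a b.rev) * G) = 0 := by
    have := congrArg (fun x => LinearMap.trace k X (F * x * G)) ha
    simpa [Finset.mul_sum, Finset.sum_mul, -Fintype.sum_sum_type] using this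
  have mesh_rev : ∑ b : DoubleArrow Q,
      b.sign k * LinearMap.trace k X (F * G * (a b.rev * a b)) = 0 := by
    have := congrArg (fun x => LinearMap.trace k X (F * G * x)) ha
    rw [← DoubleArrow.sum_rev] at this
    simpa [Finset.mul_sum, Finset.sum_mul, -Fintype.sum_sum_type] using this
  simp only [expand]
  simp only [mul_sub, mul_add, Finset.sum_sub_distrib, Finset.sum_add_distrib]
  rw [swap, mesh, mesh_rev]
  ring

namespace Realization

variable (R : Realization v (Module.End k X))

/-- The dimension vector of a representation. -/
noncomputable def dim (i : Fin Q.r) : ℕ := Module.finrank k (LinearMap.range (R.E i))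

lemma sum_dim [FiniteDimensional k X] : ∑ i, R.dim i = Module.finrank k X := by
  simp only [dim]
  rw [← Module.finrank_pi_fintype]
  refine (LinearEquiv.finrank_eq
    { toFun := fun x i => (R.E i).rangeRestrict x
      invFun := fun f => ∑ i, (f i).1
      map_add' := fun _ _ => by ext; simp
      map_smul' := fun _ _ => by ext; simp
      left_inv := fun x => R.E_sum_apply x
      right_inv := fun f => ?_ }).symm
  ext i
  have hf (j) : R.E i (f j).1 = if i = j then (f j).1 else 0 := by
    obtain ⟨y, hy⟩ := (f j).2
    rw [← hy, R.E_E_apply]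
    split_ifs with h
    · rw [h]
    · rfl
  change R.E i (∑ j, (f j).1) = _
  rw [map_sum]
  simp [hf]

/-- The Lie algebra `∏ᵢ End (Xᵢ)` of the group acting on the representation space, realised by
block diagonal endomorphisms of `X`. -/
def gradedEnd : Submodule k (Fin Q.r → Module.End k X) :=
  Submodule.pi Set.univ fun i => peirceCorner (R.E i) (R.E i)

/-- The space of representations of the double quiver on the vector spaces of `R`. -/
def repSpace : Submodule k (DoubleArrow Q → Module.End k X) :=
  Submodule.pi Set.univ fun b => peirceCorner (R.E b.src) (R.E b.tgt)

lemma finrank_gradedEnd [FiniteDimensional k X] :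
    Module.finrank k R.gradedEnd = ∑ i, R.dim i * R.dim i := by
  rw [gradedEnd, finrank_pi_submodule]
  exact Finset.sum_congr rfl fun i _ => finrank_peirceCorner (R.E_mul_self i) (R.E_mul_self i)

lemma finrank_repSpace [FiniteDimensional k X] :
    Module.finrank k R.repSpace = 2 * ∑ e, R.dim (Q.src e) * R.dim (Q.tgt e) := by
  rw [repSpace, finrank_pi_submodule]
  simp only [fun b : DoubleArrow Q =>
    finrank_peirceCorner (R.E_mul_self b.src) (R.E_mul_self b.tgt)]
  rw [Fintype.sum_sum_type, two_mul]
  congr 1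
  exact Finset.sum_congr rfl fun e _ => mul_comm _ _

variable {R} in
lemma E_mul_sum_gradedEnd (f : R.gradedEnd) (i : Fin Q.r) : R.E i * ∑ j, f.1 j = f.1 i := by
  rw [Finset.mul_sum, Finset.sum_eq_single i]
  · exact (f.2 i trivial).1
  · intro j _ hj
    rw [← (f.2 j trivial).1, ← mul_assoc, R.E_mul_of_ne hj.symm, zero_mul]
  · simp

variable {R} in
lemma sum_gradedEnd_mul_E (f : R.gradedEnd) (i : Fin Q.r) : (∑ j, f.1 j) * R.E i = f.1 i := by
  rw [Finset.sum_mul, Finset.sum_eq_single i]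
  · exact (f.2 i trivial).2
  · intro j _ hj
    rw [← (f.2 j trivial).2, mul_assoc, R.E_mul_of_ne hj, mul_zero]
  · simp

variable {R} in
lemma E_mul_sum_gradedEnd_mul_a (f : R.gradedEnd) (b : DoubleArrow Q) :
    R.E b.src * ((∑ j, f.1 j) * R.a b) = (∑ j, f.1 j) * R.a b := by
  rw [← mul_assoc, E_mul_sum_gradedEnd, ← sum_gradedEnd_mul_E f b.src, mul_assoc, R.E_a]

variable {R} in
lemma a_mul_sum_gradedEnd_mul_E (f : R.gradedEnd) (b : DoubleArrow Q) :
    R.a b * (∑ j, f.1 j) * R.E b.tgt = R.a b * ∑ j, f.1 j := by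
  rw [mul_assoc, sum_gradedEnd_mul_E, ← E_mul_sum_gradedEnd f b.tgt, ← mul_assoc, R.a_E]

/-- The differential at `R` of the action of the graded automorphisms of `X` on the representation
space. -/
def infinitesimalAction : R.gradedEnd →ₗ[k] R.repSpace where
  toFun f := ⟨fun b => R.a b * (∑ i, f.1 i) - (∑ i, f.1 i) * R.a b, fun b _ => by
    constructor
    · rw [mul_sub, ← mul_assoc, R.E_a, E_mul_sum_gradedEnd_mul_a]
    · rw [sub_mul, mul_assoc _ (R.a b), R.a_E, a_mul_sum_gradedEnd_mul_E]⟩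
  map_add' f g := by
    refine Subtype.ext (funext fun b => ?_)
    simp [mul_add, add_mul, Finset.sum_add_distrib]
    abel
  map_smul' c f := by
    refine Subtype.ext (funext fun b => ?_)
    simp [smul_sub, ← Finset.smul_sum]

/-- The symplectic form on the representation space of the double quiver. -/
noncomputable def symplecticForm : LinearMap.BilinForm k R.repSpace :=
  LinearMap.mk₂ k (fun g g' => ∑ b, b.sign k * LinearMap.trace k X (g.1 b * g'.1 b.rev))
    (fun g₁ g₂ g' => by simp [add_mul, mul_add, Finset.sum_add_distrib, -Fintype.sum_sum_type])
    (fun c g g' => by simp [Finset.mul_sum, mul_left_comm, -Fintype.sum_sum_type])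
    (fun g₁ g₂ g' => by simp [mul_add, Finset.sum_add_distrib, -Fintype.sum_sum_type])
    (fun c g g' => by simp [Finset.mul_sum, mul_left_comm, -Fintype.sum_sum_type])

lemma symplecticForm_apply (g g' : R.repSpace) : R.symplecticForm g g' =
    ∑ b, b.sign k * LinearMap.trace k X (g.1 b * g'.1 b.rev) := rfl

lemma symplecticForm_swap (g g' : R.repSpace) :
    R.symplecticForm g g' = - R.symplecticForm g' g := by
  rw [symplecticForm_apply, symplecticForm_apply, ← DoubleArrow.sum_rev, ← Finset.sum_neg_distrib]
  refine Finset.sum_congr rfl fun b _ => ?_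
  rw [DoubleArrow.rev_rev, DoubleArrow.sign_rev, LinearMap.trace_mul_comm]
  ring

lemma single_mem_repSpace [DecidableEq (DoubleArrow Q)] (b : DoubleArrow Q) (x : Module.End k X) :
    Pi.single b (R.E b.src * x * R.E b.tgt) ∈ R.repSpace := by
  intro b' _
  by_cases hb : b' = b
  · subst hb
    simp only [Pi.single_eq_same]
    constructor
    · rw [← mul_assoc, ← mul_assoc, R.E_mul_self]
    · rw [mul_assoc, R.E_mul_self]
  · simp only [Pi.single_eq_of_ne hb]
    exact zero_mem _

lemma nondegenerate_symplecticForm [FiniteDimensional k X] : R.symplecticForm.Nondegenerate := by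
  classical
  have eq_zero (g : R.repSpace) (hg : ∀ g', R.symplecticForm g g' = 0) : g = 0 := by
    refine Subtype.ext (funext fun b => eq_zero_of_trace_comp_eq_zero fun x => ?_)
    have h := hg ⟨_, R.single_mem_repSpace b.rev x⟩
    rw [symplecticForm_apply, Finset.sum_eq_single b ?_ (by simp)] at h
    · have htrace := (mul_eq_zero.1 h).resolve_left (DoubleArrow.sign_ne_zero k b)
      simp only [Pi.single_eq_same, DoubleArrow.src_rev, DoubleArrow.tgt_rev] at htrace
      rwa [← mul_assoc (g.1 b), ← mul_assoc (g.1 b), (g.2 b trivial).2,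
        LinearMap.trace_mul_comm k _ (R.E _), ← mul_assoc, (g.2 b trivial).1] at htrace
    · intro b' _ hb'
      have : b'.rev ≠ b.rev := fun h =>
        hb' (by rw [← DoubleArrow.rev_rev b', h, DoubleArrow.rev_rev])
      simp [this]
  refine ⟨eq_zero, fun g hg => eq_zero g fun g' => ?_⟩
  rw [symplecticForm_swap, hg, neg_zero]

variable {R} in
lemma symplecticForm_infinitesimalAction (hz : R.z = 0) (f g : R.gradedEnd) :
    R.symplecticForm (R.infinitesimalAction f) (R.infinitesimalAction g) = 0 :=
  sum_sign_mul_trace_commutator (by rw [R.mesh_eq_param_mul_z, hz, mul_zero]) _ _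

variable {R} in
lemma two_mul_finrank_range_infinitesimalAction_le [FiniteDimensional k X] (hz : R.z = 0) :
    2 * Module.finrank k (LinearMap.range R.infinitesimalAction) ≤
      Module.finrank k R.repSpace := by
  have hisotropic : LinearMap.range R.infinitesimalAction ≤
      R.symplecticForm.orthogonal (LinearMap.range R.infinitesimalAction) := by
    rintro _ ⟨f, rfl⟩ _ ⟨g, rfl⟩
    exact symplecticForm_infinitesimalAction hz g f
  have horthogonal := LinearMap.BilinForm.finrank_orthogonal R.nondegenerate_symplecticForm
    (LinearMap.range R.infinitesimalAction)
  have hle := Submodule.finrank_mono hisotropic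
  have hle' := Submodule.finrank_le (LinearMap.range R.infinitesimalAction)
  omega

variable {R} in
lemma isIntertwining_sum_of_infinitesimalAction_eq_zero (hz : R.z = 0) {f : R.gradedEnd}
    (hf : R.infinitesimalAction f = 0) : IsIntertwining R R (∑ i, f.1 i) where
  E i x := LinearMap.congr_fun ((E_mul_sum_gradedEnd f i).trans (sum_gradedEnd_mul_E f i).symm) x
  a b x := LinearMap.congr_fun (sub_eq_zero.1 (congrFun (congrArg Subtype.val hf) b)) x
  z x := by simp [hz]

variable {R} in
lemma finrank_ker_infinitesimalAction_le [FiniteDimensional k X] (hz : R.z = 0) {x₀ : X}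
    (hx₀ : ∀ f, IsIntertwining R R f → f x₀ = 0 → f = 0) :
    Module.finrank k (LinearMap.ker R.infinitesimalAction) ≤ Module.finrank k X := by
  let eval : R.gradedEnd →ₗ[k] X :=
    { toFun := fun f => (∑ i, f.1 i) x₀
      map_add' := fun f g => by simp [Finset.sum_add_distrib]
      map_smul' := fun c f => by simp [Finset.smul_sum] }
  refine LinearMap.finrank_le_finrank_of_injective (f := eval.domRestrict _)
    ((injective_iff_map_eq_zero _).2 fun f hf => ?_)
  have hsum : ∑ i, f.1.1 i = 0 :=
    hx₀ _ (isIntertwining_sum_of_infinitesimalAction_eq_zero hz f.2) hf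
  refine Subtype.ext (Subtype.ext (funext fun i => ?_))
  rw [← E_mul_sum_gradedEnd, hsum, mul_zero]
  rfl

variable {R} in
/-- The left hand side is the dimension of the space of graded endomorphisms of `X`. Its image in
the representation space is isotropic, hence at most half-dimensional, and the kernel consists of
endomorphisms of the representation. -/
lemma sum_dim_mul_dim_le [FiniteDimensional k X] (hz : R.z = 0) {x₀ : X}
    (hx₀ : ∀ f, IsIntertwining R R f → f x₀ = 0 → f = 0) :
    ∑ i, R.dim i * R.dim i ≤ ∑ e, R.dim (Q.src e) * R.dim (Q.tgt e) + ∑ i, R.dim i := by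
  have hrank := LinearMap.finrank_range_add_finrank_ker R.infinitesimalAction
  have hrange := two_mul_finrank_range_infinitesimalAction_le hz
  have hker := finrank_ker_infinitesimalAction_le hz hx₀
  rw [finrank_repSpace] at hrange
  rw [finrank_gradedEnd] at hrank
  rw [R.sum_dim]
  omega

end Realization

end TitsForm

section Coercivity

lemma exists_mul_norm_sq_le {E : Type*} [NormedAddCommGroup E] [NormedSpace ℝ E] [ProperSpace E]
    {q : E → ℝ} (hcont : Continuous q) (hsmul : ∀ (c : ℝ) x, q (c • x) = c ^ 2 * q x)
    (hpos : ∀ x ≠ 0, 0 < q x) : ∃ ε > 0, ∀ x, ε * ‖x‖ ^ 2 ≤ q x := by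
  have hzero : q 0 = 0 := by simpa using hsmul 0 0
  rcases subsingleton_or_nontrivial E with hE | hE
  · exact ⟨1, one_pos, fun x => by simp [Subsingleton.elim x 0, hzero]⟩
  · obtain ⟨y, hy, hmin⟩ := (isCompact_sphere (0 : E) 1).exists_isMinOn
      (NormedSpace.sphere_nonempty.2 zero_le_one) hcont.continuousOn
    refine ⟨q y, hpos y (ne_zero_of_mem_unit_sphere ⟨y, hy⟩), fun x => ?_⟩
    by_cases hx : x = 0
    · simp [hx, hzero]
    · have hle : q y ≤ q (‖x‖⁻¹ • x) := hmin (by simp [norm_smul, hx])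
      rw [hsmul, inv_pow] at hle
      calc q y * ‖x‖ ^ 2 ≤ (‖x‖ ^ 2)⁻¹ * q x * ‖x‖ ^ 2 := by gcongr
        _ = q x := by field_simp

variable {Q : FinQuiver}

lemma exists_mul_norm_sq_le_titsForm (hD : Q.IsDynkin) :
    ∃ ε > 0, ∀ x : Fin Q.r → ℝ, ε * ‖x‖ ^ 2 ≤ Q.titsForm x := by
  refine exists_mul_norm_sq_le (by unfold FinQuiver.titsForm; fun_prop) (fun c x => ?_) hD
  simp only [FinQuiver.titsForm, Pi.smul_apply, smul_eq_mul, mul_sub, Finset.mul_sum]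
  congr 1 <;> exact Finset.sum_congr rfl fun _ _ => by ring

lemma exists_sum_le_of_sum_mul_self_le (hD : Q.IsDynkin) : ∃ N : ℕ, ∀ x : Fin Q.r → ℕ,
    ∑ i, x i * x i ≤ ∑ e, x (Q.src e) * x (Q.tgt e) + ∑ i, x i → ∑ i, x i ≤ N := by
  obtain ⟨ε, hε, hcoercive⟩ := exists_mul_norm_sq_le_titsForm hD
  refine ⟨⌈Q.r * (Q.r / ε)⌉₊, fun x hx => ?_⟩
  set y : Fin Q.r → ℝ := fun i => x i with hy
  have htits : Q.titsForm y ≤ ∑ i, y i := by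
    have : (∑ i, y i * y i) ≤ ∑ e, y (Q.src e) * y (Q.tgt e) + ∑ i, y i := by
      simp only [hy]; exact_mod_cast hx
    simp only [FinQuiver.titsForm, pow_two]
    linarith
  have hsum : ∑ i, y i ≤ Q.r * ‖y‖ :=
    calc ∑ i, y i ≤ ∑ _i : Fin Q.r, ‖y‖ :=
          Finset.sum_le_sum fun i _ => (le_abs_self _).trans (norm_le_pi_norm y i)
      _ = Q.r * ‖y‖ := by simp
  have hnorm : ‖y‖ ≤ Q.r / ε := by
    rw [le_div_iff₀ hε]
    have hy' := hcoercive y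
    rcases (norm_nonneg y).eq_or_lt with h0 | hpos
    · simp [← h0]
    · nlinarith
  have hbound : ((∑ i, x i : ℕ) : ℝ) ≤ Q.r * (Q.r / ε) := by
    push_cast
    exact hsum.trans (by gcongr)
  exact_mod_cast hbound.trans (Nat.le_ceil _)

end Coercivity

lemma Grading.component_sub_sum_component (W : Grading Q) (n : ℕ) (x : QHAlg k Q v) {m : ℤ}
    (hm : m < n) : W.component v m (x - ∑ l : Fin n, W.component v (l : ℕ) x) = 0 := by
  rcases lt_or_ge m 0 with h | h
  · exact W.component_of_neg h _
  · lift m to ℕ using h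
    rw [map_sub, map_sum, Finset.sum_eq_single ⟨m, by exact_mod_cast hm⟩]
    · simp [component_component]
    · intro l _ hl
      rw [component_component, if_neg]
      intro h
      exact hl (Fin.ext (by exact_mod_cast h.symm))
    · simp

/-- The grading with the arrows in degree `1` and `z` in degree `2`. -/
def Grading.standard (Q : FinQuiver) : Grading Q :=
  ⟨fun _ => 1, 2, fun _ => rfl, fun _ => by norm_num, by norm_num⟩

section Truncation

local notation "gr" => Grading.component v (Grading.standard Q)

lemma standard_component_a_mul (b : DoubleArrow Q) (n : ℤ) (x : QHAlg k Q v) :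
    gr n ((taut v).a b * x) = (taut v).a b * gr (n - 1) x := by
  have := (Grading.standard Q).component_a_mul b (n - 1) x
  rwa [show (n - 1) + (Grading.standard Q).weight b = n from sub_add_cancel _ _] at this

lemma standard_component_z_mul (n : ℤ) (x : QHAlg k Q v) :
    gr n ((taut v).z * x) = (taut v).z * gr (n - 2) x := by
  have := (Grading.standard Q).component_z_mul (n - 2) x
  rwa [show (n - 2) + (Grading.standard Q).zWeight = n from sub_add_cancel _ _] at this

lemma standard_component_δ₂ (n : ℤ) (u : Tot k v) :
    gr n (δ₂ u) = δ₂ (fun b => gr (n - 1) (u.1 b), gr (n - 2) u.2) := by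
  simp [δ₂_apply, standard_component_z_mul, standard_component_a_mul, -Fintype.sum_sum_type]

lemma finiteDimensional_range_component (n : ℤ) :
    FiniteDimensional k (LinearMap.range (gr n)) := by
  suffices h : ∀ (N : ℕ) (n : ℤ), n < N → FiniteDimensional k (LinearMap.range (gr n)) from
    h (n.toNat + 1) n (by have := Int.self_le_toNat n; omega)
  intro N
  induction N with
  | zero =>
    intro n hn
    have : gr n = 0 := LinearMap.ext fun x => Grading.component_of_neg _ (by exact_mod_cast hn) x
    rw [this, LinearMap.range_zero]
    infer_instance
  | succ N ih =>
    intro n hn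
    push_cast at hn
    have := ih (n - 1) (by omega)
    have := ih (n - 2) (by omega)
    let f : ((DoubleArrow Q → LinearMap.range (gr (n - 1))) × LinearMap.range (gr (n - 2))) ×
        (Fin Q.r → k) →ₗ[k] QHAlg k Q v :=
      { toFun := fun x => δ₂ (fun b => (x.1.1 b).1, x.1.2.1) + ∑ i, x.2 i • (taut v).E i
        map_add' := fun x y => by
          simp [δ₂_apply, mul_add, add_smul, Finset.sum_add_distrib, -Fintype.sum_sum_type]
          abel
        map_smul' := fun c x => by
          simp [δ₂_apply, Finset.smul_sum, smul_smul, mul_comm, -Fintype.sum_sum_type] }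
    refine Submodule.finiteDimensional_of_le (S₂ := LinearMap.range f) ?_
    rintro _ ⟨x, rfl⟩
    obtain ⟨u, -, hx⟩ := exists_eq_δ₂_add x
    refine ⟨((fun b => ⟨_, u.1 b, rfl⟩, ⟨_, u.2, rfl⟩),
      fun i => if n = 0 then (augmentation k v).lift x i else 0), ?_⟩
    conv_rhs => rw [hx, map_add, standard_component_δ₂, map_sum]
    refine congrArg (δ₂ _ + ·) (Finset.sum_congr rfl fun i _ => ?_)
    rw [map_smul, Grading.component_E]
    split_ifs <;> simp

variable (k v) in
/-- The two-sided ideal of `ᵛΛ(Q)` generated by the central element `z`, as a subspace. -/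
noncomputable def zIdeal : Submodule k (QHAlg k Q v) :=
  LinearMap.range (LinearMap.mulLeft k (taut v).z)

lemma z_mul_mem_zIdeal (x : QHAlg k Q v) : (taut v).z * x ∈ zIdeal k v := ⟨x, rfl⟩

lemma a_mul_mem_zIdeal (b : DoubleArrow Q) {x : QHAlg k Q v} (hx : x ∈ zIdeal k v) :
    (taut v).a b * x ∈ zIdeal k v := by
  obtain ⟨y, rfl⟩ := hx
  exact ⟨(taut v).a b * y, by simp [← mul_assoc, (taut v).z_a]⟩

lemma E_mul_mem_zIdeal (i : Fin Q.r) {x : QHAlg k Q v} (hx : x ∈ zIdeal k v) :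
    (taut v).E i * x ∈ zIdeal k v := by
  obtain ⟨y, rfl⟩ := hx
  exact ⟨(taut v).E i * y, by simp [← mul_assoc, (taut v).z_E]⟩

variable (k v) in
/-- The ideal generated by `z` and the homogeneous elements of degree at least `n`. -/
noncomputable def truncIdeal (n : ℕ) : Submodule k (QHAlg k Q v) where
  carrier := {x | ∀ m : ℤ, m < n → gr m x ∈ zIdeal k v}
  add_mem' hx hy m hm := by rw [map_add]; exact add_mem (hx m hm) (hy m hm)
  zero_mem' m _ := by rw [map_zero]; exact zero_mem _
  smul_mem' c x hx m hm := by rw [map_smul]; exact Submodule.smul_mem _ _ (hx m hm)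

lemma isInvariant_truncIdeal (n : ℕ) : (regular v).IsInvariant (truncIdeal k v n) where
  E i x hx m hm := by
    rw [regular_E, Grading.component_E_mul]
    exact E_mul_mem_zIdeal i (hx m hm)
  a b x hx m hm := by
    rw [regular_a, standard_component_a_mul]
    exact a_mul_mem_zIdeal b (hx _ (by omega))
  z x _ m _ := by
    rw [regular_z, standard_component_z_mul]
    exact z_mul_mem_zIdeal _

variable (k v) in
/-- The sum of the homogeneous components of degree less than `n`. -/
noncomputable def lowDegree (n : ℕ) : Submodule k (QHAlg k Q v) :=
  ⨆ m : Fin n, LinearMap.range (gr (m : ℕ))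

instance (n : ℕ) : FiniteDimensional k (lowDegree k v n) := by
  have (m : Fin n) := finiteDimensional_range_component (v := v) (k := k) (m : ℕ)
  exact Submodule.finiteDimensional_iSup _

lemma sum_component_mem_lowDegree (n : ℕ) (x : QHAlg k Q v) :
    ∑ l : Fin n, gr (l : ℕ) x ∈ lowDegree k v n :=
  Submodule.sum_mem _ fun l _ => Submodule.mem_iSup_of_mem l ⟨x, rfl⟩

instance (n : ℕ) : FiniteDimensional k (QHAlg k Q v ⧸ truncIdeal k v n) := by
  refine Module.Finite.of_surjective ((truncIdeal k v n).mkQ ∘ₗ (lowDegree k v n).subtype)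
    fun y => ?_
  obtain ⟨x, rfl⟩ := (truncIdeal k v n).mkQ_surjective y
  refine ⟨⟨_, sum_component_mem_lowDegree n x⟩,
    ((Submodule.Quotient.eq _).2 fun m hm => ?_).symm⟩
  rw [Submodule.subtype_apply, Grading.component_sub_sum_component _ n x hm]
  exact zero_mem _

variable (k v) in
/-- The representation `Λ / truncIdeal k v n`. -/
noncomputable def truncation (n : ℕ) :
    Realization v (Module.End k (QHAlg k Q v ⧸ truncIdeal k v n)) :=
  (regular v).quotient (isInvariant_truncIdeal n)

lemma truncation_z (n : ℕ) : (truncation k v n).z = 0 := by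
  refine Submodule.linearMap_qext _ (LinearMap.ext fun x => ?_)
  refine (Submodule.Quotient.mk_eq_zero _).2 fun m _ => ?_
  rw [regular_z, standard_component_z_mul]
  exact z_mul_mem_zIdeal _

lemma IsIntertwining.eq_zero_of_apply_mkQ_one {n : ℕ} {f : Module.End k (QHAlg k Q v ⧸
    truncIdeal k v n)} (hf : IsIntertwining (truncation k v n) (truncation k v n) f)
    (h1 : f ((truncIdeal k v n).mkQ 1) = 0) : f = 0 := by
  refine Submodule.linearMap_qext _ (LinearMap.ext fun x => ?_)
  change f ((truncIdeal k v n).mkQ x) = 0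
  induction x using mul_left_induction with
  | one => exact h1
  | add x y hx hy => rw [map_add, map_add, hx, hy, add_zero]
  | smul c x hx => rw [map_smul, map_smul, hx, smul_zero]
  | E_mul i x hx => exact (hf.E i _).symm.trans (by rw [hx, map_zero])
  | a_mul b x hx => exact (hf.a b _).symm.trans (by rw [hx, map_zero])
  | z_mul x hx => exact (hf.z _).symm.trans (by rw [hx, map_zero])

lemma exists_finrank_truncation_le (hD : Q.IsDynkin) : ∃ N : ℕ, ∀ n,
    Module.finrank k (QHAlg k Q v ⧸ truncIdeal k v n) ≤ N := by
  obtain ⟨N, hN⟩ := exists_sum_le_of_sum_mul_self_le hD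
  refine ⟨N, fun n => ?_⟩
  rw [← (truncation k v n).sum_dim]
  exact hN _ (Realization.sum_dim_mul_dim_le (truncation_z n)
    fun f hf hf1 => hf.eq_zero_of_apply_mkQ_one hf1)

lemma finrank_truncation_lt {n : ℕ} {y : QHAlg k Q v} (hy : gr n y ∉ zIdeal k v) :
    Module.finrank k (QHAlg k Q v ⧸ truncIdeal k v n) <
      Module.finrank k (QHAlg k Q v ⧸ truncIdeal k v (n + 1)) := by
  have hle : truncIdeal k v (n + 1) ≤ truncIdeal k v n := fun x hx m hm =>
    hx m (by push_cast; omega)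
  have hrank := LinearMap.finrank_range_add_finrank_ker (Submodule.factor hle)
  rw [LinearMap.range_eq_top.2 (Submodule.factor_surjective hle), finrank_top] at hrank
  suffices hker : Module.finrank k (LinearMap.ker (Submodule.factor hle)) ≠ 0 by omega
  intro hker
  rw [Submodule.finrank_eq_zero] at hker
  have hmem : (truncIdeal k v (n + 1)).mkQ (gr n y) ∈ LinearMap.ker (Submodule.factor hle) := by
    refine (Submodule.Quotient.mk_eq_zero _).2 fun m hm => ?_
    rw [LinearMap.id_apply, Grading.component_component, if_neg hm.ne]
    exact zero_mem _
  rw [hker, Submodule.mem_bot] at hmem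
  have hgr := (Submodule.Quotient.mk_eq_zero _).1 hmem n (by push_cast; omega)
  rw [Grading.component_component, if_pos rfl] at hgr
  exact hy hgr

lemma exists_component_mem_zIdeal (hD : Q.IsDynkin) :
    ∃ n : ℕ, ∀ x : QHAlg k Q v, gr n x ∈ zIdeal k v := by
  by_contra! hne
  obtain ⟨N, hN⟩ := exists_finrank_truncation_le (k := k) (v := v) hD
  have hgrowth (n : ℕ) : n ≤ Module.finrank k (QHAlg k Q v ⧸ truncIdeal k v n) := by
    induction n with
    | zero => exact Nat.zero_le _
    | succ n ih =>
      obtain ⟨y, hy⟩ := hne n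
      exact ih.trans_lt (finrank_truncation_lt hy)
  exact (hN (N + 1)).not_gt (hgrowth (N + 1))

lemma component_mem_zIdeal_of_le {n : ℤ} (hn : 0 ≤ n) (h : ∀ x : QHAlg k Q v, gr n x ∈ zIdeal k v)
    {m : ℤ} (hm : n ≤ m) (x : QHAlg k Q v) : gr m x ∈ zIdeal k v := by
  induction m, hm using Int.leInduction generalizing x with
  | base => exact h x
  | succ m hm ih =>
    obtain ⟨u, -, hx⟩ := exists_eq_δ₂_add x
    rw [hx, map_add, standard_component_δ₂, δ₂_apply, map_sum]
    refine add_mem (add_mem (z_mul_mem_zIdeal _) (Submodule.sum_mem _ fun b _ =>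
      Submodule.smul_mem _ _ (a_mul_mem_zIdeal _ ?_))) (Submodule.sum_mem _ fun i _ => ?_)
    · rw [add_sub_cancel_right]
      exact ih _
    · rw [map_smul, Grading.component_E, if_neg (by omega), smul_zero]
      exact zero_mem _

lemma exists_sub_sum_component_mem_zIdeal (hD : Q.IsDynkin) : ∃ n : ℕ, ∀ x : QHAlg k Q v,
    x - ∑ l : Fin n, gr (l : ℕ) x ∈ zIdeal k v := by
  obtain ⟨n, hn⟩ := exists_component_mem_zIdeal (k := k) (v := v) hD
  refine ⟨n, fun x => ?_⟩
  set y := x - ∑ l : Fin n, gr (l : ℕ) x with hy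
  obtain ⟨s, hs⟩ := (Grading.standard Q).exists_sum_component y
  rw [← hs s subset_rfl]
  refine Submodule.sum_mem _ fun m _ => ?_
  rcases lt_or_ge m n with h | h
  · rw [hy, Grading.component_sub_sum_component _ n x h]
    exact zero_mem _
  · exact component_mem_zIdeal_of_le n.cast_nonneg hn h y

end Truncation

/-! ## Regular parameters and the nilpotency of `z` -/

section Regular

variable {X : Type} [AddCommGroup X] [Module k X] (R : Realization v (Module.End k X))

/-- An idempotent endomorphism of the restriction of a representation of `ᵛΛ(Q)` to `kQ`. Since an
arrow `e` of `Q` maps the vertex space at `src e` to the one at `tgt e`, it is the reversed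
generators `R.a (.inr e)` that define this restriction. -/
structure IsQuiverProjector (p : Module.End k X) : Prop where
  mul_self : p * p = p
  E : ∀ i, R.E i * p = p * R.E i
  a : ∀ e, R.a (.inr e) * p = p * R.a (.inr e)

variable {R} {p : Module.End k X}

namespace IsQuiverProjector

lemma isIdempotentElem_mul_E (hp : IsQuiverProjector R p) (i : Fin Q.r) :
    IsIdempotentElem (p * R.E i) := by
  change p * R.E i * (p * R.E i) = _
  rw [mul_assoc, ← mul_assoc (R.E i), hp.E, mul_assoc, R.E_mul_self, ← mul_assoc, hp.mul_self]

lemma a_mul_mul_E (hp : IsQuiverProjector R p) (e : Q.Arrow) :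
    R.a (.inr e) * (p * R.E (Q.src e)) = p * R.E (Q.tgt e) * R.a (.inr e) := by
  have hsrc : R.E (Q.tgt e) * R.a (.inr e) = R.a (.inr e) := R.E_a (.inr e)
  have htgt : R.a (.inr e) * R.E (Q.src e) = R.a (.inr e) := R.a_E (.inr e)
  rw [← mul_assoc, hp.a, mul_assoc, htgt, mul_assoc, hsrc]

/-- The representation of `Q` on the image of an idempotent. -/
def rep (hp : IsQuiverProjector R p) : QuivRep k Q where
  V i := LinearMap.range (p * R.E i)
  act e := (R.a (.inr e)).restrict (by
    rintro _ ⟨x, rfl⟩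
    exact ⟨R.a (.inr e) x, (LinearMap.congr_fun (hp.a_mul_mul_E e) x).symm⟩)

lemma trace_mul_param [FiniteDimensional k X] (hz : R.z = 1) (hp : IsQuiverProjector R p) :
    LinearMap.trace k X (p * R.param) = 0 := by
  have h := R.mesh_eq_param_mul_z
  rw [hz, mul_one] at h
  rw [← h, Fintype.sum_sum_type]
  simp only [DoubleArrow.sign, DoubleArrow.rev, Sum.elim_inl, Sum.elim_inr, Sum.swap_inl,
    Sum.swap_inr, one_smul, neg_smul, mul_add, Finset.mul_sum, mul_neg, map_add, map_sum, map_neg]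
  rw [← Finset.sum_add_distrib]
  refine Finset.sum_eq_zero fun e _ => ?_
  rw [← mul_assoc p (R.a (.inr e)), ← hp.a, mul_assoc (R.a (.inr e)),
    LinearMap.trace_mul_comm k (R.a (.inr e)), mul_assoc, add_neg_cancel]

lemma sum_mul_finrank_eq_zero [FiniteDimensional k X] (hz : R.z = 1)
    (hp : IsQuiverProjector R p) :
    ∑ i, v i * (Module.finrank k (LinearMap.range (p * R.E i)) : k) = 0 := by
  rw [← hp.trace_mul_param hz, Realization.param, Finset.mul_sum, map_sum]
  refine Finset.sum_congr rfl fun i _ => ?_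
  rw [mul_smul_comm, map_smul, smul_eq_mul,
    ((LinearMap.isProj_range_iff_isIdempotentElem _).2 (hp.isIdempotentElem_mul_E i)).trace]

section Split

variable (hp : IsQuiverProjector R p) (U W : SubQuivRep hp.rep)
  (hUW : ∀ i, IsCompl (U.U i) (W.U i))

/-- The projection of `X` onto the summand `U i` of the vertex space of `hp.rep = U ⊕ W` at `i`. -/
noncomputable def splitProjAt (i : Fin Q.r) : Module.End k X :=
  (LinearMap.range (p * R.E i)).subtype ∘ₗ
    (U.U i).projection (W.U i) (hUW i) ∘ₗ (p * R.E i).rangeRestrict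

/-- The idempotent with image `U` attached to a decomposition `hp.rep = U ⊕ W`. -/
noncomputable def splitProj : Module.End k X := ∑ i, hp.splitProjAt U W hUW i

lemma mul_splitProjAt (i : Fin Q.r) :
    p * R.E i * hp.splitProjAt U W hUW i = hp.splitProjAt U W hUW i := by
  ext x
  obtain ⟨y, hy⟩ := ((U.U i).projection (W.U i) (hUW i) ((p * R.E i).rangeRestrict x)).2
  have hy' : hp.splitProjAt U W hUW i x = (p * R.E i) y := hy.symm
  rw [Module.End.mul_apply, hy', ← Module.End.mul_apply, hp.isIdempotentElem_mul_E i]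

lemma splitProjAt_coe (i : Fin Q.r) (x : LinearMap.range (p * R.E i)) :
    hp.splitProjAt U W hUW i x = ((U.U i).projection (W.U i) (hUW i) x).1 := by
  have hx : (p * R.E i).rangeRestrict x.1 = x := by
    obtain ⟨_, y, rfl⟩ := x
    exact Subtype.ext (LinearMap.congr_fun (hp.isIdempotentElem_mul_E i) y)
  change ((U.U i).projection (W.U i) (hUW i) ((p * R.E i).rangeRestrict x.1)).1 = _
  rw [hx]

lemma E_mul_splitProjAt (i j : Fin Q.r) : R.E i * hp.splitProjAt U W hUW j =
    if i = j then hp.splitProjAt U W hUW j else 0 := by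
  rw [← hp.mul_splitProjAt, ← mul_assoc, ← mul_assoc, hp.E, mul_assoc p, R.E_mul]
  split_ifs with hij
  · rw [hij]
  · rw [mul_zero, zero_mul]

lemma splitProjAt_mul_E (i j : Fin Q.r) : hp.splitProjAt U W hUW j * R.E i =
    if i = j then hp.splitProjAt U W hUW j else 0 := by
  have hE (x : X) : (p * R.E j).rangeRestrict (R.E i x) =
      if i = j then (p * R.E j).rangeRestrict x else 0 := by
    refine Subtype.ext ?_
    change (p * R.E j * R.E i) x = _
    rw [mul_assoc, R.E_mul]
    by_cases hij : i = j
    · rw [if_pos hij, if_pos hij.symm]; rfl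
    · simp [hij, Ne.symm hij]
  ext x
  change ((U.U j).projection (W.U j) (hUW j) ((p * R.E j).rangeRestrict (R.E i x))).1 = _
  rw [hE]
  split_ifs
  · rfl
  · exact congrArg Subtype.val (map_zero ((U.U j).projection (W.U j) (hUW j)))

lemma splitProjAt_mul_self (i : Fin Q.r) :
    hp.splitProjAt U W hUW i * hp.splitProjAt U W hUW i = hp.splitProjAt U W hUW i := by
  ext x
  change hp.splitProjAt U W hUW i ((U.U i).projection (W.U i) (hUW i) _).1 =
    ((U.U i).projection (W.U i) (hUW i) _).1
  refine (hp.splitProjAt_coe U W hUW i _).trans (congrArg Subtype.val ?_)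
  exact Submodule.projection_apply_of_mem_left (hUW i)
    (Submodule.projection_apply_mem (hUW i) _)

lemma act_projection (e : Q.Arrow) (x : hp.rep.V (Q.src e)) :
    hp.rep.act e ((U.U (Q.src e)).projection (W.U (Q.src e)) (hUW (Q.src e)) x) =
      (U.U (Q.tgt e)).projection (W.U (Q.tgt e)) (hUW (Q.tgt e)) (hp.rep.act e x) := by
  set y := (U.U (Q.src e)).projection (W.U (Q.src e)) (hUW (Q.src e)) x with hy
  have hyU : y ∈ U.U (Q.src e) := Submodule.projection_apply_mem (hUW _) x
  have hxy : x - y ∈ W.U (Q.src e) := by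
    refine (Submodule.projection_apply_eq_zero_iff (hUW _)).1 ?_
    rw [map_sub, ← hy, Submodule.projection_apply_of_mem_left (hUW _) hyU, sub_self]
  have hact := (Submodule.projection_apply_eq_zero_iff (hUW (Q.tgt e))).2
    (W.stable e ⟨_, hxy, rfl⟩)
  rw [map_sub, map_sub, Submodule.projection_apply_of_mem_left (hUW _) (U.stable e ⟨_, hyU, rfl⟩),
    sub_eq_zero] at hact
  exact hact.symm

lemma a_mul_splitProjAt (e : Q.Arrow) : R.a (.inr e) * hp.splitProjAt U W hUW (Q.src e) =
    hp.splitProjAt U W hUW (Q.tgt e) * R.a (.inr e) := by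
  ext x
  refine (congrArg Subtype.val
    (hp.act_projection U W hUW e ((p * R.E (Q.src e)).rangeRestrict x))).trans ?_
  change ((U.U (Q.tgt e)).projection (W.U (Q.tgt e)) (hUW (Q.tgt e)) _).1 =
    ((U.U (Q.tgt e)).projection (W.U (Q.tgt e)) (hUW (Q.tgt e)) _).1
  congr 2
  exact Subtype.ext (LinearMap.congr_fun (hp.a_mul_mul_E e) x)

lemma E_mul_splitProj (i : Fin Q.r) :
    R.E i * hp.splitProj U W hUW = hp.splitProjAt U W hUW i := by
  simp [splitProj, Finset.mul_sum, E_mul_splitProjAt]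

lemma splitProj_mul_E (i : Fin Q.r) :
    hp.splitProj U W hUW * R.E i = hp.splitProjAt U W hUW i := by
  simp [splitProj, Finset.sum_mul, splitProjAt_mul_E]

lemma isQuiverProjector_splitProj : IsQuiverProjector R (hp.splitProj U W hUW) where
  mul_self := by
    have h (i) : hp.splitProjAt U W hUW i * hp.splitProj U W hUW = hp.splitProjAt U W hUW i :=
      calc hp.splitProjAt U W hUW i * hp.splitProj U W hUW
          = hp.splitProjAt U W hUW i * R.E i * hp.splitProj U W hUW := by
            rw [splitProjAt_mul_E, if_pos rfl]
        _ = hp.splitProjAt U W hUW i := by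
            rw [mul_assoc, E_mul_splitProj, splitProjAt_mul_self]
    nth_rw 1 [splitProj]
    rw [Finset.sum_mul]
    exact Finset.sum_congr rfl fun i _ => h i
  E i := by rw [hp.E_mul_splitProj, hp.splitProj_mul_E]
  a e := by
    have hsrc : R.E (Q.tgt e) * R.a (.inr e) = R.a (.inr e) := R.E_a (.inr e)
    have htgt : R.a (.inr e) * R.E (Q.src e) = R.a (.inr e) := R.a_E (.inr e)
    conv_lhs => rw [← htgt]
    conv_rhs => rw [← hsrc]
    rw [mul_assoc, hp.E_mul_splitProj, a_mul_splitProjAt, ← mul_assoc, hp.splitProj_mul_E]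

lemma range_splitProj_le :
    LinearMap.range (hp.splitProj U W hUW) ≤ LinearMap.range p := by
  have h : p * hp.splitProj U W hUW = hp.splitProj U W hUW := by
    rw [splitProj, Finset.mul_sum]
    refine Finset.sum_congr rfl fun i _ => ?_
    rw [← hp.mul_splitProjAt, ← mul_assoc, ← mul_assoc, hp.mul_self]
  rintro _ ⟨x, rfl⟩
  exact ⟨hp.splitProj U W hUW x, LinearMap.congr_fun h x⟩

lemma splitProj_coe (i : Fin Q.r) (x : LinearMap.range (p * R.E i)) :
    hp.splitProj U W hUW x = ((U.U i).projection (W.U i) (hUW i) x).1 := by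
  have hx : R.E i x.1 = x.1 := by
    obtain ⟨_, y, rfl⟩ := x
    rw [← Module.End.mul_apply, ← mul_assoc, hp.E, mul_assoc, R.E_mul_self]
  rw [← hp.splitProjAt_coe, ← hp.splitProj_mul_E, Module.End.mul_apply, hx]

end Split

lemma nontrivial_rep (hp : IsQuiverProjector R p) (h0 : p ≠ 0) :
    ∃ i, Nontrivial (hp.rep.V i) := by
  by_contra! hsub
  refine h0 ?_
  rw [← mul_one p, ← R.E_sum, Finset.mul_sum]
  refine Finset.sum_eq_zero fun i _ => LinearMap.ext fun x => ?_
  have := hsub i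
  exact congrArg Subtype.val
    (Subsingleton.elim (α := hp.rep.V i) ((p * R.E i).rangeRestrict x) 0)

lemma indecomposable_rep [FiniteDimensional k X] (hp : IsQuiverProjector R p) (h0 : p ≠ 0)
    (hmin : ∀ q, IsQuiverProjector R q → q ≠ 0 →
      Module.finrank k (LinearMap.range p) ≤ Module.finrank k (LinearMap.range q)) :
    hp.rep.Indecomposable := by
  refine ⟨hp.nontrivial_rep h0, fun U W hUW => ?_⟩
  by_contra! hne
  obtain ⟨⟨i, hi⟩, ⟨j, hj⟩⟩ := hne
  obtain ⟨u, hu, hu0⟩ := (Submodule.ne_bot_iff _).1 hi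
  obtain ⟨w, hw, hw0⟩ := (Submodule.ne_bot_iff _).1 hj
  have hq := hp.isQuiverProjector_splitProj U W hUW
  have hqu := hp.splitProj_coe U W hUW i u
  have hqw := hp.splitProj_coe U W hUW j w
  rw [Submodule.projection_apply_of_mem_left (hUW i) hu] at hqu
  rw [(Submodule.projection_apply_eq_zero_iff (hUW j)).2 hw] at hqw
  have hq0 : hp.splitProj U W hUW ≠ 0 := fun hzero =>
    hu0 (Subtype.ext (by rw [← hqu, hzero]; rfl))
  have hrange := Submodule.eq_of_le_of_finrank_le (hp.range_splitProj_le U W hUW) (hmin _ hq hq0)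
  obtain ⟨y, hy⟩ : w.1 ∈ LinearMap.range (hp.splitProj U W hUW) := by
    rw [hrange]
    obtain ⟨x, hx⟩ := w.2
    exact ⟨R.E j x, hx⟩
  refine hw0 (Subtype.ext ?_)
  calc w.1 = hp.splitProj U W hUW w.1 := by
        rw [← hy, ← Module.End.mul_apply, hq.mul_self]
    _ = 0 := hqw

end IsQuiverProjector

lemma subsingleton_of_z_eq_one [FiniteDimensional k X] (hv : IsRegularParam k Q v)
    (R : Realization v (Module.End k X)) (hz : R.z = 1) : Subsingleton X := by
  classical
  by_contra hX
  rw [not_subsingleton_iff_nontrivial] at hX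
  have hex : ∃ n p, IsQuiverProjector R p ∧ p ≠ 0 ∧
      Module.finrank k (LinearMap.range p) = n :=
    ⟨_, 1, ⟨by simp, by simp, by simp⟩, one_ne_zero, rfl⟩
  obtain ⟨p, hp, hp0, hpn⟩ := Nat.find_spec hex
  refine hv hp.rep (fun i => ?_) (hp.indecomposable_rep hp0 fun q hq hq0 => ?_)
    (hp.sum_mul_finrank_eq_zero hz)
  · change FiniteDimensional k (LinearMap.range (p * R.E i))
    infer_instance
  · rw [hpn]
    exact Nat.find_min' hex ⟨q, hq, hq0, rfl⟩

end Regular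

section Nilpotency

local notation "gr" => Grading.component v (Grading.standard Q)

variable (k v) in
/-- The two-sided ideal of `ᵛΛ(Q)` generated by the central element `z - 1`, as a subspace. -/
noncomputable def zSubOneIdeal : Submodule k (QHAlg k Q v) :=
  LinearMap.range (LinearMap.mulLeft k ((taut v).z - 1))

lemma mem_zSubOneIdeal {x : QHAlg k Q v} :
    x ∈ zSubOneIdeal k v ↔ ∃ y, (taut v).z * y - y = x := by
  simp [zSubOneIdeal, sub_mul]

lemma isInvariant_zSubOneIdeal : (regular v).IsInvariant (zSubOneIdeal k v) where
  E i x hx := by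
    obtain ⟨y, rfl⟩ := mem_zSubOneIdeal.1 hx
    exact mem_zSubOneIdeal.2 ⟨(taut v).E i * y, by simp [mul_sub, ← mul_assoc, (taut v).z_E]⟩
  a b x hx := by
    obtain ⟨y, rfl⟩ := mem_zSubOneIdeal.1 hx
    exact mem_zSubOneIdeal.2 ⟨(taut v).a b * y, by simp [mul_sub, ← mul_assoc, (taut v).z_a]⟩
  z x hx := by
    obtain ⟨y, rfl⟩ := mem_zSubOneIdeal.1 hx
    exact mem_zSubOneIdeal.2 ⟨(taut v).z * y, by simp [mul_sub]⟩

variable {n : ℕ}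

lemma component_mem_lowDegree_sup_zSubOneIdeal
    (hn : ∀ x : QHAlg k Q v, x - ∑ l : Fin n, gr (l : ℕ) x ∈ zIdeal k v) (m : ℕ)
    (x : QHAlg k Q v) : gr m x ∈ lowDegree k v n ⊔ zSubOneIdeal k v := by
  induction m using Nat.strong_induction_on generalizing x with
  | h m ih =>
  rcases lt_or_ge m n with hlow | hhigh
  · exact Submodule.mem_sup_left (Submodule.mem_iSup_of_mem (⟨m, hlow⟩ : Fin n) ⟨x, rfl⟩)
  obtain ⟨w, hw⟩ := hn (gr m x)
  have hsum : ∑ l : Fin n, gr (l : ℕ) (gr m x) = 0 := Finset.sum_eq_zero fun l _ => by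
    rw [Grading.component_component, if_neg (by have := l.2; omega)]
  rw [hsum, sub_zero, LinearMap.mulLeft_apply] at hw
  have hx : gr m x = (taut v).z * gr (m - 2) w := by
    rw [← standard_component_z_mul, hw, Grading.component_component, if_pos rfl]
  have hlower : gr (m - 2) w ∈ lowDegree k v n ⊔ zSubOneIdeal k v := by
    rcases lt_or_ge m 2 with hm | hm
    · rw [Grading.component_of_neg _ (by omega)]
      exact zero_mem _
    · have := ih (m - 2) (by omega) w
      rwa [Nat.cast_sub hm] at this
  rw [hx, ← sub_add_cancel ((taut v).z * gr (m - 2) w) (gr (m - 2) w)]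
  exact add_mem (Submodule.mem_sup_right (mem_zSubOneIdeal.2 ⟨_, rfl⟩)) hlower

lemma lowDegree_sup_zSubOneIdeal
    (hn : ∀ x : QHAlg k Q v, x - ∑ l : Fin n, gr (l : ℕ) x ∈ zIdeal k v) :
    lowDegree k v n ⊔ zSubOneIdeal k v = ⊤ := by
  refine eq_top_iff.2 fun x _ => ?_
  obtain ⟨s, hs⟩ := (Grading.standard Q).exists_sum_component x
  rw [← hs s subset_rfl]
  refine Submodule.sum_mem _ fun m _ => ?_
  rcases lt_or_ge m 0 with hm | hm
  · rw [Grading.component_of_neg _ hm x]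
    exact zero_mem _
  · lift m to ℕ using hm
    exact component_mem_lowDegree_sup_zSubOneIdeal hn m x

lemma finiteDimensional_quotient_zSubOneIdeal (hD : Q.IsDynkin) :
    FiniteDimensional k (QHAlg k Q v ⧸ zSubOneIdeal k v) := by
  obtain ⟨n, hn⟩ := exists_sub_sum_component_mem_zIdeal (k := k) (v := v) hD
  refine Module.Finite.of_surjective ((zSubOneIdeal k v).mkQ ∘ₗ (lowDegree k v n).subtype)
    fun y => ?_
  obtain ⟨x, rfl⟩ := (zSubOneIdeal k v).mkQ_surjective y
  obtain ⟨a, ha, b, hb, rfl⟩ := Submodule.mem_sup.1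
    (show x ∈ lowDegree k v n ⊔ zSubOneIdeal k v by rw [lowDegree_sup_zSubOneIdeal hn]; trivial)
  refine ⟨⟨a, ha⟩, ((Submodule.Quotient.eq _).2 ?_).symm⟩
  simpa using hb

lemma one_mem_zSubOneIdeal (hD : Q.IsDynkin) (hv : IsRegularParam k Q v) :
    (1 : QHAlg k Q v) ∈ zSubOneIdeal k v := by
  have := finiteDimensional_quotient_zSubOneIdeal (k := k) (v := v) hD
  have hz : ((regular v).quotient isInvariant_zSubOneIdeal).z = 1 :=
    Submodule.linearMap_qext _ (LinearMap.ext fun x =>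
      (Submodule.Quotient.eq _).2 (mem_zSubOneIdeal.2 ⟨x, rfl⟩))
  have := subsingleton_of_z_eq_one hv _ hz
  exact (Submodule.Quotient.mk_eq_zero _).1 (Subsingleton.elim _ _)

lemma exists_z_pow_eq_zero (hD : Q.IsDynkin) (hv : IsRegularParam k Q v) :
    ∃ l : ℕ, (taut v).z ^ l = 0 := by
  obtain ⟨y, hy⟩ := mem_zSubOneIdeal.1 (one_mem_zSubOneIdeal hD hv)
  have hrec (n : ℤ) : gr n y = (taut v).z * gr (n - 2) y - if n = 0 then 1 else 0 := by
    have := congrArg (gr n) hy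
    rw [map_sub, standard_component_z_mul, Grading.component_one] at this
    rw [← this, sub_sub_cancel]
  -- Solving `(z - 1) y = 1` degree by degree gives the truncations of `y = -∑ z ^ l`.
  have hgeom (l : ℕ) : gr (2 * l) y + (taut v).z ^ l = 0 := by
    induction l with
    | zero =>
      rw [hrec, Grading.component_of_neg _ (by simp)]; simp
    | succ l ih =>
      rw [hrec, if_neg (by omega), show 2 * ((l + 1 : ℕ) : ℤ) - 2 = 2 * l by push_cast; ring,
        pow_succ', sub_zero, ← mul_add, ih, mul_zero]
  obtain ⟨s, hs⟩ := (Grading.standard Q).exists_sum_component y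
  obtain ⟨l, hl⟩ := Infinite.exists_notMem_finset (s.preimage (fun l : ℕ => 2 * (l : ℤ))
    (fun a _ b _ h => by simpa using h))
  have hcomp : gr (2 * l) y = 0 := by
    rw [← hs s subset_rfl, map_sum]
    refine Finset.sum_eq_zero fun m hm => ?_
    rw [Grading.component_component, if_neg]
    rintro rfl
    exact hl (Finset.mem_preimage.2 hm)
  exact ⟨l, by simpa [hcomp] using hgeom l⟩

lemma finiteDimensional_range_mulLeft_z_pow
    (hn : ∀ x : QHAlg k Q v, x - ∑ l : Fin n, gr (l : ℕ) x ∈ zIdeal k v) (i : ℕ)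
    (h : FiniteDimensional k (LinearMap.range (LinearMap.mulLeft k ((taut v).z ^ (i + 1))))) :
    FiniteDimensional k (LinearMap.range (LinearMap.mulLeft k ((taut v).z ^ i))) := by
  refine Submodule.finiteDimensional_of_le
    (S₂ := (lowDegree k v n).map (LinearMap.mulLeft k ((taut v).z ^ i)) ⊔
      LinearMap.range (LinearMap.mulLeft k ((taut v).z ^ (i + 1)))) ?_
  rintro _ ⟨x, rfl⟩
  obtain ⟨w, hw⟩ := hn x
  rw [LinearMap.mulLeft_apply] at hw
  refine Submodule.mem_sup.2 ⟨_, ⟨_, sum_component_mem_lowDegree n x, rfl⟩, _, ⟨w, rfl⟩, ?_⟩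
  simp only [LinearMap.mulLeft_apply]
  rw [pow_succ, mul_assoc, hw, ← mul_add, add_sub_cancel]

lemma finiteDimensional_qhAlg (hD : Q.IsDynkin) (hv : IsRegularParam k Q v) :
    FiniteDimensional k (QHAlg k Q v) := by
  obtain ⟨n, hn⟩ := exists_sub_sum_component_mem_zIdeal (k := k) (v := v) hD
  obtain ⟨N, hN⟩ := exists_z_pow_eq_zero hD hv
  have hrange : FiniteDimensional k
      (LinearMap.range (LinearMap.mulLeft k ((taut v).z ^ N))) := by
    rw [hN, LinearMap.mulLeft_zero_eq_zero, LinearMap.range_zero]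
    infer_instance
  have htop := Nat.decreasingInduction (motive := fun i _ => FiniteDimensional k
    (LinearMap.range (LinearMap.mulLeft k ((taut v).z ^ i))))
    (fun i _ => finiteDimensional_range_mulLeft_z_pow hn i) hrange N.zero_le
  refine Module.Finite.of_surjective
    (LinearMap.range (LinearMap.mulLeft k ((taut v).z ^ 0))).subtype fun x => ?_
  exact ⟨⟨x, x, by simp⟩, rfl⟩

end Nilpotency

/-! ## Hilbert polynomials -/

open Polynomial

lemma eq_zero_of_coeff_nonneg_of_eval_one_eq_zero {p : ℤ[X]} (hp : ∀ n, 0 ≤ p.coeff n)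
    (h : p.eval 1 = 0) : p = 0 := by
  rw [eval_eq_sum, Polynomial.sum] at h
  simp only [one_pow, mul_one] at h
  ext n
  by_cases hn : n ∈ p.support
  · exact (Finset.sum_eq_zero_iff_of_nonneg fun n _ => hp n).1 h n hn
  · simpa using hn

lemma exists_eq_X_pow_of_coeff_nonneg_of_eval_one_eq_one {p : ℤ[X]} (hp : ∀ n, 0 ≤ p.coeff n)
    (h : p.eval 1 = 1) : ∃ d, p = X ^ d := by
  obtain ⟨d, hd⟩ : ∃ d, p.coeff d ≠ 0 := by
    by_contra! hzero
    simp [show p = 0 from Polynomial.ext fun n => by simpa using hzero n] at h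
  refine ⟨d, sub_eq_zero.1 ?_⟩
  refine eq_zero_of_coeff_nonneg_of_eval_one_eq_zero (fun n => ?_) (by simp [h])
  rw [coeff_sub, coeff_X_pow]
  split_ifs with hn
  · have := hp d
    subst hn
    omega
  · simpa using hp n

namespace Grading

variable (W : Grading Q)

lemma hilb_eq_zero {n : ℤ} (h : W.component v n = 0) (i j : Fin Q.r) : W.hilb v n i j = 0 := by
  have : W.corner v n i j = ⊥ := by
    refine (Submodule.eq_bot_iff _).2 fun x hx => ?_
    rw [← hx.1, h, LinearMap.zero_apply]
  rw [hilb, this, finrank_bot]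

lemma hilb_of_neg {n : ℤ} (h : n < 0) (i j : Fin Q.r) : W.hilb v n i j = 0 :=
  W.hilb_eq_zero (LinearMap.ext fun x => W.component_of_neg h x) i j

/-- The matrix `1 - ∑ b, t ^ deg b + t ^ deg z`, whose value for the standard grading is
`1 - C t + t ^ 2`. -/
noncomputable def cartan : Matrix (Fin Q.r) (Fin Q.r) ℤ[X] := .of fun i j =>
  (if i = j then 1 + X ^ W.zWeight.toNat else 0) -
    ∑ b, if b.src = i ∧ b.tgt = j then X ^ (W.weight b).toNat else 0

variable [FiniteDimensional k (QHAlg k Q v)]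

lemma socleHilb_le_hilb (n : ℤ) (i j : Fin Q.r) : W.socleHilb v n i j ≤ W.hilb v n i j :=
  Submodule.finrank_mono inf_le_left

lemma socleHilb_of_neg {n : ℤ} (h : n < 0) (i j : Fin Q.r) : W.socleHilb v n i j = 0 :=
  Nat.le_zero.1 ((W.socleHilb_le_hilb n i j).trans (W.hilb_of_neg h i j).le)

variable (v) in
lemma exists_component_eq_zero : ∃ N : ℕ, ∀ n : ℤ, N ≤ n → W.component v n = 0 := by
  classical
  choose s hs using W.exists_sum_component (v := v)
  let b := Module.finBasis k (QHAlg k Q v)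
  obtain ⟨N, hN⟩ := (Finset.univ.biUnion fun i => s (b i)).exists_le
  refine ⟨N.toNat + 1, fun n hn => b.ext fun i => ?_⟩
  rw [← hs (b i) _ subset_rfl, map_sum, LinearMap.zero_apply]
  refine Finset.sum_eq_zero fun m hm => ?_
  rw [component_component, if_neg]
  rintro rfl
  have := hN n (Finset.mem_biUnion.2 ⟨i, Finset.mem_univ _, hm⟩)
  have := Int.self_le_toNat N
  push_cast at hn
  omega

variable (v) in
/-- A degree from which on all homogeneous components of `ᵛΛ(Q)` vanish. -/
noncomputable def degreeBound : ℕ := (W.exists_component_eq_zero v).choose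

lemma hilb_of_degreeBound_le {n : ℕ} (h : W.degreeBound v ≤ n) (i j : Fin Q.r) :
    W.hilb v n i j = 0 :=
  W.hilb_eq_zero ((W.exists_component_eq_zero v).choose_spec n (by exact_mod_cast h)) i j

variable (v) in
/-- The matrix-valued Hilbert polynomial of `ᵛΛ(Q)`. -/
noncomputable def hilbPoly : Matrix (Fin Q.r) (Fin Q.r) ℤ[X] := .of fun i j =>
  ∑ n ∈ Finset.range (W.degreeBound v), monomial n (W.hilb v n i j : ℤ)

variable (v) in
/-- The matrix-valued Hilbert polynomial of the socle of `ᵛΛ(Q)`. -/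
noncomputable def soclePoly : Matrix (Fin Q.r) (Fin Q.r) ℤ[X] := .of fun i j =>
  ∑ n ∈ Finset.range (W.degreeBound v), monomial n (W.socleHilb v n i j : ℤ)

lemma coeff_hilbPoly (n : ℕ) (i j : Fin Q.r) : (W.hilbPoly v i j).coeff n = W.hilb v n i j := by
  simp only [hilbPoly, Matrix.of_apply, finsetSum_coeff, coeff_monomial, Finset.sum_ite_eq',
    Finset.mem_range]
  split_ifs with h
  · rfl
  · rw [W.hilb_of_degreeBound_le (by omega), Nat.cast_zero]

lemma coeff_soclePoly (n : ℕ) (i j : Fin Q.r) :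
    (W.soclePoly v i j).coeff n = W.socleHilb v n i j := by
  simp only [soclePoly, Matrix.of_apply, finsetSum_coeff, coeff_monomial, Finset.sum_ite_eq',
    Finset.mem_range]
  split_ifs with h
  · rfl
  · have := W.socleHilb_le_hilb (v := v) n i j
    rw [W.hilb_of_degreeBound_le (by omega)] at this
    rw [Nat.le_zero.1 this, Nat.cast_zero]

lemma coeff_X_pow_mul_hilbPoly {a : ℤ} (ha : 0 ≤ a) (n : ℕ) (i j : Fin Q.r) :
    (X ^ a.toNat * W.hilbPoly v i j).coeff n = (W.hilb v (n - a) i j : ℤ) := by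
  rw [coeff_X_pow_mul']
  split_ifs with h
  · rw [coeff_hilbPoly]; congr 2; omega
  · rw [W.hilb_of_neg (by omega), Nat.cast_zero]

lemma coeff_X_pow_mul_soclePoly {a : ℤ} (ha : 0 ≤ a) (n : ℕ) (i j : Fin Q.r) :
    (X ^ a.toNat * W.soclePoly v i j).coeff n = (W.socleHilb v (n - a) i j : ℤ) := by
  rw [coeff_X_pow_mul']
  split_ifs with h
  · rw [coeff_soclePoly]; congr 2; omega
  · rw [W.socleHilb_of_neg (by omega), Nat.cast_zero]

lemma coeff_sum_X_pow_mul_hilbPoly {a : ℤ} (ha : 0 ≤ a) (n : ℕ) (i j : Fin Q.r) :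
    (∑ b : DoubleArrow Q,
        if b.src = i then X ^ (a + W.weight b).toNat * W.hilbPoly v b.tgt j else 0).coeff n =
      ((∑ b : DoubleArrow Q,
        if b.tgt = i then W.hilb v (n - a - W.weight b.rev) b.src j else 0 : ℕ) : ℤ) := by
  rw [finsetSum_coeff, ← DoubleArrow.sum_rev, Nat.cast_sum]
  refine Finset.sum_congr rfl fun b _ => ?_
  rw [DoubleArrow.src_rev, DoubleArrow.tgt_rev]
  split_ifs
  · rw [W.coeff_X_pow_mul_hilbPoly (add_nonneg ha (W.weight_nonneg _)), sub_sub]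
  · rw [coeff_zero, Nat.cast_zero]

lemma cartan_mul_hilbPoly_apply (i j : Fin Q.r) : (W.cartan * W.hilbPoly v) i j =
    (1 + X ^ W.zWeight.toNat) * W.hilbPoly v i j -
      ∑ b, if b.src = i then X ^ (W.weight b).toNat * W.hilbPoly v b.tgt j else 0 := by
  simp only [Matrix.mul_apply, cartan, Matrix.of_apply, sub_mul, Finset.sum_sub_distrib, ite_mul,
    zero_mul, Finset.sum_ite_eq, Finset.mem_univ, if_true, Finset.sum_mul]
  congr 1
  rw [Finset.sum_comm]
  refine Finset.sum_congr rfl fun b _ => ?_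
  by_cases h : b.src = i <;> simp [h]

lemma one_sub_X_pow_mul_cartan_mul_hilbPoly_apply (i j : Fin Q.r) :
    (1 - X ^ W.zWeight.toNat) * (W.cartan * W.hilbPoly v) i j =
      W.hilbPoly v i j - X ^ (W.zWeight + W.zWeight).toNat * W.hilbPoly v i j -
      ((∑ b : DoubleArrow Q,
          if b.src = i then X ^ (0 + W.weight b).toNat * W.hilbPoly v b.tgt j else 0) -
        ∑ b : DoubleArrow Q,
          if b.src = i then X ^ (W.zWeight + W.weight b).toNat * W.hilbPoly v b.tgt j else 0) := by
  have hpow (b) : (X ^ W.zWeight.toNat * X ^ (W.weight b).toNat : ℤ[X]) =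
      X ^ (W.zWeight + W.weight b).toNat := by
    rw [← pow_add, Int.toNat_add W.zWeight_nonneg (W.weight_nonneg b)]
  rw [cartan_mul_hilbPoly_apply, mul_sub, sub_mul 1 _ (∑ b, _), one_mul, Finset.mul_sum,
    Int.toNat_add W.zWeight_nonneg W.zWeight_nonneg, pow_add]
  simp only [mul_ite, mul_zero, ← mul_assoc, hpow, zero_add]
  ring

lemma one_sub_X_pow_smul_cartan_mul_hilbPoly :
    (1 - X ^ W.zWeight.toNat : ℤ[X]) • (W.cartan * W.hilbPoly v) =
      1 - (X ^ (2 * W.zWeight.toNat) : ℤ[X]) • W.soclePoly v := by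
  have hz := W.zWeight_nonneg
  ext i j n
  rw [Matrix.smul_apply, Matrix.sub_apply, Matrix.smul_apply, smul_eq_mul, smul_eq_mul, two_mul,
    ← Int.toNat_add hz hz, one_sub_X_pow_mul_cartan_mul_hilbPoly_apply]
  have hone : ((1 : Matrix (Fin Q.r) (Fin Q.r) ℤ[X]) i j).coeff n =
      ((if (n : ℤ) = 0 ∧ i = j then 1 else 0 : ℕ) : ℤ) := by
    by_cases hij : i = j
    · subst hij; simp [coeff_one]
    · simp [hij]
  simp only [coeff_sub, W.coeff_sum_X_pow_mul_hilbPoly le_rfl, W.coeff_sum_X_pow_mul_hilbPoly hz,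
    W.coeff_X_pow_mul_hilbPoly (add_nonneg hz hz), W.coeff_X_pow_mul_soclePoly (add_nonneg hz hz),
    coeff_hilbPoly, hone]
  have heuler := W.euler_characteristic (v := v) (n - W.zWeight - W.zWeight) i j
  have hdeg : (n : ℤ) - W.zWeight - W.zWeight + W.zWeight + W.zWeight = n := by ring
  have hdeg₀ (b) : (n : ℤ) - W.zWeight - W.zWeight + W.zWeight + W.weight b =
      n - 0 - W.weight b.rev := by
    linarith [W.weight_add_rev b]
  have hdeg₁ (b) : (n : ℤ) - W.zWeight - W.zWeight + W.weight b =
      n - W.zWeight - W.weight b.rev := by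
    linarith [W.weight_add_rev b]
  simp only [hdeg, hdeg₀, hdeg₁] at heuler
  rw [sub_sub] at heuler
  zify at heuler ⊢
  linarith

lemma eval_soclePoly (i j : Fin Q.r) :
    (W.soclePoly v i j).eval 1 = if i = j then 1 else 0 := by
  have h := congrArg (eval 1)
    (congrFun (congrFun (W.one_sub_X_pow_smul_cartan_mul_hilbPoly (v := v)) i) j)
  rw [Matrix.smul_apply, Matrix.sub_apply, Matrix.smul_apply, Matrix.one_apply] at h
  simp only [smul_eq_mul, eval_mul, eval_sub, eval_pow, eval_X, eval_one, one_pow, sub_self,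
    zero_mul, one_mul, apply_ite (eval (1 : ℤ)), eval_zero] at h
  linarith

lemma exists_soclePoly_eq :
    ∃ d : Fin Q.r → ℕ, W.soclePoly v = Matrix.diagonal fun i => X ^ d i := by
  have hnonneg (i j) (n : ℕ) : 0 ≤ (W.soclePoly v i j).coeff n := by
    rw [coeff_soclePoly]; positivity
  choose d hd using fun i => exists_eq_X_pow_of_coeff_nonneg_of_eval_one_eq_one (hnonneg i i)
    ((W.eval_soclePoly i i).trans (if_pos rfl))
  refine ⟨d, Matrix.ext fun i j => ?_⟩
  by_cases h : i = j
  · subst h; rw [hd, Matrix.diagonal_apply_eq]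
  · rw [Matrix.diagonal_apply_ne _ h]
    exact eq_zero_of_coeff_nonneg_of_eval_one_eq_zero (hnonneg i j)
      (by rw [eval_soclePoly, if_neg h])

end Grading

/-! ## Reversal of arrows and the orientation grading -/

section Reversal

open MulOpposite

variable (v) in
/-- The realization of `ᵛΛ(Q)` in its opposite algebra in which each arrow acts as its reverse. -/
noncomputable def reversal : Realization v (QHAlg k Q v)ᵐᵒᵖ where
  E i := op ((taut v).E i)
  a b := op ((taut v).a b.rev)
  z := op (taut v).z
  E_mul i j := by
    rw [← op_mul, (taut v).E_mul]
    by_cases h : i = j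
    · subst h; simp
    · simp [h, Ne.symm h]
  E_sum := by rw [← op_one, ← (taut v).E_sum, Finset.op_sum]
  E_a b := by rw [← op_mul, ← DoubleArrow.tgt_rev, (taut v).a_E]
  a_E b := by rw [← op_mul, ← DoubleArrow.src_rev, (taut v).E_a]
  z_E i := by rw [← op_mul, ← op_mul, (taut v).z_E]
  z_a b := by rw [← op_mul, ← op_mul, (taut v).z_a]
  mesh := by
    have h := congrArg op (taut v).mesh_eq_param_mul_z
    have hparam : ∑ i, v i • op ((taut v).E i) = op (taut v).param := by
      simp [Realization.param]
    simp only [Finset.op_sum, op_smul, ← op_mul, DoubleArrow.rev_rev] at h ⊢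
    rw [h, hparam, ← op_mul, z_mul_comm]

/-- The linear anti-involution of `ᵛΛ(Q)` that reverses the arrows of `Q̄`. -/
noncomputable def rev : QHAlg k Q v →ₗ[k] QHAlg k Q v :=
  (opLinearEquiv k).symm.toLinearMap ∘ₗ (reversal v).lift.toLinearMap

lemma rev_apply (x : QHAlg k Q v) : rev x = unop ((reversal v).lift x) := rfl

lemma rev_mul (x y : QHAlg k Q v) : rev (x * y) = rev y * rev x := by simp [rev_apply]

lemma rev_one : rev (1 : QHAlg k Q v) = 1 := by simp [rev_apply]

lemma rev_E (i : Fin Q.r) : rev ((taut v).E i) = (taut v).E i := by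
  rw [rev_apply, Realization.lift_E]; rfl

lemma rev_a (b : DoubleArrow Q) : rev ((taut v).a b) = (taut v).a b.rev := by
  rw [rev_apply, Realization.lift_a]; rfl

lemma rev_z : rev (taut v).z = (taut v).z := by
  rw [rev_apply, Realization.lift_z]; rfl

lemma rev_rev (x : QHAlg k Q v) : rev (rev x) = x := by
  induction x using mul_left_induction with
  | one => rw [rev_one, rev_one]
  | add x y hx hy => rw [map_add, map_add, hx, hy]
  | smul c x hx => rw [map_smul, map_smul, hx]
  | E_mul i x hx => rw [rev_mul, rev_mul, hx, rev_E, rev_E]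
  | a_mul b x hx => rw [rev_mul, rev_mul, hx, rev_a, rev_a, DoubleArrow.rev_rev]
  | z_mul x hx => rw [rev_mul, rev_mul, hx, rev_z, rev_z]

lemma standard_component_mul_a (b : DoubleArrow Q) (n : ℤ) (x : QHAlg k Q v) :
    (Grading.standard Q).component v n (x * (taut v).a b) =
      (Grading.standard Q).component v (n - 1) x * (taut v).a b := by
  have h := (Grading.standard Q).component_mul_gen b.toGen (n - 1) x
  rwa [Grading.genWeight_toGen,
    show (n - 1) + (Grading.standard Q).weight b = n from sub_add_cancel _ _] at h

lemma rev_standard_component (n : ℤ) (x : QHAlg k Q v) :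
    rev ((Grading.standard Q).component v n x) = (Grading.standard Q).component v n (rev x) := by
  induction x using mul_left_induction generalizing n with
  | one => rw [rev_one, Grading.component_one]; split_ifs <;> simp [rev_one]
  | add x y hx hy => simp only [map_add, hx, hy]
  | smul c x hx => simp only [map_smul, hx]
  | E_mul i x hx =>
    rw [Grading.component_E_mul, rev_mul, rev_mul, rev_E, Grading.component_mul_E, hx]
  | a_mul b x hx =>
    rw [standard_component_a_mul, rev_mul, rev_mul, rev_a, hx, standard_component_mul_a]
  | z_mul x hx =>
    rw [standard_component_z_mul, rev_mul, rev_mul, rev_z, hx, ← z_mul_comm, ← z_mul_comm,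
      standard_component_z_mul]

lemma rev_mem_standard_corner {n : ℤ} {i j : Fin Q.r} {x : QHAlg k Q v}
    (hx : x ∈ (Grading.standard Q).corner v n i j) :
    rev x ∈ (Grading.standard Q).corner v n j i :=
  ⟨by rw [← rev_standard_component, hx.1], by rw [← rev_E, ← rev_mul, hx.2.2],
    by rw [← rev_E, ← rev_mul, hx.2.1]⟩

end Reversal

lemma standard_cartan_transpose :
    (Grading.standard Q).cartan.transpose = (Grading.standard Q).cartan := by
  ext1 i j
  rw [Matrix.transpose_apply]
  simp only [Grading.cartan, Matrix.of_apply, eq_comm (a := i) (b := j)]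
  congr 1
  rw [← DoubleArrow.sum_rev]
  simp [Grading.standard, and_comm, -Fintype.sum_sum_type]

lemma standard_cartan_src_tgt_ne_zero {b : DoubleArrow Q} (hb : b.src ≠ b.tgt) :
    (Grading.standard Q).cartan b.src b.tgt ≠ 0 := by
  intro h
  have heval := congrArg (eval 1) h
  simp only [Grading.cartan, Matrix.of_apply, if_neg hb, zero_sub, eval_neg, eval_finsetSum,
    eval_zero, neg_eq_zero] at heval
  have hterm := (Finset.sum_eq_zero_iff_of_nonneg (fun b _ => by split_ifs <;> simp)).1 heval b
    (Finset.mem_univ _)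
  simp at hterm

lemma diagonal_mul_apply_comm_of_isSymm {ι R : Type*} [Fintype ι] [DecidableEq ι]
    [CommRing R] {M H : Matrix ι ι R} {p : R} {D : ι → R} (hM : M.IsSymm) (hH : H.IsSymm)
    (h : p • (M * H) = Matrix.diagonal D) (i j : ι) : D i * M i j = M i j * D j := by
  have htranspose : p • (H * M) = Matrix.diagonal D := by
    rw [← Matrix.diagonal_transpose, ← h, Matrix.transpose_smul, Matrix.transpose_mul, hM, hH]
  have hcomm : Matrix.diagonal D * M = M * Matrix.diagonal D := by
    conv_lhs => rw [← h]
    rw [← htranspose, Matrix.smul_mul, Matrix.mul_smul, Matrix.mul_assoc]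
  simpa using congrFun (congrFun hcomm i) j

section FiniteDimensional

variable [FiniteDimensional k (QHAlg k Q v)]

lemma standard_hilb_le (n : ℤ) (i j : Fin Q.r) :
    (Grading.standard Q).hilb v n i j ≤ (Grading.standard Q).hilb v n j i :=
  LinearMap.finrank_le_finrank_of_injective
    (f := rev.restrict fun _ hx => rev_mem_standard_corner hx) fun x y h => Subtype.ext <| by
      rw [← rev_rev x.1, show rev x.1 = rev y.1 from congrArg Subtype.val h, rev_rev]

lemma standard_hilbPoly_transpose :
    ((Grading.standard Q).hilbPoly v).transpose = (Grading.standard Q).hilbPoly v :=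
  Matrix.ext fun i j => Polynomial.ext fun n => by
    rw [Matrix.transpose_apply, Grading.coeff_hilbPoly, Grading.coeff_hilbPoly,
      (standard_hilb_le n i j).antisymm (standard_hilb_le n j i)]

variable (v) in
lemma Grading.exists_one_sub_X_pow_smul_cartan_mul_hilbPoly (W : Grading Q) : ∃ d : Fin Q.r → ℕ,
    (1 - X ^ W.zWeight.toNat : ℤ[X]) • (W.cartan * W.hilbPoly v) =
      Matrix.diagonal fun i => 1 - X ^ (2 * W.zWeight.toNat + d i) := by
  obtain ⟨d, hd⟩ := W.exists_soclePoly_eq (v := v)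
  refine ⟨d, ?_⟩
  rw [one_sub_X_pow_smul_cartan_mul_hilbPoly, hd, ← Matrix.diagonal_one, ← Matrix.diagonal_smul,
    Matrix.diagonal_sub]
  simp [pow_add]

lemma standard_exponent_src_eq_tgt {d : Fin Q.r → ℕ}
    (h : (1 - X ^ 2 : ℤ[X]) • ((Grading.standard Q).cartan * (Grading.standard Q).hilbPoly v) =
      Matrix.diagonal fun i => 1 - X ^ d i) (b : DoubleArrow Q) : d b.src = d b.tgt := by
  by_cases hb : b.src = b.tgt
  · rw [hb]
  have hcomm := diagonal_mul_apply_comm_of_isSymm standard_cartan_transpose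
    standard_hilbPoly_transpose h b.src b.tgt
  rw [mul_comm] at hcomm
  have hpow := sub_right_injective (mul_left_cancel₀ (standard_cartan_src_tgt_ne_zero hb) hcomm)
  simpa using congrArg natDegree hpow

variable (v) in
lemma exists_standard_cartan_mul_hilbPoly (hQ : Q.Connected) : ∃ d : ℕ,
    (1 - X ^ 2 : ℤ[X]) • ((Grading.standard Q).cartan * (Grading.standard Q).hilbPoly v) =
      (1 - X ^ d : ℤ[X]) • 1 := by
  obtain ⟨d, hd⟩ := (Grading.standard Q).exists_one_sub_X_pow_smul_cartan_mul_hilbPoly v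
  have hconst (i j : Fin Q.r) : 2 * 2 + d i = 2 * 2 + d j := by
    induction hQ i j with
    | refl => rfl
    | tail _ hab ih =>
      rw [ih]
      obtain ⟨e, ⟨rfl, rfl⟩ | ⟨rfl, rfl⟩⟩ := hab
      · exact standard_exponent_src_eq_tgt hd (.inl e)
      · exact standard_exponent_src_eq_tgt hd (.inr e)
  rcases isEmpty_or_nonempty (Fin Q.r) with hr | ⟨⟨i⟩⟩
  · exact ⟨0, Matrix.ext fun i => hr.elim i⟩
  · refine ⟨2 * 2 + d i, hd.trans ?_⟩
    rw [Matrix.smul_one_eq_diagonal]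
    exact congrArg Matrix.diagonal (funext fun j => by rw [hconst i j]; rfl)

/-- The grading in which the arrows of `Q` have degree `0` and the reversed arrows degree `1`. -/
def Grading.orientation (Q : FinQuiver) : Grading Q :=
  ⟨Sum.elim (fun _ => 0) (fun _ => 1), 1, by rintro (_ | _) <;> simp [DoubleArrow.rev],
    by rintro (_ | _) <;> simp, by norm_num⟩

variable (v) in
/-- The (ungraded) Peirce corner `E i * Λ * E j`. -/
def vertexCorner (i j : Fin Q.r) : Submodule k (QHAlg k Q v) where
  carrier := {x | (taut v).E i * x = x ∧ x * (taut v).E j = x}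
  add_mem' := by
    rintro x y ⟨hEx, hxE⟩ ⟨hEy, hyE⟩
    exact ⟨by rw [mul_add, hEx, hEy], by rw [add_mul, hxE, hyE]⟩
  zero_mem' := by simp
  smul_mem' := by
    rintro c x ⟨hEx, hxE⟩
    exact ⟨by rw [mul_smul_comm, hEx], by rw [smul_mul_assoc, hxE]⟩

namespace Grading

variable (W : Grading Q)

lemma sum_component_eq (x : QHAlg k Q v) :
    ∑ n : Fin (W.degreeBound v), W.component v (n : ℕ) x = x := by
  refine W.ext_component fun m => ?_
  simp only [map_sum, component_component]
  by_cases hm : ∃ n : Fin (W.degreeBound v), m = (n : ℕ)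
  · obtain ⟨n, rfl⟩ := hm
    simp [Fin.val_inj]
  · rw [Finset.sum_eq_zero fun n _ => if_neg fun h => hm ⟨n, h⟩]
    rcases lt_or_ge m 0 with hneg | hnonneg
    · rw [W.component_of_neg hneg]
    · lift m to ℕ using hnonneg
      have hle : W.degreeBound v ≤ m := not_lt.1 fun h => hm ⟨⟨m, h⟩, rfl⟩
      rw [(W.exists_component_eq_zero v).choose_spec m (by exact_mod_cast hle),
        LinearMap.zero_apply]

/-- The decomposition of a Peirce corner into its homogeneous components. -/
noncomputable def vertexCornerEquiv (i j : Fin Q.r) :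
    vertexCorner v i j ≃ₗ[k] ((n : Fin (W.degreeBound v)) → W.corner v (n : ℕ) i j) where
  toFun x n := ⟨W.component v (n : ℕ) x.1, by rw [component_component, if_pos rfl],
    by rw [← component_E_mul, x.2.1], by rw [← component_mul_E, x.2.2]⟩
  invFun f := ⟨∑ n, (f n).1,
    by rw [Finset.mul_sum]; exact Finset.sum_congr rfl fun n _ => (f n).2.2.1,
    by rw [Finset.sum_mul]; exact Finset.sum_congr rfl fun n _ => (f n).2.2.2⟩
  map_add' x y := funext fun n => Subtype.ext (map_add _ _ _)
  map_smul' c x := funext fun n => Subtype.ext (map_smul _ _ _)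
  left_inv x := Subtype.ext (W.sum_component_eq x.1)
  right_inv f := funext fun n => Subtype.ext <| by
    change W.component v _ (∑ m, (f m).1) = _
    rw [map_sum, Finset.sum_eq_single n]
    · exact (f n).2.1
    · intro m _ hm
      rw [← (f m).2.1, component_component, if_neg]
      exact fun h => hm (Fin.ext (by exact_mod_cast h.symm))
    · simp

lemma eval_hilbPoly (i j : Fin Q.r) :
    (W.hilbPoly v i j).eval 1 = Module.finrank k (vertexCorner v i j) := by
  have (n : Fin (W.degreeBound v)) : Module.Free k (W.corner v (n : ℕ) i j) :=
    @Module.Free.of_divisionRing k _ _ (Module.addCommMonoidToAddCommGroup k) _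
  rw [(W.vertexCornerEquiv i j).finrank_eq, Module.finrank_pi_fintype]
  simp [hilbPoly, Matrix.of_apply, eval_finsetSum, Finset.sum_range, hilb]

lemma eval_cartan (i j : Fin Q.r) : (W.cartan i j).eval 1 =
    (if i = j then 2 else 0) - ∑ b : DoubleArrow Q, if b.src = i ∧ b.tgt = j then 1 else 0 := by
  simp only [cartan, Matrix.of_apply, eval_sub, eval_finsetSum]
  congr 1
  · split_ifs <;> norm_num
  · exact Finset.sum_congr rfl fun b _ => by split_ifs <;> simp

lemma eval_cartan_mul_hilbPoly_eq (W W' : Grading Q) (i j : Fin Q.r) :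
    ((W.cartan * W.hilbPoly v) i j).eval 1 = ((W'.cartan * W'.hilbPoly v) i j).eval 1 := by
  simp [Matrix.mul_apply, eval_finsetSum, eval_hilbPoly, eval_cartan]

end Grading

lemma natCast_mul_eval_one_of_one_sub_X_pow_mul_eq {R : Type*} [CommRing R] {p : R[X]} {a b : ℕ}
    (h : (1 - X ^ a) * p = 1 - X ^ b) : (a : R) * p.eval 1 = b := by
  simpa [derivative_X_pow] using congrArg (fun q => eval 1 (derivative q)) h

-- Both exponents are read off from the derivatives at `t = 1`, where the two gradings agree.
variable (v) in
lemma exists_cartan_mul_hilbPoly (hQ : Q.Connected) : ∃ m : ℕ, 2 ≤ m ∧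
    (1 - X ^ 2 : ℤ[X]) • ((Grading.standard Q).cartan * (Grading.standard Q).hilbPoly v) =
      (1 - X ^ (2 * m) : ℤ[X]) • 1 ∧
    (1 - X : ℤ[X]) • ((Grading.orientation Q).cartan * (Grading.orientation Q).hilbPoly v) =
      (1 - X ^ m : ℤ[X]) • 1 := by
  obtain ⟨d, hd⟩ := exists_standard_cartan_mul_hilbPoly v hQ
  obtain ⟨d', hd'⟩ := (Grading.orientation Q).exists_one_sub_X_pow_smul_cartan_mul_hilbPoly v
  have hexp (i : Fin Q.r) : d = 2 * (2 * 1 + d' i) := by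
    have h := natCast_mul_eval_one_of_one_sub_X_pow_mul_eq
      (by simpa using congrFun (congrFun hd i) i)
    have h' := natCast_mul_eval_one_of_one_sub_X_pow_mul_eq
      (by simpa using congrFun (congrFun hd' i) i)
    rw [Grading.eval_cartan_mul_hilbPoly_eq _ (Grading.orientation Q)] at h
    simp only [Grading.orientation, Int.toNat_one] at h h'
    push_cast at h h'
    omega
  rw [show (Grading.orientation Q).zWeight.toNat = 1 from rfl, pow_one] at hd'
  rcases isEmpty_or_nonempty (Fin Q.r) with hr | ⟨⟨i⟩⟩
  · exact ⟨2, le_rfl, Matrix.ext fun i => hr.elim i, Matrix.ext fun i => hr.elim i⟩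
  refine ⟨2 * 1 + d' i, by omega, by rw [hd, ← hexp i], ?_⟩
  rw [hd', Matrix.smul_one_eq_diagonal]
  exact congrArg Matrix.diagonal (funext fun j => by
    rw [show d' j = d' i by have := hexp i; have := hexp j; omega])

end FiniteDimensional

/-! ## Roots and the Euler form -/

open Matrix

variable (Q) in
/-- The matrix of the Euler form. -/
def eulerMatrix : Matrix (Fin Q.r) (Fin Q.r) ℤ := of fun i j =>
  (if i = j then 1 else 0) - ∑ e, if Q.src e = i ∧ Q.tgt e = j then 1 else 0

/-- The relation on vertices that holds for `a`, `b` when `Q` has an arrow `a ⟶ b`. -/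
def HasArrow (Q : FinQuiver) (a b : Fin Q.r) : Prop := ∃ e : Q.Arrow, Q.src e = a ∧ Q.tgt e = b

lemma eulerMatrix_mulVec (x : Fin Q.r → ℤ) (i : Fin Q.r) :
    (eulerMatrix Q *ᵥ x) i = x i - ∑ e, if Q.src e = i then x (Q.tgt e) else 0 := by
  simp only [mulVec, dotProduct, eulerMatrix, of_apply, sub_mul, Finset.sum_sub_distrib,
    Finset.sum_mul]
  congr 1
  · simp
  · rw [Finset.sum_comm]
    refine Finset.sum_congr rfl fun e _ => ?_
    by_cases h : Q.src e = i <;> simp [h]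

lemma eulerMatrix_apply_of_not_hasArrow {a b : Fin Q.r} (h : ¬ HasArrow Q a b) :
    eulerMatrix Q a b = if a = b then 1 else 0 := by
  rw [eulerMatrix, of_apply, Finset.sum_eq_zero fun e _ => if_neg fun he => h ⟨e, he⟩, sub_zero]

lemma titsFormZ_eq_dotProduct (x : Fin Q.r → ℤ) :
    Q.titsFormZ x = x ⬝ᵥ (eulerMatrix Q *ᵥ x) := by
  simp only [dotProduct, eulerMatrix_mulVec, mul_sub, Finset.sum_sub_distrib,
    FinQuiver.titsFormZ, Finset.mul_sum]
  congr 1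
  · simp [sq]
  · rw [Finset.sum_comm]
    simp

lemma titsFormZ_pos (hD : Q.IsDynkin) {x : Fin Q.r → ℤ} (hx : x ≠ 0) : 0 < Q.titsFormZ x := by
  have h : (fun i => (x i : ℝ)) ≠ 0 := fun h => hx <| funext fun i => by
    simpa using congrFun h i
  have := hD _ h
  rw [FinQuiver.titsForm] at this
  rw [FinQuiver.titsFormZ]
  exact_mod_cast this

lemma eq_zero_of_add_transpose_eulerMatrix_mulVec_eq_zero (hD : Q.IsDynkin) {x : Fin Q.r → ℤ}
    (hx : (eulerMatrix Q + (eulerMatrix Q)ᵀ) *ᵥ x = 0) : x = 0 := by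
  by_contra hne
  have hpos := titsFormZ_pos hD hne
  have hdot := congrArg (x ⬝ᵥ ·) hx
  simp only [dotProduct_zero] at hdot
  rw [add_mulVec, dotProduct_add, mulVec_transpose, dotProduct_comm _ (_ ᵥ* _),
    ← dotProduct_mulVec, ← titsFormZ_eq_dotProduct] at hdot
  omega

lemma titsFormZ_neg (x : Fin Q.r → ℤ) : Q.titsFormZ (-x) = Q.titsFormZ x := by
  simp [FinQuiver.titsFormZ]

lemma titsFormZ_posPart_add_titsFormZ_negPart_le (x : Fin Q.r → ℤ) :
    Q.titsFormZ x⁺ + Q.titsFormZ x⁻ ≤ Q.titsFormZ x := by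
  have hmul (i) : x⁺ i * x⁻ i = 0 := by
    rcases le_total 0 (x i) with h | h <;> simp [h]
  have hx (i) : x i = x⁺ i - x⁻ i := congrFun (posPart_sub_negPart x).symm i
  have hpos (i) : 0 ≤ x⁺ i := posPart_nonneg (x i)
  have hneg (i) : 0 ≤ x⁻ i := negPart_nonneg (x i)
  have hsq : ∑ i, x i ^ 2 = ∑ i, x⁺ i ^ 2 + ∑ i, x⁻ i ^ 2 := by
    rw [← Finset.sum_add_distrib]
    refine Finset.sum_congr rfl fun i _ => ?_
    rw [hx i]
    linear_combination -2 * hmul i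
  have hprod : ∑ e, x (Q.src e) * x (Q.tgt e) ≤
      ∑ e, x⁺ (Q.src e) * x⁺ (Q.tgt e) + ∑ e, x⁻ (Q.src e) * x⁻ (Q.tgt e) := by
    rw [← Finset.sum_add_distrib]
    refine Finset.sum_le_sum fun e _ => ?_
    rw [hx (Q.src e), hx (Q.tgt e)]
    linarith [mul_nonneg (hpos (Q.src e)) (hneg (Q.tgt e)),
      mul_nonneg (hneg (Q.src e)) (hpos (Q.tgt e))]
  simp only [FinQuiver.titsFormZ]
  linarith

lemma nonneg_or_nonpos_of_titsFormZ_eq_one (hD : Q.IsDynkin) {x : Fin Q.r → ℤ}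
    (hx : Q.titsFormZ x = 1) : 0 ≤ x ∨ x ≤ 0 := by
  by_contra! h
  have hneg := titsFormZ_pos hD fun h0 : x⁻ = 0 => h.1 (negPart_eq_zero.1 h0)
  have hpos := titsFormZ_pos hD fun h0 : x⁺ = 0 => h.2 (posPart_eq_zero.1 h0)
  have := titsFormZ_posPart_add_titsFormZ_negPart_le x
  omega

-- The hypothesis `hxw` says that `-w` is the Coxeter translate of `x`.
lemma titsFormZ_ite_mem {x w : Fin Q.r → ℤ} (hxw : eulerMatrix Q *ᵥ x = (eulerMatrix Q)ᵀ *ᵥ w)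
    {J : Set (Fin Q.r)} [DecidablePred (· ∈ J)] (hJ : ∀ a b, HasArrow Q a b → b ∈ J → a ∈ J) :
    Q.titsFormZ (fun a => if a ∈ J then - w a else x a) = Q.titsFormZ x := by
  set E := eulerMatrix Q with hE
  set d : Fin Q.r → ℤ := fun a => if a ∈ J then x a + w a else 0 with hd
  have hsub : (fun a => if a ∈ J then - w a else x a) = x - d := by
    funext a
    simp only [hd, Pi.sub_apply]
    split_ifs <;> ring
  have hEd {a} (ha : a ∉ J) : (E *ᵥ d) a = 0 := by
    rw [mulVec, dotProduct]
    refine Finset.sum_eq_zero fun b _ => ?_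
    by_cases hb : b ∈ J
    · rw [hE, eulerMatrix_apply_of_not_hasArrow fun h => ha (hJ a b h hb),
        if_neg (by rintro rfl; exact ha hb), zero_mul]
    · simp [hd, hb]
  have hdd : d ⬝ᵥ (E *ᵥ d) = (x + w) ⬝ᵥ (E *ᵥ d) := by
    refine Finset.sum_congr rfl fun a _ => ?_
    by_cases ha : a ∈ J
    · simp [hd, ha]
    · rw [hEd ha, mul_zero, mul_zero]
  have hwd : w ⬝ᵥ (E *ᵥ d) = d ⬝ᵥ (E *ᵥ x) := by
    rw [dotProduct_mulVec, ← mulVec_transpose, ← hxw, dotProduct_comm]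
  rw [hsub, titsFormZ_eq_dotProduct, titsFormZ_eq_dotProduct, ← hE, mulVec_sub, dotProduct_sub,
    sub_dotProduct, sub_dotProduct, hdd, add_dotProduct, hwd]
  ring

lemma forall_mem_eq_zero_or_forall_notMem_eq_zero (hD : Q.IsDynkin) {x w : Fin Q.r → ℤ}
    (hx : 0 ≤ x) (hw : 0 ≤ w) (hqx : Q.titsFormZ x = 1)
    (hxw : eulerMatrix Q *ᵥ x = (eulerMatrix Q)ᵀ *ᵥ w) {J : Set (Fin Q.r)}
    (hJ : ∀ a b, HasArrow Q a b → b ∈ J → a ∈ J) :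
    (∀ a ∈ J, w a = 0) ∨ ∀ a ∉ J, x a = 0 := by
  classical
  rcases nonneg_or_nonpos_of_titsFormZ_eq_one hD ((titsFormZ_ite_mem hxw hJ).trans hqx)
    with h | h
  · refine .inl fun a ha => le_antisymm ?_ (hw a)
    simpa [ha] using h a
  · refine .inr fun a ha => le_antisymm ?_ (hx a)
    simpa [ha] using h a

lemma wellFounded_transGen_hasArrow (hA : Q.Acyclic) :
    WellFounded (Relation.TransGen (HasArrow Q)) :=
  haveI : Std.Irrefl (Relation.TransGen (HasArrow Q)) := ⟨hA⟩
  Finite.wellFounded_of_trans_of_irrefl _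

lemma wellFounded_swap_transGen_hasArrow (hA : Q.Acyclic) :
    WellFounded (Function.swap (Relation.TransGen (HasArrow Q))) :=
  haveI : Std.Irrefl (Function.swap (Relation.TransGen (HasArrow Q))) := ⟨hA⟩
  Finite.wellFounded_of_trans_of_irrefl _

lemma eulerMatrix_mulVec_eq_single (hA : Q.Acyclic) {x w : Fin Q.r → ℤ} {i : Fin Q.r}
    (hxw : eulerMatrix Q *ᵥ x = (eulerMatrix Q)ᵀ *ᵥ w)
    (hx : ∀ a, ¬ Relation.ReflTransGen (HasArrow Q) a i → x a = 0)
    (hw : ∀ a, Relation.TransGen (HasArrow Q) a i → w a = 0) :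
    eulerMatrix Q *ᵥ x = Pi.single i (x i) := by
  funext a
  by_cases ha : Relation.TransGen (HasArrow Q) a i
  · rw [hxw, Pi.single_eq_of_ne (by rintro rfl; exact hA a ha), mulVec, dotProduct]
    refine Finset.sum_eq_zero fun b _ => ?_
    by_cases hb : Relation.TransGen (HasArrow Q) b i
    · rw [hw b hb, mul_zero]
    · rw [transpose_apply, eulerMatrix_apply_of_not_hasArrow fun h => hb (.head h ha),
        if_neg (by rintro rfl; exact hb ha), zero_mul]
  · rw [mulVec, dotProduct, Finset.sum_eq_single i]
    · rw [eulerMatrix_apply_of_not_hasArrow fun h => ha (.single h), Pi.single_apply, ite_mul,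
        one_mul, zero_mul]
    · intro b _ hbi
      by_cases hb : Relation.TransGen (HasArrow Q) b i
      · rw [eulerMatrix_apply_of_not_hasArrow fun h => ha (.head h hb),
          if_neg (by rintro rfl; exact ha hb), zero_mul]
      · rw [hx b fun h => (Relation.reflTransGen_iff_eq_or_transGen.1 h).elim
          (fun h => hbi h.symm) hb, mul_zero]
    · simp

-- A positive root whose Coxeter translate is negative is the dimension vector of a projective.
lemma exists_eulerMatrix_mulVec_eq_single (hD : Q.IsDynkin) (hA : Q.Acyclic)
    {x w : Fin Q.r → ℤ} (hx : 0 ≤ x) (hw : 0 ≤ w) (hqx : Q.titsFormZ x = 1)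
    (hxw : eulerMatrix Q *ᵥ x = (eulerMatrix Q)ᵀ *ᵥ w) :
    ∃ i, eulerMatrix Q *ᵥ x = Pi.single i 1 := by
  have hsupp : {a | w a ≠ 0}.Nonempty := by
    by_contra! h
    have hw0 : w = 0 := funext fun a => by
      by_contra ha
      exact h.subset (show a ∈ {a | w a ≠ 0} from ha)
    rw [titsFormZ_eq_dotProduct, hxw, hw0, mulVec_zero, dotProduct_zero] at hqx
    exact zero_ne_one hqx
  obtain ⟨i, hi, hmin⟩ := (wellFounded_transGen_hasArrow hA).has_min _ hsupp
  have hx_off (a) (ha : ¬ Relation.ReflTransGen (HasArrow Q) a i) : x a = 0 := by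
    rcases forall_mem_eq_zero_or_forall_notMem_eq_zero hD hx hw hqx hxw
      (J := {a | Relation.ReflTransGen (HasArrow Q) a i}) (fun a b h hb => .head h hb) with h | h
    · exact absurd (h i .refl) hi
    · exact h a ha
  have hsingle := eulerMatrix_mulVec_eq_single hA hxw hx_off fun a ha => by
    by_contra h
    exact hmin a h ha
  refine ⟨i, hsingle.trans ?_⟩
  rw [titsFormZ_eq_dotProduct, hsingle, dotProduct_single] at hqx
  rw [show x i = 1 by nlinarith [show 0 ≤ x i from hx i]]

variable (Q) in
/-- A sequence of matrices with the properties of the graded dimensions of `ᵛΛ(Q)` for the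
orientation grading. The recursion encodes `(E + Eᵀ t) H(t) = 1 + t + ⋯ + t ^ (m - 1)` for the Euler
matrix `E`, and `generated` that the degree `n + 1` part is generated by the degree `n` part. -/
structure HilbertFunction (m : ℕ) where
  coeff : ℕ → Matrix (Fin Q.r) (Fin Q.r) ℤ
  eulerMatrix_mul_zero : eulerMatrix Q * coeff 0 = 1
  eulerMatrix_mul_succ : ∀ n, eulerMatrix Q * coeff (n + 1) + (eulerMatrix Q)ᵀ * coeff n =
    if n + 1 < m then 1 else 0
  eventually_zero : ∃ N, ∀ n ≥ N, coeff n = 0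
  nonneg : ∀ n i j, 0 ≤ coeff n i j
  generated : ∀ n j, (∀ i, coeff n i j = 0) → ∀ n' ≥ n, ∀ i, coeff n' i j = 0

namespace HilbertFunction

variable {m : ℕ} (F : HilbertFunction Q m)

/-- The Coxeter matrix `-E⁻¹ Eᵀ` of the Euler matrix `E`, whose inverse is `F.coeff 0`. -/
def coxeterMatrix : Matrix (Fin Q.r) (Fin Q.r) ℤ := - (F.coeff 0 * (eulerMatrix Q)ᵀ)

lemma zero_mul_eulerMatrix : F.coeff 0 * eulerMatrix Q = 1 :=
  mul_eq_one_comm.1 F.eulerMatrix_mul_zero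

lemma eulerMatrix_mul_coxeterMatrix :
    eulerMatrix Q * F.coxeterMatrix = - (eulerMatrix Q)ᵀ := by
  rw [coxeterMatrix, Matrix.mul_neg, ← Matrix.mul_assoc, F.eulerMatrix_mul_zero, Matrix.one_mul]

lemma coxeterMatrix_mul_eq_one : F.coxeterMatrix * - ((F.coeff 0)ᵀ * eulerMatrix Q) = 1 := by
  rw [coxeterMatrix, neg_mul_neg, Matrix.mul_assoc, ← Matrix.mul_assoc _ (F.coeff 0)ᵀ,
    ← transpose_mul, F.zero_mul_eulerMatrix, transpose_one, Matrix.one_mul, F.zero_mul_eulerMatrix]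

lemma isUnit_coxeterMatrix_pow (n : ℕ) : IsUnit (F.coxeterMatrix ^ n) :=
  (IsUnit.of_mul_eq_one _ F.coxeterMatrix_mul_eq_one).pow n

lemma coeff_succ_of_lt {n : ℕ} (hn : n + 1 < m) :
    F.coeff (n + 1) = F.coeff 0 + F.coxeterMatrix * F.coeff n := by
  have h := congrArg (F.coeff 0 * ·) (F.eulerMatrix_mul_succ n)
  simp only [if_pos hn, mul_add, ← Matrix.mul_assoc, F.zero_mul_eulerMatrix, Matrix.mul_one,
    Matrix.one_mul] at h
  rw [coxeterMatrix, neg_mul, ← sub_eq_add_neg]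
  exact eq_sub_of_add_eq h

lemma coeff_succ_of_le {n : ℕ} (hn : m ≤ n + 1) :
    F.coeff (n + 1) = F.coxeterMatrix * F.coeff n := by
  have h := congrArg (F.coeff 0 * ·) (F.eulerMatrix_mul_succ n)
  simp only [if_neg hn.not_gt, mul_add, ← Matrix.mul_assoc, F.zero_mul_eulerMatrix,
    Matrix.mul_zero, Matrix.one_mul] at h
  rw [coxeterMatrix, neg_mul, eq_neg_of_add_eq_zero_left h]

lemma coeff_eq_zero {n : ℕ} (hn : m ≤ n + 1) : F.coeff n = 0 := by
  obtain ⟨N, hN⟩ := F.eventually_zero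
  have h (l : ℕ) : F.coeff (n + l) = F.coxeterMatrix ^ l * F.coeff n := by
    induction l with
    | zero => simp
    | succ l ih => rw [← add_assoc, F.coeff_succ_of_le (by omega), ih, pow_succ', Matrix.mul_assoc]
  refine (F.isUnit_coxeterMatrix_pow N).mul_left_cancel ?_
  rw [← h, hN _ (by omega), Matrix.mul_zero]

lemma coeff_eq_sum {n : ℕ} (hn : n < m) :
    F.coeff n = (∑ l ∈ Finset.range (n + 1), F.coxeterMatrix ^ l) * F.coeff 0 := by
  induction n with
  | zero => simp
  | succ n ih =>
    rw [F.coeff_succ_of_lt hn, ih (by omega), Finset.sum_range_succ' _ (n + 1),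
      ← Matrix.mul_assoc, Finset.mul_sum, Matrix.add_mul, pow_zero, Matrix.one_mul, add_comm]
    simp only [pow_succ']

lemma sum_coxeterMatrix_pow (hm : 2 ≤ m) : ∑ l ∈ Finset.range m, F.coxeterMatrix ^ l = 0 := by
  have h := F.coeff_eq_sum (n := m - 1) (by omega)
  rw [F.coeff_eq_zero (by omega), Nat.sub_add_cancel (by omega)] at h
  simpa [Matrix.mul_assoc, F.zero_mul_eulerMatrix] using (congrArg (· * eulerMatrix Q) h).symm

lemma coxeterMatrix_pow_eq_one (hm : 2 ≤ m) : F.coxeterMatrix ^ m = 1 := by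
  have h := geom_sum_mul F.coxeterMatrix m
  rw [F.sum_coxeterMatrix_pow hm, zero_mul] at h
  exact sub_eq_zero.1 h.symm

lemma eulerMatrix_mulVec_coxeterMatrix_mulVec (x : Fin Q.r → ℤ) :
    eulerMatrix Q *ᵥ (F.coxeterMatrix *ᵥ x) = - ((eulerMatrix Q)ᵀ *ᵥ x) := by
  rw [mulVec_mulVec, eulerMatrix_mul_coxeterMatrix, neg_mulVec]

lemma titsFormZ_coxeterMatrix_mulVec (x : Fin Q.r → ℤ) :
    Q.titsFormZ (F.coxeterMatrix *ᵥ x) = Q.titsFormZ x := by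
  rw [titsFormZ_eq_dotProduct, titsFormZ_eq_dotProduct, eulerMatrix_mulVec_coxeterMatrix_mulVec,
    dotProduct_neg, dotProduct_mulVec, vecMul_transpose, eulerMatrix_mulVec_coxeterMatrix_mulVec,
    neg_dotProduct, neg_neg, dotProduct_comm, mulVec_transpose, dotProduct_mulVec]
  exact dotProduct_comm _ _

lemma titsFormZ_coxeterMatrix_pow_mulVec (n : ℕ) (x : Fin Q.r → ℤ) :
    Q.titsFormZ (F.coxeterMatrix ^ n *ᵥ x) = Q.titsFormZ x := by
  induction n with
  | zero => simp
  | succ n ih => rw [pow_succ', ← mulVec_mulVec, titsFormZ_coxeterMatrix_mulVec, ih]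

/-- The dimension vector of the indecomposable projective at the vertex `i`. -/
def projective (i : Fin Q.r) : Fin Q.r → ℤ := F.coeff 0 *ᵥ Pi.single i 1

lemma eulerMatrix_mulVec_projective (i : Fin Q.r) :
    eulerMatrix Q *ᵥ F.projective i = Pi.single i 1 := by
  rw [projective, mulVec_mulVec, F.eulerMatrix_mul_zero, one_mulVec]

lemma eq_projective {x : Fin Q.r → ℤ} {i : Fin Q.r} (h : eulerMatrix Q *ᵥ x = Pi.single i 1) :
    x = F.projective i := by
  rw [projective, ← h, mulVec_mulVec, F.zero_mul_eulerMatrix, one_mulVec]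

lemma coeff_zero_apply (i j : Fin Q.r) : F.coeff 0 i j =
    (if i = j then 1 else 0) + ∑ e, if Q.src e = i then F.coeff 0 (Q.tgt e) j else 0 := by
  have h := congrFun (F.eulerMatrix_mulVec_projective j) i
  rw [eulerMatrix_mulVec, Pi.single_apply] at h
  simp only [projective, mulVec_single_one, col_apply] at h
  linarith

lemma reflTransGen_of_coeff_zero_ne_zero (hA : Q.Acyclic) {i j : Fin Q.r}
    (h : F.coeff 0 i j ≠ 0) : Relation.ReflTransGen (HasArrow Q) i j := by
  induction i using (wellFounded_swap_transGen_hasArrow hA).induction with | _ i ih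
  rw [coeff_zero_apply] at h
  by_cases hij : i = j
  · rw [hij]
  rw [if_neg hij, zero_add] at h
  obtain ⟨e, -, he⟩ := Finset.exists_ne_zero_of_sum_ne_zero h
  obtain ⟨hsrc, htgt⟩ := ite_ne_right_iff.1 he
  exact .head ⟨e, hsrc, rfl⟩ (ih _ (.single ⟨e, hsrc, rfl⟩) htgt)

lemma titsFormZ_projective (hA : Q.Acyclic) (i : Fin Q.r) :
    Q.titsFormZ (F.projective i) = 1 := by
  rw [titsFormZ_eq_dotProduct, eulerMatrix_mulVec_projective, dotProduct_single, mul_one,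
    projective, mulVec_single_one, col_apply, coeff_zero_apply, if_pos rfl, Finset.sum_eq_zero,
    add_zero]
  refine fun e _ => ite_eq_right_iff.2 fun hsrc => ?_
  by_contra h
  exact hA i (.head' ⟨e, hsrc, rfl⟩ (F.reflTransGen_of_coeff_zero_ne_zero hA h))

lemma exists_coxeterMatrix_pow_mulVec_nonpos (hm : 2 ≤ m) (hD : Q.IsDynkin) {x : Fin Q.r → ℤ}
    (hx : Q.titsFormZ x = 1) : ∃ l, F.coxeterMatrix ^ l *ᵥ x ≤ 0 := by
  by_contra! h
  have hnonneg (l) : 0 ≤ F.coxeterMatrix ^ l *ᵥ x :=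
    (nonneg_or_nonpos_of_titsFormZ_eq_one hD
      ((F.titsFormZ_coxeterMatrix_pow_mulVec l x).trans hx)).resolve_right (h l)
  have hsum : ∑ l ∈ Finset.range m, F.coxeterMatrix ^ l *ᵥ x = 0 := by
    rw [← sum_mulVec, F.sum_coxeterMatrix_pow hm, zero_mulVec]
  exact h 0 ((Finset.sum_eq_zero_iff_of_nonneg fun l _ => hnonneg l).1 hsum 0
    (Finset.mem_range.2 (by omega))).le

lemma exists_coxeterMatrix_pow_mulVec_nonpos_nonneg (hm : 2 ≤ m) (hD : Q.IsDynkin)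
    {x : Fin Q.r → ℤ} (hx : Q.titsFormZ x = 1) :
    ∃ l, F.coxeterMatrix ^ l *ᵥ x ≤ 0 ∧ 0 ≤ F.coxeterMatrix ^ (l + 1) *ᵥ x := by
  obtain ⟨l, hl⟩ := F.exists_coxeterMatrix_pow_mulVec_nonpos hm hD hx
  have hroot (n) : Q.titsFormZ (F.coxeterMatrix ^ n *ᵥ x) = 1 :=
    (F.titsFormZ_coxeterMatrix_pow_mulVec n x).trans hx
  by_contra! h
  have hnonpos (t : ℕ) : F.coxeterMatrix ^ (l + t) *ᵥ x ≤ 0 := by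
    induction t with
    | zero => exact hl
    | succ t ih =>
      exact (nonneg_or_nonpos_of_titsFormZ_eq_one hD (hroot _)).resolve_left (h _ ih)
  obtain ⟨t, ht⟩ := F.exists_coxeterMatrix_pow_mulVec_nonpos hm hD
    ((titsFormZ_neg _).trans (hroot (l + 1)))
  rw [mulVec_neg, mulVec_mulVec, ← pow_add, Left.neg_nonpos_iff] at ht
  refine h (t + l) ?_ (by rwa [add_assoc])
  rw [add_comm]
  exact hnonpos t

lemma exists_eq_coxeterMatrix_pow_mulVec_projective (hm : 2 ≤ m) (hD : Q.IsDynkin)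
    (hA : Q.Acyclic) {x : Fin Q.r → ℤ} (hx : Q.titsFormZ x = 1) :
    ∃ i, ∃ l < m, x = F.coxeterMatrix ^ l *ᵥ F.projective i := by
  obtain ⟨l, hnonpos, hnonneg⟩ := F.exists_coxeterMatrix_pow_mulVec_nonpos_nonneg hm hD hx
  obtain ⟨i, hi⟩ := exists_eulerMatrix_mulVec_eq_single hD hA hnonneg
    (w := - (F.coxeterMatrix ^ l *ᵥ x)) (by simpa using hnonpos)
    ((F.titsFormZ_coxeterMatrix_pow_mulVec _ x).trans hx) (by
      rw [pow_succ', ← mulVec_mulVec, eulerMatrix_mulVec_coxeterMatrix_mulVec, mulVec_neg])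
  refine ⟨i, (m * (l + 1) - (l + 1)) % m, Nat.mod_lt _ (by omega), ?_⟩
  rw [← pow_eq_pow_mod _ (F.coxeterMatrix_pow_eq_one hm), ← F.eq_projective hi, mulVec_mulVec,
    ← pow_add, Nat.sub_add_cancel (Nat.le_mul_of_pos_left _ (by omega)), pow_mul,
    F.coxeterMatrix_pow_eq_one hm, one_pow, one_mulVec]

lemma add_transpose_eulerMatrix_mulVec {n : ℕ} (hn : n + 1 < m) {i j : Fin Q.r}
    (h : F.projective j = F.coxeterMatrix ^ (n + 1) *ᵥ F.projective i) :
    (eulerMatrix Q + (eulerMatrix Q)ᵀ) *ᵥ (F.coeff n *ᵥ Pi.single i 1) =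
      Pi.single i 1 - Pi.single j 1 := by
  have hrec := F.eulerMatrix_mul_succ n
  have hsucc : F.coeff (n + 1) = F.coeff n + F.coxeterMatrix ^ (n + 1) * F.coeff 0 := by
    rw [F.coeff_eq_sum hn, F.coeff_eq_sum (by omega : n < m), Finset.sum_range_succ,
      Matrix.add_mul]
  rw [if_pos hn, hsucc] at hrec
  have hvec := congrArg (· *ᵥ (Pi.single i 1 : Fin Q.r → ℤ)) hrec
  simp only [mul_add, add_mulVec, one_mulVec, ← mulVec_mulVec] at hvec
  rw [← projective, ← h, eulerMatrix_mulVec_projective] at hvec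
  rw [add_mulVec]
  exact eq_sub_of_add_eq ((add_right_comm _ _ _).trans hvec)

lemma coeff_mulVec_nonneg (n : ℕ) (i : Fin Q.r) : 0 ≤ F.coeff n *ᵥ Pi.single i 1 :=
  fun a => by simp [F.nonneg]

lemma coeff_mulVec_ne_zero {n : ℕ} (hn : n + 1 < m) (i : Fin Q.r) :
    F.coeff n *ᵥ Pi.single i 1 ≠ 0 := by
  intro h
  have hzero := F.generated n i (fun a => by simpa using congrFun h a) (m - 2) (by omega)
  have hrec := F.eulerMatrix_mul_succ (m - 2)
  rw [F.coeff_eq_zero (by omega), Matrix.mul_zero, zero_add, if_pos (by omega)] at hrec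
  have hii := congrFun (congrFun hrec i) i
  rw [Matrix.mul_apply, Finset.sum_eq_zero fun a _ => by rw [hzero a, mul_zero],
    one_apply_eq] at hii
  exact zero_ne_one hii

lemma projective_ne_coxeterMatrix_pow_mulVec_projective (hm : 2 ≤ m) (hD : Q.IsDynkin) {n : ℕ}
    (hn : n + 1 < m) (i j : Fin Q.r) :
    F.projective j ≠ F.coxeterMatrix ^ (n + 1) *ᵥ F.projective i := by
  intro h
  have h' : F.projective i = F.coxeterMatrix ^ ((m - n - 2) + 1) *ᵥ F.projective j := by
    rw [h, mulVec_mulVec, ← pow_add, show m - n - 2 + 1 + (n + 1) = m by omega,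
      F.coxeterMatrix_pow_eq_one hm, one_mulVec]
  have hsum : F.coeff n *ᵥ Pi.single i 1 + F.coeff (m - n - 2) *ᵥ Pi.single j 1 = 0 := by
    refine eq_zero_of_add_transpose_eulerMatrix_mulVec_eq_zero hD ?_
    rw [mulVec_add, F.add_transpose_eulerMatrix_mulVec hn h,
      F.add_transpose_eulerMatrix_mulVec (by omega) h', sub_add_sub_cancel, sub_self]
  exact F.coeff_mulVec_ne_zero hn i ((add_eq_zero_iff_of_nonneg (F.coeff_mulVec_nonneg _ _)
    (F.coeff_mulVec_nonneg _ _)).1 hsum).1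

lemma eq_and_eq_of_coxeterMatrix_pow_mulVec_projective_eq (hm : 2 ≤ m) (hD : Q.IsDynkin)
    {i j : Fin Q.r} {l l' : ℕ} (hl' : l' < m) (hle : l ≤ l')
    (h : F.coxeterMatrix ^ l *ᵥ F.projective j = F.coxeterMatrix ^ l' *ᵥ F.projective i) :
    i = j ∧ l = l' := by
  obtain ⟨n, rfl⟩ := Nat.exists_eq_add_of_le hle
  rw [pow_add, ← mulVec_mulVec] at h
  have h := mulVec_injective_of_isUnit (F.isUnit_coxeterMatrix_pow l) h
  rcases n with - | n
  · rw [pow_zero, one_mulVec] at h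
    have := congrArg (eulerMatrix Q *ᵥ ·) h
    simp only [eulerMatrix_mulVec_projective] at this
    exact ⟨by simpa [Pi.single_apply] using congrFun this i, rfl⟩
  · exact absurd h
      (F.projective_ne_coxeterMatrix_pow_mulVec_projective hm hD (by omega) i j)

lemma coxeterMatrix_pow_mulVec_projective_injective (hm : 2 ≤ m) (hD : Q.IsDynkin) :
    Function.Injective fun p : Fin Q.r × Fin m =>
      F.coxeterMatrix ^ (p.2 : ℕ) *ᵥ F.projective p.1 := by
  rintro ⟨i, l⟩ ⟨j, l'⟩ h
  rcases le_total (l : ℕ) l' with hle | hle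
  · obtain ⟨hij, hl⟩ :=
      F.eq_and_eq_of_coxeterMatrix_pow_mulVec_projective_eq hm hD l'.2 hle h
    exact Prod.ext hij.symm (Fin.ext hl)
  · obtain ⟨hij, hl⟩ :=
      F.eq_and_eq_of_coxeterMatrix_pow_mulVec_projective_eq hm hD l.2 hle h.symm
    exact Prod.ext hij (Fin.ext hl.symm)

include F in
lemma ncard_roots (hm : 2 ≤ m) (hD : Q.IsDynkin) (hA : Q.Acyclic) :
    {x : Fin Q.r → ℤ | Q.titsFormZ x = 1}.ncard = Q.r * m := by
  have hrange : {x : Fin Q.r → ℤ | Q.titsFormZ x = 1} =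
      Set.range fun p : Fin Q.r × Fin m => F.coxeterMatrix ^ (p.2 : ℕ) *ᵥ F.projective p.1 := by
    ext x
    constructor
    · intro hx
      obtain ⟨i, l, hl, rfl⟩ := F.exists_eq_coxeterMatrix_pow_mulVec_projective hm hD hA hx
      exact ⟨(i, ⟨l, hl⟩), rfl⟩
    · rintro ⟨p, rfl⟩
      exact (F.titsFormZ_coxeterMatrix_pow_mulVec _ _).trans (F.titsFormZ_projective hA _)
  rw [hrange, ← Nat.card_coe_set_eq,
    Nat.card_range_of_injective (F.coxeterMatrix_pow_mulVec_projective_injective hm hD)]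
  simp

end HilbertFunction

/-! ## The Hilbert function of the orientation grading -/

section Generation

variable [FiniteDimensional k (QHAlg k Q v)]

lemma Grading.eq_zero_of_hilb_eq_zero (W : Grading Q) {n : ℤ} {j : Fin Q.r}
    (h : ∀ i, W.hilb v n i j = 0) {x : QHAlg k Q v} (hx : W.component v n x = x)
    (hxj : x * (taut v).E j = x) : x = 0 := by
  have hE (i) : (taut v).E i * x = 0 := by
    have hmem : (taut v).E i * x ∈ W.corner v n i j :=
      ⟨by rw [component_E_mul, hx], by rw [← mul_assoc, (taut v).E_mul_self],
        by rw [mul_assoc, hxj]⟩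
    rwa [Submodule.finrank_eq_zero.1 (h i), Submodule.mem_bot] at hmem
  rw [← one_mul x, ← (taut v).E_sum, Finset.sum_mul, Finset.sum_eq_zero fun i _ => hE i]

lemma Grading.orientation_genWeight_le (g : QHGen Q) : (orientation Q).genWeight g ≤ 1 := by
  cases g <;> simp [genWeight, orientation]

-- No generator has degree above `1`, so a long word has a tail of degree exactly `n`.
lemma word_mul_E_eq_zero {n : ℕ} {j : Fin Q.r}
    (h : ∀ i, (Grading.orientation Q).hilb v n i j = 0) {l : List (QHGen Q)}
    (hl : (n : ℤ) ≤ (l.map (Grading.orientation Q).genWeight).sum) :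
    word k v l * (taut v).E j = 0 := by
  have hexact (l : List (QHGen Q)) (hl : (l.map (Grading.orientation Q).genWeight).sum = n) :
      word k v l * (taut v).E j = 0 := by
    refine (Grading.orientation Q).eq_zero_of_hilb_eq_zero h ?_ ?_
    · rw [Grading.component_mul_E, Grading.component_word, if_pos hl]
    · rw [mul_assoc, (taut v).E_mul_self]
  induction l with
  | nil => exact hexact _ (by simp at hl ⊢; omega)
  | cons g l ih =>
    rcases le_or_gt (n : ℤ) (l.map (Grading.orientation Q).genWeight).sum with hle | hlt
    · rw [word_cons, mul_assoc, ih hle, mul_zero]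
    · refine hexact _ ?_
      have := Grading.orientation_genWeight_le g
      rw [List.map_cons, List.sum_cons] at hl ⊢
      omega

lemma orientation_hilb_eq_zero {n : ℕ} {j : Fin Q.r}
    (h : ∀ i, (Grading.orientation Q).hilb v n i j = 0) {n' : ℕ} (hn : n ≤ n') (i : Fin Q.r) :
    (Grading.orientation Q).hilb v n' i j = 0 := by
  have hzero (x : QHAlg k Q v) :
      (Grading.orientation Q).component v n' x * (taut v).E j = 0 := by
    induction x using word_induction with
    | word l =>
      rw [Grading.component_word]
      split_ifs with hl
      · exact word_mul_E_eq_zero h (by rw [hl]; exact_mod_cast hn)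
      · rw [zero_mul]
    | add x y hx hy => rw [map_add, add_mul, hx, hy, add_zero]
    | smul c x hx => rw [map_smul, smul_mul_assoc, hx, smul_zero]
  have hbot : (Grading.orientation Q).corner v n' i j = ⊥ :=
    (Submodule.eq_bot_iff _).2 fun x hx => by rw [← hx.2.2, ← hx.1, hzero]
  rw [Grading.hilb, hbot, finrank_bot]

end Generation

lemma orientation_cartan :
    (Grading.orientation Q).cartan =
      (eulerMatrix Q).map C + (X : ℤ[X]) • (eulerMatrix Q)ᵀ.map C := by
  ext1 i j
  simp only [Grading.cartan, Grading.orientation, Matrix.of_apply, Matrix.add_apply,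
    Matrix.smul_apply, Matrix.map_apply, Matrix.transpose_apply, eulerMatrix, smul_eq_mul,
    Fintype.sum_sum_type, Sum.elim_inl, Sum.elim_inr, DoubleArrow.src, DoubleArrow.tgt,
    Int.toNat_zero, Int.toNat_one, pow_zero, pow_one, C_sub, map_sum, apply_ite C, C_0, C_1,
    eq_comm (a := j), and_comm (a := Q.tgt _ = i)]
  rw [show (if i = j then 1 + X else 0 : ℤ[X]) =
      (if i = j then 1 else 0) + X * (if i = j then 1 else 0) by split_ifs <;> simp,
    mul_sub, Finset.mul_sum]
  simp only [mul_ite, mul_one, mul_zero]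
  ring

lemma eq_geom_sum_smul_of_one_sub_X_smul_eq {R ι : Type*} [CommRing R] [IsDomain R] [DecidableEq ι]
    {A : Matrix ι ι R[X]} {m : ℕ} (h : (1 - X : R[X]) • A = (1 - X ^ m : R[X]) • 1) :
    A = (∑ l ∈ Finset.range m, X ^ l : R[X]) • 1 := by
  have hne : (1 - X : R[X]) ≠ 0 := fun h0 => by simpa using congrArg (eval 0) h0
  ext1 i j
  have hij := congrFun (congrFun h i) j
  rw [← mul_neg_geom_sum X m, mul_smul] at hij
  exact mul_left_cancel₀ hne hij

section FiniteDimensional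

variable [FiniteDimensional k (QHAlg k Q v)]

variable (v) in
/-- The matrix of dimensions of the corners of `ᵛΛ(Q)` in degree `n` of the orientation grading. -/
noncomputable def orientationHilb (n : ℕ) : Matrix (Fin Q.r) (Fin Q.r) ℤ :=
  .of fun i j => ((Grading.orientation Q).hilb v n i j : ℤ)

section Recursion

variable {m : ℕ}
  (h : (1 - X : ℤ[X]) • ((Grading.orientation Q).cartan * (Grading.orientation Q).hilbPoly v) =
    (1 - X ^ m : ℤ[X]) • 1)

include h

lemma coeff_orientation_cartan_mul_hilbPoly (n : ℕ) (i j : Fin Q.r) :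
    (((Grading.orientation Q).cartan * (Grading.orientation Q).hilbPoly v) i j).coeff n =
      (if n < m then 1 else 0 : Matrix (Fin Q.r) (Fin Q.r) ℤ) i j := by
  rw [eq_geom_sum_smul_of_one_sub_X_smul_eq h, Matrix.smul_apply, smul_eq_mul, Matrix.one_apply]
  by_cases hij : i = j
  · subst hij
    by_cases hn : n < m <;> simp [finsetSum_coeff, coeff_X_pow, hn]
  · by_cases hn : n < m <;> simp [hn, hij]

lemma eulerMatrix_mul_orientationHilb_zero (hm : 0 < m) :
    eulerMatrix Q * orientationHilb v 0 = 1 := by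
  ext1 i j
  have hcoeff := coeff_orientation_cartan_mul_hilbPoly h 0 i j
  rw [if_pos hm] at hcoeff
  rw [← hcoeff, Matrix.mul_apply, Matrix.mul_apply, finsetSum_coeff]
  refine Finset.sum_congr rfl fun l _ => ?_
  rw [orientation_cartan, Matrix.add_apply, Matrix.smul_apply, Matrix.map_apply, smul_eq_mul,
    add_mul, mul_assoc, coeff_add, coeff_C_mul, coeff_X_mul_zero, add_zero, Grading.coeff_hilbPoly]
  rfl

lemma eulerMatrix_mul_orientationHilb_succ (n : ℕ) :
    eulerMatrix Q * orientationHilb v (n + 1) + (eulerMatrix Q)ᵀ * orientationHilb v n =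
      if n + 1 < m then 1 else 0 := by
  ext1 i j
  rw [← coeff_orientation_cartan_mul_hilbPoly h, Matrix.add_apply, Matrix.mul_apply,
    Matrix.mul_apply, Matrix.mul_apply, finsetSum_coeff, ← Finset.sum_add_distrib]
  refine Finset.sum_congr rfl fun l _ => ?_
  rw [orientation_cartan, Matrix.add_apply, Matrix.smul_apply, Matrix.map_apply, Matrix.map_apply,
    smul_eq_mul, add_mul, mul_assoc, coeff_add, coeff_C_mul, coeff_X_mul, coeff_C_mul,
    Grading.coeff_hilbPoly, Grading.coeff_hilbPoly]
  rfl

/-- `orientationHilb v` as a `HilbertFunction`. -/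
noncomputable def orientationHilbertFunction (hm : 0 < m) : HilbertFunction Q m where
  coeff := orientationHilb v
  eulerMatrix_mul_zero := eulerMatrix_mul_orientationHilb_zero h hm
  eulerMatrix_mul_succ := eulerMatrix_mul_orientationHilb_succ h
  eventually_zero := ⟨(Grading.orientation Q).degreeBound v, fun n hn => Matrix.ext fun i j => by
    rw [orientationHilb, Matrix.of_apply, Grading.hilb_of_degreeBound_le _ hn]; rfl⟩
  nonneg n i j := by rw [orientationHilb, Matrix.of_apply]; positivity
  generated n j hzero n' hn i := by
    simp only [orientationHilb, Matrix.of_apply, Nat.cast_eq_zero] at hzero ⊢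
    exact orientation_hilb_eq_zero hzero hn i

end Recursion

end FiniteDimensional

/-! ## Comparison with the standard Hilbert series -/

lemma sum_standard_genWeight (l : List (QHGen Q)) :
    (l.map (Grading.standard Q).genWeight).sum = ((l.map (qhWt Q)).sum : ℕ) := by
  rw [Nat.cast_list_sum, List.map_map]
  congr 2
  ext (_ | _ | _) <;> rfl

lemma mem_qhPiece {n : ℕ} {x : QHAlg k Q v} :
    x ∈ qhPiece k Q v n ↔ (Grading.standard Q).component v n x = x := by
  constructor
  · intro hx
    induction hx using Submodule.span_induction with
    | mem x h =>
      obtain ⟨l, hl, rfl⟩ := h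
      change (Grading.standard Q).component v n (word k v l) = word k v l
      rw [Grading.component_word, if_pos (by rw [sum_standard_genWeight, hl])]
    | zero => exact map_zero _
    | add x y _ _ hx hy => rw [map_add, hx, hy]
    | smul c x _ hx => rw [map_smul, hx]
  · intro hx
    rw [← hx]
    clear hx
    induction x using word_induction with
    | word l =>
      rw [Grading.component_word]
      split_ifs with h
      · exact Submodule.subset_span ⟨l, by rw [sum_standard_genWeight] at h; exact_mod_cast h, rfl⟩
      · exact zero_mem _
    | add x y hx hy => rw [map_add]; exact add_mem hx hy
    | smul c x hx => rw [map_smul]; exact Submodule.smul_mem _ _ hx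

lemma qhCorner_eq_corner (n : ℕ) (i j : Fin Q.r) :
    qhCorner k Q v n i j = (Grading.standard Q).corner v n i j := by
  ext y
  constructor
  · rintro ⟨x, hx, rfl⟩
    rw [SetLike.mem_coe, mem_qhPiece] at hx
    change (taut v).E i * (x * (taut v).E j) ∈ _
    refine ⟨?_, ?_, ?_⟩
    · rw [Grading.component_E_mul, Grading.component_mul_E, hx]
    · rw [← mul_assoc, (taut v).E_mul_self]
    · rw [mul_assoc, mul_assoc, (taut v).E_mul_self]
  · intro hy
    refine ⟨y, mem_qhPiece.2 hy.1, ?_⟩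
    change (taut v).E i * (y * (taut v).E j) = y
    rw [hy.2.2, hy.2.1]

/-- Integral polynomials as power series over `k`; this is where the characteristic of `k` enters
the Hilbert series. -/
noncomputable def polyToSeries (k : Type) [Field k] : Polynomial ℤ →+* PowerSeries k :=
  Polynomial.coeToPowerSeries.ringHom.comp (Polynomial.mapRingHom (Int.castRingHom k))

lemma polyToSeries_X : polyToSeries k Polynomial.X = PowerSeries.X := by simp [polyToSeries]

lemma map_polyToSeries_standard_cartan : (Grading.standard Q).cartan.map (polyToSeries k) =
    1 - (PowerSeries.X : PowerSeries k) • (Q.doubleAdj.map (Nat.cast : ℕ → PowerSeries k))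
      + (PowerSeries.X ^ 2 : PowerSeries k) •
        (1 : Matrix (Fin Q.r) (Fin Q.r) (PowerSeries k)) := by
  classical
  ext1 i j
  have hadj : ((Q.doubleAdj i j : ℕ) : PowerSeries k) =
      ∑ b : DoubleArrow Q, if b.src = i ∧ b.tgt = j then 1 else 0 := by
    refine Eq.trans ?_ (Fintype.sum_sum_type _).symm
    change _ = (∑ e, if Q.src e = i ∧ Q.tgt e = j then 1 else 0) +
      ∑ e, if Q.tgt e = i ∧ Q.src e = j then 1 else 0
    simp [FinQuiver.doubleAdj, FinQuiver.adjMatrix, Fintype.card_subtype, and_comm]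
  simp only [Matrix.map_apply, Grading.cartan, Grading.standard, Matrix.of_apply, Int.toNat_one,
    show (2 : ℤ).toNat = 2 from rfl, pow_one, Matrix.add_apply, Matrix.sub_apply,
    Matrix.smul_apply, smul_eq_mul, hadj, map_sub, map_add, map_sum, Matrix.one_apply,
    apply_ite (polyToSeries k), map_zero, map_one, map_pow, polyToSeries_X, Finset.mul_sum,
    mul_ite, mul_one, mul_zero]
  split_ifs <;> ring

section FiniteDimensional

variable [FiniteDimensional k (QHAlg k Q v)]

lemma qhHilb_eq_map_hilbPoly :
    qhHilb k Q v = ((Grading.standard Q).hilbPoly v).map (polyToSeries k) := by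
  ext i j n
  rw [Matrix.map_apply, polyToSeries, RingHom.comp_apply, Polynomial.coe_mapRingHom,
    Polynomial.coeToPowerSeries.ringHom_apply, Polynomial.coeff_coe, Polynomial.coeff_map,
    Grading.coeff_hilbPoly, qhHilb, Matrix.of_apply, PowerSeries.coeff_mk, qhCorner_eq_corner,
    Grading.hilb]
  simp

lemma standard_hilbPoly_mul_cartan {p q : Polynomial ℤ}
    (h : p • ((Grading.standard Q).cartan * (Grading.standard Q).hilbPoly v) = q • 1) :
    p • ((Grading.standard Q).hilbPoly v * (Grading.standard Q).cartan) = q • 1 := by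
  have htranspose := congrArg Matrix.transpose h
  rwa [Matrix.transpose_smul, Matrix.transpose_mul, standard_cartan_transpose,
    standard_hilbPoly_transpose, Matrix.transpose_smul, Matrix.transpose_one] at htranspose

end FiniteDimensional

end QuiverHeisenberg

open QuiverHeisenberg

/-- **Hilbert series of the quiver Heisenberg algebra, Dynkin case**
(Etingof–Rains in characteristic zero; here in arbitrary characteristic).
For a connected finite acyclic Dynkin quiver `Q` with Coxeter number `h` and a
regular parameter `v`, the graded pieces of `ᵛΛ(Q)` are finite dimensional and
`h_{ᵛΛ}(t)·(1 - C t + t²·1)·(1 - t²) = (1 - t^{2h})·1` in the ring of `r × r`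
matrices over `k[[t]]`; equivalently
`h_{ᵛΛ}(t) = (1 - t^{2h})/((1 - C t + t²)(1 - t²))`. -/
theorem quiver_heisenberg_hilbert_series_dynkin
    (k : Type) [Field k] (Q : FinQuiver) (hr : 0 < Q.r)
    (hconn : Q.Connected) (hacyc : Q.Acyclic) (hdynkin : Q.IsDynkin)
    (h : ℕ) (hcox : Q.IsCoxeterNumber h)
    (v : Fin Q.r → k) (hreg : IsRegularParam k Q v) :
    (∀ (n : ℕ) (i j : Fin Q.r), FiniteDimensional k (qhCorner k Q v n i j)) ∧
    qhHilb k Q v *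
      (1 - (PowerSeries.X : PowerSeries k) • (Q.doubleAdj.map (Nat.cast : ℕ → PowerSeries k))
        + (PowerSeries.X ^ 2 : PowerSeries k) •
            (1 : Matrix (Fin Q.r) (Fin Q.r) (PowerSeries k))) *
      ((1 - PowerSeries.X ^ 2 : PowerSeries k) •
            (1 : Matrix (Fin Q.r) (Fin Q.r) (PowerSeries k))) =
      (1 - PowerSeries.X ^ (2 * h) : PowerSeries k) •
        (1 : Matrix (Fin Q.r) (Fin Q.r) (PowerSeries k)) := by
  have : FiniteDimensional k (QHAlg k Q v) := finiteDimensional_qhAlg hdynkin hreg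
  refine ⟨fun n i j => inferInstance, ?_⟩
  obtain ⟨m, hm, hstd, hori⟩ := exists_cartan_mul_hilbPoly v hconn
  obtain rfl : m = h := by
    have hcard := (orientationHilbertFunction hori (by omega)).ncard_roots hm hdynkin hacyc
    exact Nat.eq_of_mul_eq_mul_left hr (hcard.symm.trans hcox)
  have hseries := congrArg (fun A => A.map (polyToSeries k)) (standard_hilbPoly_mul_cartan hstd)
  simpa only [Matrix.map_smul' (polyToSeries k) _ _ (map_mul _), Matrix.map_mul,
    map_polyToSeries_standard_cartan, ← qhHilb_eq_map_hilbPoly, Matrix.map_one _ (map_zero _)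
    (map_one _), map_sub, map_one, map_pow, polyToSeries_X, Matrix.mul_smul, Matrix.mul_one]
    using hseries
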